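/- arXiv:0811.0946 — 2 statements merged into one kernel-verified Lean document; each statement's English description precedes it below -/
import Mathlib

section
/- Let ω > 0 and q > p > 1 be real numbers, let n ≥ 1 be a natural number, and let f(u) = -ω·u + u^p - u^q. Then there exists a positive solution of the boundary value problem u''(r) + ((n-1)/r)·u'(r) + f(u(r)) = 0 for r > 0, u'(0) = 0, lim_{r→∞} u(r) = 0, if and only if there exists u > 0 with F(u) > 0, where F(u) = ∫₀ᵘ f(s) ds. -/
open Filter

/-- The double power nonlinearity `f(u) = -ω·u + u^p - u^q` (real powers). -/
noncomputable def f (ω p q u : ℝ) : ℝ := -ω * u + u ^ p - u ^ q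

/-- `u` is a positive solution of the radial boundary value problem
`u'' + ((n-1)/r) u' + f(u) = 0` on `(0,∞)`, `u'(0) = 0`, `u(r) → 0` as `r → ∞`:
a twice continuously differentiable positive function on `[0,∞)` satisfying the
equation, the Neumann condition at `0` and decay at infinity. -/
def IsPositiveSolution (n : ℕ) (f : ℝ → ℝ) (u : ℝ → ℝ) : Prop :=
  ContDiffOn ℝ 2 u (Set.Ici 0) ∧
  (∀ r : ℝ, 0 ≤ r → 0 < u r) ∧
  (∀ r : ℝ, 0 < r →
    iteratedDerivWithin 2 u (Set.Ici 0) r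
      + ((n : ℝ) - 1) / r * derivWithin u (Set.Ici 0) r + f (u r) = 0) ∧
  derivWithin u (Set.Ici 0) 0 = 0 ∧
  Tendsto u atTop (nhds 0)


/-- weighted average over the ball -/
noncomputable def avgB (m : ℕ) (g : ℝ → ℝ) (s : ℝ) : ℝ := ∫ θ in (0:ℝ)..1, θ ^ m * g (θ * s)

lemma avgB_continuous (m : ℕ) {g : ℝ → ℝ} (hg : Continuous g) : Continuous (avgB m g) := by
  unfold avgB
  apply intervalIntegral.continuous_parametric_intervalIntegral_of_continuous'
  fun_prop

lemma avgB_zero (m : ℕ) (g : ℝ → ℝ) : avgB m g 0 = g 0 / (m + 1) := by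
  unfold avgB
  simp [intervalIntegral.integral_mul_const]
  field_simp

lemma avgB_sub (m : ℕ) {g g' : ℝ → ℝ} (hg : Continuous g) (hg' : Continuous g') (s : ℝ) :
    avgB m g s - avgB m g' s = avgB m (fun t => g t - g' t) s := by
  unfold avgB
  rw [← intervalIntegral.integral_sub]
  · congr 1; ext θ; ring
  · apply Continuous.intervalIntegrable; fun_prop
  · apply Continuous.intervalIntegrable; fun_prop

lemma avgB_abs_le (m : ℕ) {g : ℝ → ℝ} {D lam : ℝ} (hD : 0 ≤ D) (hl : 0 ≤ lam)
    (h : ∀ t, |g t| ≤ D * Real.exp (lam * t ^ 2)) (s : ℝ) :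
    |avgB m g s| ≤ D * Real.exp (lam * s ^ 2) := by
  unfold avgB
  have := intervalIntegral.norm_integral_le_of_norm_le_const (a := (0:ℝ)) (b := 1)
    (f := fun θ => θ ^ m * g (θ * s)) (C := D * Real.exp (lam * s ^ 2)) (by
      intro θ hθ
      rw [Set.uIoc_of_le zero_le_one] at hθ
      rw [Real.norm_eq_abs, abs_mul, abs_pow, abs_of_pos hθ.1]
      have h1 : θ ^ m ≤ 1 := pow_le_one₀ hθ.1.le hθ.2
      have h2 : |g (θ * s)| ≤ D * Real.exp (lam * s ^ 2) := by
        refine (h _).trans ?_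
        refine mul_le_mul_of_nonneg_left (Real.exp_le_exp.2 (mul_le_mul_of_nonneg_left ?_ hl)) hD
        rw [mul_pow]
        have : θ ^ 2 ≤ 1 := pow_le_one₀ hθ.1.le hθ.2
        nlinarith [sq_nonneg s]
      calc θ ^ m * |g (θ * s)| ≤ 1 * |g (θ * s)| := by gcongr
        _ ≤ _ := by linarith)
  simpa using this

lemma avgB_pow (m : ℕ) (g : ℝ → ℝ) {s : ℝ} (hs : s ≠ 0) :
    s * avgB m g s = (s ^ m)⁻¹ * ∫ t in (0:ℝ)..s, t ^ m * g t := by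
  unfold avgB
  have := intervalIntegral.integral_comp_mul_right (a := (0:ℝ)) (b := 1)
    (fun t => t ^ m * g t) hs
  simp only [zero_mul, one_mul, smul_eq_mul] at this
  have h2 : ∫ t in (0:ℝ)..s, t ^ m * g t = s * ∫ x in (0:ℝ)..1, (x * s) ^ m * g (x * s) := by
    rw [this]; field_simp
  rw [h2]
  have h3 : (fun x => (x * s) ^ m * g (x * s)) = fun x => s ^ m * (x ^ m * g (x * s)) := by
    ext x; ring
  rw [h3, intervalIntegral.integral_const_mul]
  field_simp

lemma avgB_hasDerivAt (m : ℕ) {g : ℝ → ℝ} (hg : Continuous g) (s : ℝ) :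
    HasDerivAt (fun s => s * avgB m g s) (g s - m * avgB m g s) s := by
  by_cases hs : s = 0
  · subst hs
    have hc := (avgB_continuous m hg).continuousAt (x := 0)
    have : HasDerivAt (fun s => s * avgB m g s) (avgB m g 0) 0 := by
      rw [hasDerivAt_iff_tendsto_slope]
      refine (hc.tendsto.mono_left nhdsWithin_le_nhds).congr' ?_
      filter_upwards [self_mem_nhdsWithin] with x hx
      have : x ≠ 0 := hx
      simp [slope_def_field]
      field_simp
    convert this using 1
    rw [avgB_zero]; field_simp; ring
  · have h1 : HasDerivAt (fun s => (s ^ m)⁻¹ * ∫ t in (0:ℝ)..s, t ^ m * g t)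
        (-(m * s ^ (m - 1)) / (s ^ m) ^ 2 * (∫ t in (0:ℝ)..s, t ^ m * g t)
          + (s ^ m)⁻¹ * (s ^ m * g s)) s := by
      apply HasDerivAt.mul
      · exact (hasDerivAt_pow m s).inv (pow_ne_zero _ hs)
      · have hcont : Continuous fun t => t ^ m * g t := by fun_prop
        exact intervalIntegral.integral_hasDerivAt_right (hcont.intervalIntegrable _ _)
          (hcont.stronglyMeasurableAtFilter _ _) hcont.continuousAt
    have h2 : HasDerivAt (fun s => s * avgB m g s) (-(m * s ^ (m - 1)) / (s ^ m) ^ 2 *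
        (∫ t in (0:ℝ)..s, t ^ m * g t) + (s ^ m)⁻¹ * (s ^ m * g s)) s := by
      refine h1.congr_of_eventuallyEq ?_
      filter_upwards [isOpen_ne.mem_nhds hs] with x hx
      exact avgB_pow m g hx
    convert h2 using 1
    have h3 := avgB_pow m g hs
    have hp := pow_ne_zero m hs
    have h4 : ∫ t in (0:ℝ)..s, t ^ m * g t = s ^ m * (s * avgB m g s) := by
      rw [h3]; field_simp
    rw [h4]
    rcases m with _ | k
    · simp
    · simp only [Nat.add_sub_cancel, pow_succ]
      have := pow_ne_zero k hs
      field_simp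
      ring

lemma int_weight_le {φ : ℝ → ℝ} {D lam : ℝ} (hl : 0 < lam)
    (h : ∀ t, |φ t| ≤ D * Real.exp (lam * t ^ 2)) (r : ℝ) :
    |∫ s in (0:ℝ)..r, s * φ s| ≤ D / (2 * lam) * Real.exp (lam * r ^ 2) := by
  have hD : 0 ≤ D := by simpa using (abs_nonneg _).trans (h 0)
  have h1 : ∫ s in (0:ℝ)..r, s * φ s = r * ∫ x in (0:ℝ)..1, (r * x) * φ (r * x) := by
    have := intervalIntegral.mul_integral_comp_mul_left (a := (0:ℝ)) (b := 1)
      (f := fun s => s * φ s) r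
    simpa using this.symm
  have h2 : |∫ x in (0:ℝ)..1, (r * x) * φ (r * x)| ≤
      ∫ x in (0:ℝ)..1, |r| * x * (D * Real.exp (lam * (r * x) ^ 2)) := by
    have := intervalIntegral.norm_integral_le_of_norm_le (μ := MeasureTheory.volume)
      (a := (0:ℝ)) (b := 1) (f := fun x => (r * x) * φ (r * x))
      (g := fun x => |r| * x * (D * Real.exp (lam * (r * x) ^ 2))) zero_le_one
      (Eventually.of_forall (by
        intro x hx
        rw [Real.norm_eq_abs, abs_mul, abs_mul, abs_of_pos hx.1]
        have := h (r * x)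
        have h0 : 0 ≤ |r| * x := mul_nonneg (abs_nonneg _) hx.1.le
        gcongr))
      (by apply Continuous.intervalIntegrable; fun_prop)
    simpa using this
  have h3 : |r| * ∫ x in (0:ℝ)..1, |r| * x * (D * Real.exp (lam * (r * x) ^ 2)) =
      D / (2 * lam) * Real.exp (lam * r ^ 2) - D / (2 * lam) := by
    rw [← intervalIntegral.integral_const_mul]
    have : ∀ x ∈ Set.uIcc (0:ℝ) 1, HasDerivAt
        (fun x => D / (2 * lam) * Real.exp (lam * (r * x) ^ 2))
        (|r| * (|r| * x * (D * Real.exp (lam * (r * x) ^ 2)))) x := by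
      intro x _
      have hd : HasDerivAt (fun x => lam * (r * x) ^ 2) (lam * (2 * (r * x) * r)) x := by
        have := (((hasDerivAt_id x).const_mul r).pow 2).const_mul lam
        refine this.congr_deriv ?_
        simp
      refine (hd.exp.const_mul (D / (2 * lam))).congr_deriv ?_
      have hr : |r| * |r| = r * r := abs_mul_abs_self r
      have : |r| * (|r| * x * (D * Real.exp (lam * (r * x) ^ 2))) =
        (|r| * |r|) * x * (D * Real.exp (lam * (r * x) ^ 2)) := by ring
      rw [this, hr]
      field_simp
    rw [intervalIntegral.integral_eq_sub_of_hasDerivAt this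
      (by apply Continuous.intervalIntegrable; fun_prop)]
    simp
  rw [h1, abs_mul]
  have h5 : 0 ≤ D / (2 * lam) := by positivity
  calc |r| * |∫ x in (0:ℝ)..1, (r * x) * φ (r * x)| ≤ |r| * _ :=
        mul_le_mul_of_nonneg_left h2 (abs_nonneg r)
    _ ≤ _ := by rw [h3]; linarith

lemma ivp_fix (m : ℕ) (h : ℝ → ℝ) (L M : ℝ) (hL : 0 ≤ L)
    (hlip : ∀ x y, |h x - h y| ≤ L * |x - y|) (hb : ∀ x, |h x| ≤ M) (hh : Continuous h) :
    ∃ (C lam : ℝ) (u : ℝ → ℝ → ℝ), 0 < lam ∧ 0 ≤ C ∧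
      (∀ a, Continuous (u a)) ∧
      (∀ a r, u a r = a - ∫ s in (0:ℝ)..r, s * avgB m (fun t => h (u a t)) s) ∧
      (∀ a a' r, |u a r - u a' r| ≤ C * |a - a'| * Real.exp (lam * r ^ 2)) ∧
      (∀ a, h a = 0 → ∀ r, u a r = a) := by
  obtain ⟨lam, hlam⟩ : ∃ lam : ℝ, lam = L + 1 := ⟨_, rfl⟩
  have hl : 0 < lam := by linarith
  have hM : 0 ≤ M := (abs_nonneg _).trans (hb 0)
  have hexp1 : ∀ t : ℝ, 1 ≤ Real.exp (lam * t ^ 2) := fun t => Real.one_le_exp (by positivity)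
  have hee : ∀ t : ℝ, Real.exp (-(lam * t ^ 2)) * Real.exp (lam * t ^ 2) = 1 := fun t => by
    rw [← Real.exp_add]; simp
  -- the operator
  let lift : (BoundedContinuousFunction ℝ ℝ) → ℝ → ℝ := fun w t => Real.exp (lam * t ^ 2) * w t
  have hlift : ∀ w, Continuous (lift w) := fun w => by
    have := w.continuous
    simp only [lift]; fun_prop
  let I : (BoundedContinuousFunction ℝ ℝ) → ℝ → ℝ := fun w r =>
    ∫ s in (0:ℝ)..r, s * avgB m (fun t => h (lift w t)) s
  have hc : ∀ w, Continuous (fun s => s * avgB m (fun t => h (lift w t)) s) := fun w =>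
    continuous_id.mul (avgB_continuous m (hh.comp (hlift w)))
  have hIc : ∀ w, Continuous (I w) := fun w =>
    intervalIntegral.continuous_primitive (fun a b => (hc w).intervalIntegrable a b) 0
  have hIb : ∀ w r, |I w r| ≤ M / (2 * lam) * Real.exp (lam * r ^ 2) := by
    intro w r
    apply int_weight_le hl
    intro t
    apply avgB_abs_le m hM hl.le
    intro t
    refine (hb _).trans ?_
    nlinarith [hexp1 t]
  have hbound : ∀ a w r, ‖Real.exp (-(lam * r ^ 2)) * (a - I w r)‖ ≤ |a| + M / (2 * lam) := by
    intro a w r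
    rw [Real.norm_eq_abs, abs_mul, abs_of_pos (Real.exp_pos _)]
    have h1 : |a - I w r| ≤ (|a| + M / (2 * lam)) * Real.exp (lam * r ^ 2) := by
      have := abs_sub a (I w r)
      have := hIb w r
      nlinarith [hexp1 r, abs_nonneg a]
    calc _ ≤ Real.exp (-(lam * r ^ 2)) * ((|a| + M / (2 * lam)) * Real.exp (lam * r ^ 2)) := by
          gcongr
      _ = (|a| + M / (2 * lam)) * (Real.exp (-(lam * r ^ 2)) * Real.exp (lam * r ^ 2)) := by ring
      _ = _ := by rw [hee, mul_one]
  let T : ℝ → (BoundedContinuousFunction ℝ ℝ) → (BoundedContinuousFunction ℝ ℝ) := fun a w =>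
    BoundedContinuousFunction.ofNormedAddCommGroup
      (fun r => Real.exp (-(lam * r ^ 2)) * (a - I w r))
      (by have := hIc w; fun_prop) (|a| + M / (2 * lam)) (hbound a w)
  have hT : ∀ a w r, T a w r = Real.exp (-(lam * r ^ 2)) * (a - I w r) := fun a w r => rfl
  have hId : ∀ w w' r, |I w r - I w' r| ≤ L * dist w w' / (2 * lam) * Real.exp (lam * r ^ 2) := by
    intro w w' r
    have e1 : I w r - I w' r = ∫ s in (0:ℝ)..r, s * (avgB m (fun t => h (lift w t)) s -
        avgB m (fun t => h (lift w' t)) s) := by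
      simp only [I]
      rw [← intervalIntegral.integral_sub ((hc w).intervalIntegrable _ _)
        ((hc w').intervalIntegrable _ _)]
      congr 1; ext s; ring
    rw [e1]
    apply int_weight_le hl
    intro t
    rw [avgB_sub m (g := fun t => h (lift w t)) (g' := fun t => h (lift w' t))
      (hh.comp (hlift w)) (hh.comp (hlift w'))]
    apply avgB_abs_le m (by positivity) hl.le
    intro t
    refine (hlip _ _).trans ?_
    have : |lift w t - lift w' t| ≤ dist w w' * Real.exp (lam * t ^ 2) := by
      simp only [lift]
      rw [← mul_sub, abs_mul, abs_of_pos (Real.exp_pos _), mul_comm]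
      refine mul_le_mul_of_nonneg_right ?_ (Real.exp_pos _).le
      have := BoundedContinuousFunction.dist_coe_le_dist (f := w) (g := w') t
      rwa [Real.dist_eq] at this
    calc L * |lift w t - lift w' t| ≤ L * (dist w w' * Real.exp (lam * t ^ 2)) := by gcongr
      _ = _ := by ring
  have hTd : ∀ a a' w w', dist (T a w) (T a' w') ≤ |a - a'| + 1 / 2 * dist w w' := by
    intro a a' w w'
    rw [BoundedContinuousFunction.dist_le (by positivity)]
    intro r
    rw [Real.dist_eq, hT, hT, ← mul_sub, abs_mul, abs_of_pos (Real.exp_pos _)]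
    have h1 : |(a - I w r) - (a' - I w' r)| ≤
        (|a - a'| + 1 / 2 * dist w w') * Real.exp (lam * r ^ 2) := by
      have e : (a - I w r) - (a' - I w' r) = (a - a') - (I w r - I w' r) := by ring
      rw [e]
      have h2 := abs_sub (a - a') (I w r - I w' r)
      have h3 := hId w w' r
      have h4 : L * dist w w' / (2 * lam) ≤ 1 / 2 * dist w w' := by
        rw [div_le_iff₀ (by positivity)]
        nlinarith [dist_nonneg (x := w) (y := w')]
      have h5 := mul_le_mul_of_nonneg_right h4 (Real.exp_pos (lam * r ^ 2)).le
      nlinarith [hexp1 r, abs_nonneg (a - a')]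
    calc _ ≤ Real.exp (-(lam * r ^ 2)) *
          ((|a - a'| + 1 / 2 * dist w w') * Real.exp (lam * r ^ 2)) := by gcongr
      _ = (|a - a'| + 1 / 2 * dist w w') *
          (Real.exp (-(lam * r ^ 2)) * Real.exp (lam * r ^ 2)) := by ring
      _ = _ := by rw [hee, mul_one]
  have hcw : ∀ a, ContractingWith (1 / 2) (T a) := by
    intro a
    refine ⟨by rw [← NNReal.coe_lt_coe]; norm_num, LipschitzWith.of_dist_le_mul fun w w' => ?_⟩
    have := hTd a a w w'
    simpa using this
  let W : ℝ → (BoundedContinuousFunction ℝ ℝ) := fun a => (hcw a).fixedPoint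
  have hW : ∀ a, T a (W a) = W a := fun a => (hcw a).fixedPoint_isFixedPt
  have hWd : ∀ a a', dist (W a) (W a') ≤ 2 * |a - a'| := by
    intro a a'
    have := hTd a a' (W a) (W a')
    rw [hW, hW] at this
    linarith
  refine ⟨2, lam, fun a => lift (W a), hl, by norm_num, fun a => hlift _, ?_, ?_, ?_⟩
  · intro a r
    have h1 : lift (W a) r = Real.exp (lam * r ^ 2) * T a (W a) r := by rw [hW]
    change lift (W a) r = _
    rw [h1, hT, ← mul_assoc, mul_comm (Real.exp _), hee, one_mul]
  · intro a a' r
    simp only [lift]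
    rw [← mul_sub, abs_mul, abs_of_pos (Real.exp_pos _), mul_comm]
    refine mul_le_mul_of_nonneg_right ?_ (Real.exp_pos _).le
    have := BoundedContinuousFunction.dist_coe_le_dist (f := W a) (g := W a') r
    rw [Real.dist_eq] at this
    exact this.trans (hWd a a')
  · intro a ha r
    let w0 : BoundedContinuousFunction ℝ ℝ := BoundedContinuousFunction.ofNormedAddCommGroup
      (fun r => Real.exp (-(lam * r ^ 2)) * a) (by fun_prop) |a| (by
        intro r
        rw [Real.norm_eq_abs, abs_mul, abs_of_pos (Real.exp_pos _)]
        have : Real.exp (-(lam * r ^ 2)) ≤ 1 := Real.exp_le_one_iff.2 (by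
          have : 0 ≤ lam * r ^ 2 := by positivity
          linarith)
        nlinarith [abs_nonneg a])
    have hw0 : ∀ t, lift w0 t = a := by
      intro t
      change Real.exp (lam * t ^ 2) * (Real.exp (-(lam * t ^ 2)) * a) = a
      rw [← mul_assoc, mul_comm (Real.exp _), hee, one_mul]
    have hfix : T a w0 = w0 := by
      ext r
      rw [hT]
      have : I w0 r = 0 := by
        simp [I, hw0, ha, avgB]
      rw [this, sub_zero]
      rfl
    have : w0 = W a := (hcw a).fixedPoint_unique hfix
    change lift (W a) r = a
    rw [← this, hw0]

/-- Global solutions of the regularised initial value problem. -/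
theorem ivp (m : ℕ) (h : ℝ → ℝ) (L M : ℝ) (hL : 0 ≤ L)
    (hlip : ∀ x y, |h x - h y| ≤ L * |x - y|) (hb : ∀ x, |h x| ≤ M) (hh : Continuous h) :
    ∃ (u v w : ℝ → ℝ → ℝ), (∀ a, u a 0 = a) ∧ (∀ a, v a 0 = 0) ∧
      (∀ a r, HasDerivAt (u a) (v a r) r) ∧ (∀ a r, HasDerivAt (v a) (w a r) r) ∧
      (∀ a, Continuous (w a)) ∧
      (∀ a r, 0 < r → w a r = -((m:ℝ) / r) * v a r - h (u a r)) ∧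
      (∀ r, Continuous fun a => u a r) ∧ (∀ r, Continuous fun a => v a r) ∧
      (∀ a, h a = 0 → ∀ r, u a r = a) := by
  obtain ⟨C, lam, u, hl, hC, hu, hintg, hd, hconst⟩ := ivp_fix m h L M hL hlip hb hh
  have hg : ∀ a, Continuous fun t => h (u a t) := fun a => hh.comp (hu a)
  have cont_of : ∀ (g : ℝ → ℝ) (K : ℝ), (∀ a a', |g a - g a'| ≤ K * |a - a'|) → Continuous g := by
    intro g K hK
    have : LipschitzWith (Real.toNNReal K) g := LipschitzWith.of_dist_le_mul fun a a' => by
      rw [Real.dist_eq, Real.dist_eq]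
      refine (hK a a').trans ?_
      gcongr
      exact Real.le_coe_toNNReal K
    exact this.continuous
  refine ⟨u, fun a r => -(r * avgB m (fun t => h (u a t)) r),
    fun a r => -(h (u a r) - m * avgB m (fun t => h (u a t)) r), ?_, ?_, ?_, ?_, ?_, ?_, ?_, ?_, hconst⟩
  · intro a; rw [hintg]; simp
  · intro a; simp
  · intro a r
    have hc : Continuous (fun s => s * avgB m (fun t => h (u a t)) s) :=
      continuous_id.mul (avgB_continuous m (hg a))
    have h1 := intervalIntegral.integral_hasDerivAt_right (hc.intervalIntegrable 0 r)
      (hc.stronglyMeasurableAtFilter _ _) hc.continuousAt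
    have h2 := (hasDerivAt_const r a).sub h1
    have h4 := h2.congr_of_eventuallyEq (f₁ := u a) (Eventually.of_forall fun r => by
      simpa using hintg a r)
    simpa using h4
  · intro a r
    exact (avgB_hasDerivAt m (hg a) r).neg
  · intro a
    have := avgB_continuous m (hg a)
    have := hg a
    fun_prop
  · intro a r hr
    field_simp
    ring
  · intro r
    apply cont_of _ (C * Real.exp (lam * r ^ 2))
    intro a a'
    have := hd a a' r
    linarith
  · intro r
    apply cont_of _ (|r| * (L * C * Real.exp (lam * r ^ 2)))
    intro a a'
    have e : -(r * avgB m (fun t => h (u a t)) r) - -(r * avgB m (fun t => h (u a' t)) r)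
      = -(r * (avgB m (fun t => h (u a t)) r - avgB m (fun t => h (u a' t)) r)) := by ring
    rw [e, abs_neg, abs_mul, avgB_sub m (hg a) (hg a')]
    have := avgB_abs_le m (g := fun t => h (u a t) - h (u a' t)) (D := L * C * |a - a'|)
      (lam := lam) (by positivity) hl.le (by
        intro t
        refine (hlip _ _).trans ?_
        have := mul_le_mul_of_nonneg_left (hd a a' t) hL
        linarith) r
    have := mul_le_mul_of_nonneg_left this (abs_nonneg r)
    linarith

lemma first_zero {g : ℝ → ℝ} (hg : Continuous g) {a b : ℝ} (hab : a ≤ b) (ha : g a < 0)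
    (hb : 0 ≤ g b) : ∃ c, a < c ∧ c ≤ b ∧ g c = 0 ∧ ∀ s, a ≤ s → s < c → g s < 0 := by
  have ivt : ∀ t, a ≤ t → 0 ≤ g t → ∃ x ∈ Set.Icc a t, g x = 0 := by
    intro t hat ht
    exact intermediate_value_Icc hat hg.continuousOn ⟨ha.le, ht⟩
  have hS : IsCompact (Set.Icc a b ∩ {x | g x = 0}) :=
    isCompact_Icc.inter_right (isClosed_eq hg continuous_const)
  obtain ⟨x, hx, hx0⟩ := ivt b hab hb
  obtain ⟨c, ⟨hc, hc0⟩, hmin⟩ := hS.exists_isLeast ⟨x, hx, hx0⟩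
  have hc0 : g c = 0 := hc0
  refine ⟨c, lt_of_le_of_ne hc.1 ?_, hc.2, hc0, ?_⟩
  · rintro rfl; linarith
  · intro s has hsc
    by_contra hcon
    obtain ⟨y, hy, hy0⟩ := ivt s has (not_lt.1 hcon)
    have := hmin ⟨⟨hy.1, hy.2.trans (hsc.le.trans hc.2)⟩, hy0⟩
    linarith [hy.2]

/-- A trajectory of the (modified) radial equation. -/
structure Traj (m : ℕ) (h u v w : ℝ → ℝ) : Prop where
  du : ∀ r, HasDerivAt u (v r) r
  dv : ∀ r, HasDerivAt v (w r) r
  v0 : v 0 = 0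
  eqn : ∀ r, 0 < r → w r = -((m:ℝ) / r) * v r - h (u r)

namespace Traj
variable {m : ℕ} {h H u v w : ℝ → ℝ}

lemma ucont (T : Traj m h u v w) : Continuous u :=
  continuous_iff_continuousAt.2 fun r => (T.du r).continuousAt

lemma vcont (T : Traj m h u v w) : Continuous v :=
  continuous_iff_continuousAt.2 fun r => (T.dv r).continuousAt

lemma dE (T : Traj m h u v w) (hH : ∀ x, HasDerivAt H (h x) x) (r : ℝ) :
    HasDerivAt (fun r => v r ^ 2 / 2 + H (u r)) (v r * w r + h (u r) * v r) r := by
  have h1 := ((T.dv r).pow 2).div_const 2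
  have h2 := (hH (u r)).comp r (T.du r)
  refine (h1.add h2).congr_deriv ?_
  simp; ring

lemma dE' (T : Traj m h u v w) {r : ℝ} (hr : 0 < r) :
    v r * w r + h (u r) * v r = -((m:ℝ) / r) * v r ^ 2 := by
  rw [T.eqn r hr]; ring

lemma E_anti (T : Traj m h u v w) (hH : ∀ x, HasDerivAt H (h x) x) :
    AntitoneOn (fun r => v r ^ 2 / 2 + H (u r)) (Set.Ici 0) := by
  apply antitoneOn_of_deriv_nonpos (convex_Ici 0)
  · exact fun r _ => (T.dE hH r).continuousAt.continuousWithinAt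
  · exact fun r _ => (T.dE hH r).differentiableAt.differentiableWithinAt
  · intro r hr
    rw [interior_Ici] at hr
    have hr : 0 < r := hr
    rw [(T.dE hH r).deriv, T.dE' hr]
    have : 0 ≤ (m:ℝ) / r * v r ^ 2 := by positivity
    linarith

lemma dz (T : Traj m h u v w) {r : ℝ} (hr : 0 < r) :
    HasDerivAt (fun r => r ^ m * v r) (-(r ^ m * h (u r))) r := by
  refine ((hasDerivAt_pow m r).mul (T.dv r)).congr_deriv ?_
  rw [T.eqn r hr]
  rcases m with _ | k
  · simp
  · simp only [Nat.add_sub_cancel, pow_succ]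
    field_simp
    ring

lemma z0 (T : Traj m h u v w) : (0:ℝ) ^ m * v 0 = 0 := by rw [T.v0, mul_zero]

lemma zcont (T : Traj m h u v w) : Continuous (fun r => r ^ m * v r) := by
  have := T.vcont
  fun_prop

lemma v_neg (T : Traj m h u v w) {b c r0 : ℝ} (hpos : ∀ x, b < x → x < c → 0 < h x)
    (hr0 : 0 < r0) (hu : ∀ s, 0 < s → s < r0 → b < u s ∧ u s < c) : v r0 < 0 := by
  have : StrictAntiOn (fun r => r ^ m * v r) (Set.Icc 0 r0) := by
    apply strictAntiOn_of_deriv_neg (convex_Icc 0 r0) T.zcont.continuousOn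
    intro r hr
    rw [interior_Icc] at hr
    rw [(T.dz hr.1).deriv]
    have := hpos _ (hu r hr.1 hr.2).1 (hu r hr.1 hr.2).2
    have := mul_pos (pow_pos hr.1 m) this
    linarith
  have h1 := this ⟨le_rfl, hr0.le⟩ ⟨hr0.le, le_rfl⟩ hr0
  simp only [T.z0] at h1
  have h2 := pow_pos hr0 m
  by_contra hcon
  have := mul_nonneg h2.le (not_lt.1 hcon)
  linarith

lemma v_le (T : Traj m h u v w) {δ : ℝ} (hh : ∀ s, 0 < s → δ ≤ h (u s)) {r : ℝ} (hr : 0 < r) :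
    v r ≤ -(δ / (m + 1)) * r := by
  have : AntitoneOn (fun r => r ^ m * v r + δ / (m + 1) * r ^ (m + 1)) (Set.Ici 0) := by
    have hd : ∀ r, 0 < r → HasDerivAt (fun r => r ^ m * v r + δ / (m + 1) * r ^ (m + 1))
        (-(r ^ m * h (u r)) + δ / (m + 1) * (((m + 1 : ℕ) : ℝ) * r ^ m)) r := by
      intro r hr
      exact (T.dz hr).add ((hasDerivAt_pow (m + 1) r).const_mul _)
    apply antitoneOn_of_deriv_nonpos (convex_Ici 0)
    · have := T.vcont
      fun_prop
    · intro r hr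
      rw [interior_Ici] at hr
      exact (hd r hr).differentiableAt.differentiableWithinAt
    · intro r hr
      rw [interior_Ici] at hr
      have hr : 0 < r := hr
      rw [(hd r hr).deriv]
      have h1 : δ / (m + 1) * (((m + 1 : ℕ) : ℝ) * r ^ m) = δ * r ^ m := by
        push_cast; field_simp
      rw [h1]
      have := mul_le_mul_of_nonneg_right (hh r hr) (pow_pos hr m).le
      linarith
  have h1 := this (Set.mem_Ici.2 le_rfl) (Set.mem_Ici.2 hr.le) hr.le
  simp only [T.z0] at h1
  simp only [ne_eq, Nat.add_eq_zero_iff, one_ne_zero, and_false, not_false_eq_true, zero_pow,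
    mul_zero, add_zero] at h1
  have h2 : r ^ m * (v r + δ / (m + 1) * r) ≤ 0 := by
    have : r ^ m * (v r + δ / (m + 1) * r) = r ^ m * v r + δ / (m + 1) * r ^ (m + 1) := by ring
    linarith
  have h3 := pow_pos hr m
  by_contra hcon
  have : 0 < r ^ m * (v r + δ / (m + 1) * r) := mul_pos h3 (by linarith)
  linarith

lemma u_anti (T : Traj m h u v w) {r0 : ℝ} (hv : ∀ s, 0 < s → s < r0 → v s < 0) :
    StrictAntiOn u (Set.Icc 0 r0) := by
  apply strictAntiOn_of_deriv_neg (convex_Icc 0 r0) T.ucont.continuousOn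
  intro r hr
  rw [interior_Icc] at hr
  rw [(T.du r).deriv]
  exact hv r hr.1 hr.2

lemma first_crit (T : Traj m h u v w) {b c : ℝ} (hpos : ∀ x, b < x → x < c → 0 < h x)
    (hb : b < u 0) (hc : u 0 < c) : (∀ r, 0 < r → v r < 0) ∨
    ∃ r0, 0 < r0 ∧ v r0 = 0 ∧ (∀ s, 0 < s → s < r0 → v s < 0) ∧ u r0 ≤ b := by
  by_cases hall : ∀ r, 0 < r → v r < 0
  · exact Or.inl hall
  right
  push Not at hall
  obtain ⟨r1, hr1, hvr1⟩ := hall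
  obtain ⟨ε, hε, hball⟩ := Metric.isOpen_iff.1 (isOpen_Ioo.preimage T.ucont : IsOpen (u ⁻¹' Set.Ioo b c))
    0 ⟨hb, hc⟩
  have hsmall : ∀ s, 0 < s → s < ε → v s < 0 := by
    intro s hs hse
    apply T.v_neg hpos hs
    intro t ht hts
    have : t ∈ Metric.ball (0:ℝ) ε := by
      rw [Metric.mem_ball, Real.dist_eq, sub_zero, abs_of_pos ht]; linarith
    exact hball this
  have hre : ε ≤ r1 := by
    by_contra hcon
    linarith [hsmall r1 hr1 (not_le.1 hcon)]
  obtain ⟨r0, h1, h2, h3, h4⟩ := first_zero T.vcont (a := ε / 2) (b := r1) (by linarith)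
    (hsmall _ (by linarith) (by linarith)) hvr1
  have hneg : ∀ s, 0 < s → s < r0 → v s < 0 := by
    intro s hs hs0
    by_cases hse : s < ε
    · exact hsmall s hs hse
    · exact h4 s (by linarith) hs0
  have hr0 : 0 < r0 := by linarith
  refine ⟨r0, hr0, h3, hneg, ?_⟩
  by_contra hcon
  have hanti := T.u_anti hneg
  have := T.v_neg hpos hr0 (fun s hs hs0 => by
    have e1 := hanti ⟨le_rfl, hr0.le⟩ ⟨hs.le, hs0.le⟩ hs
    have e2 := hanti ⟨hs.le, hs0.le⟩ ⟨hr0.le, le_rfl⟩ hs0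
    exact ⟨by linarith, by linarith⟩)
  linarith

lemma v_sq_le (T : Traj m h u v w) (hH : ∀ x, HasDerivAt H (h x) x) {K : ℝ}
    (hK : ∀ x, |H x| ≤ K) {r : ℝ} (hr : 0 ≤ r) : |v r| ≤ 4 * K + 1 := by
  have h1 := T.E_anti hH (Set.mem_Ici.2 le_rfl) (Set.mem_Ici.2 hr) hr
  simp only [T.v0] at h1
  have h2 := abs_le.1 (hK (u 0))
  have h3 := abs_le.1 (hK (u r))
  apply abs_le_of_sq_le_sq' _ (by linarith [(abs_nonneg _).trans (hK 0)]) |> abs_le.2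
  nlinarith [(abs_nonneg _).trans (hK 0)]

lemma limit_zero (T : Traj m h u v w) (hH : ∀ x, HasDerivAt H (h x) x) (hH0 : H 0 = 0) {K : ℝ}
    (hK : ∀ x, |H x| ≤ K) (hh : Continuous h) {b c e : ℝ} (hpos : ∀ x, b < x → x < c → 0 < h x)
    (hneg : ∀ x, 0 < x → x ≤ b → H x < 0) (hc : u 0 < c)
    (hv : ∀ r, 0 < r → v r < 0) (hu : ∀ r, 0 ≤ r → 0 ≤ u r) (he : 0 ≤ e)
    (hE : ∀ r, 0 ≤ r → e ≤ v r ^ 2 / 2 + H (u r)) : Tendsto u atTop (nhds 0) ∧ e ≤ 0 := by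
  have hanti : AntitoneOn u (Set.Ici 0) := by
    intro x hx y hy hxy
    exact (T.u_anti (r0 := y) (fun s hs _ => hv s hs)).antitoneOn ⟨hx, hxy⟩ ⟨hy, le_rfl⟩ hxy
  have hA : Antitone (fun r => u (max r 0)) := by
    intro x y hxy
    exact hanti (Set.mem_Ici.2 (le_max_right _ _)) (Set.mem_Ici.2 (le_max_right _ _))
      (max_le_max hxy le_rfl)
  have hBdd : BddBelow (Set.range (fun r => u (max r 0))) :=
    ⟨0, by rintro _ ⟨r, rfl⟩; exact hu _ (le_max_right _ _)⟩
  obtain ⟨l, hl⟩ : ∃ l, Tendsto (fun r => u (max r 0)) atTop (nhds l) :=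
    ⟨_, tendsto_atTop_ciInf hA hBdd⟩
  have hlu : Tendsto u atTop (nhds l) := by
    refine hl.congr' ?_
    filter_upwards [eventually_ge_atTop 0] with r hr
    rw [max_eq_left hr]
  have hl0 : 0 ≤ l := ge_of_tendsto' hl fun r => hu _ (le_max_right _ _)
  have hle : ∀ r, 0 ≤ r → l ≤ u r := by
    intro r hr
    apply le_of_tendsto hlu
    filter_upwards [eventually_ge_atTop r] with s hs
    exact hanti (Set.mem_Ici.2 hr) (Set.mem_Ici.2 (hr.trans hs)) hs
  have hHc : Continuous H := continuous_iff_continuousAt.2 fun x => (hH x).continuousAt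
  have hHl : e ≤ H l := by
    by_contra hcon
    push Not at hcon
    have ht : Tendsto (fun r => H (u r)) atTop (nhds (H l)) := (hHc.tendsto l).comp hlu
    have hev : ∀ᶠ r in atTop, H (u r) < (e + H l) / 2 :=
      ht.eventually (gt_mem_nhds (by linarith))
    obtain ⟨r1, hr1⟩ := eventually_atTop.1 (hev.and (eventually_gt_atTop 0))
    have hr1pos : 0 < r1 := (hr1 r1 le_rfl).2
    obtain ⟨η, hη, hηs⟩ : ∃ η, 0 < η ∧ η ^ 2 = e - H l :=
      ⟨Real.sqrt (e - H l), Real.sqrt_pos.2 (by linarith), Real.sq_sqrt (by linarith)⟩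
    have hvη : ∀ r, r1 ≤ r → v r ≤ -η := by
      intro r hr
      have h1 := hr1 r hr
      have h2 := hE r h1.2.le
      have h3 := hv r h1.2
      have h4 : η ^ 2 ≤ v r ^ 2 := by linarith [h1.1]
      have := sq_le_sq.1 h4
      rw [abs_of_pos hη, abs_of_neg h3] at this
      linarith
    have hmono : AntitoneOn (fun r => u r + η * r) (Set.Ici r1) := by
      have hd : ∀ r, HasDerivAt (fun r => u r + η * r) (v r + η) r := fun r => by
        exact ((T.du r).add ((hasDerivAt_id' r).const_mul η)).congr_deriv (by simp)
      apply antitoneOn_of_deriv_nonpos (convex_Ici r1)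
      · exact fun r _ => (hd r).continuousAt.continuousWithinAt
      · exact fun r _ => (hd r).differentiableAt.differentiableWithinAt
      · intro r hr
        rw [interior_Ici] at hr
        rw [(hd r).deriv]
        linarith [hvη r (le_of_lt hr)]
    have hr2 : r1 ≤ r1 + (u r1 + 1) / η := by
      have := hu r1 hr1pos.le
      have : 0 ≤ (u r1 + 1) / η := by positivity
      linarith
    have h5 := hmono (Set.mem_Ici.2 le_rfl) (Set.mem_Ici.2 hr2) hr2
    have h6 := hu (r1 + (u r1 + 1) / η) (by linarith)
    have h7 : η * (r1 + (u r1 + 1) / η) = η * r1 + u r1 + 1 := by field_simp; ring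
    simp only [h7] at h5
    linarith
  rcases hl0.eq_or_lt with h0 | h0
  · subst h0
    exact ⟨hlu, by linarith⟩
  exfalso
  have hbl : b < l := by
    by_contra hcon
    linarith [hneg l h0 (not_lt.1 hcon)]
  have hl00 := hle 0 le_rfl
  obtain ⟨x, hx, hmin⟩ := (isCompact_Icc (a := l) (b := u 0)).exists_isMinOn
    (Set.nonempty_Icc.2 hl00) hh.continuousOn
  have hδ : 0 < h x := hpos x (by linarith [hx.1]) (by linarith [hx.2])
  have hv2 := fun r hr => T.v_le (δ := h x) (fun s hs => hmin
    ⟨hle s hs.le, hanti (Set.mem_Ici.2 le_rfl) (Set.mem_Ici.2 hs.le) hs.le⟩) (r := r) hr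
  have hK0 := (abs_nonneg _).trans (hK 0)
  have hr : 0 < (4 * K + 2) / (h x / (m + 1)) := by positivity
  have e1 := hv2 _ hr
  have e2 := abs_le.1 (T.v_sq_le hH hK hr.le)
  have e3 : -(h x / (m + 1)) * ((4 * K + 2) / (h x / (m + 1))) = -(4 * K + 2) := by
    field_simp
  rw [e3] at e1
  linarith [e2.1]

lemma E_lower (T : Traj m h u v w) (hH : ∀ x, HasDerivAt H (h x) x) {K c R r : ℝ}
    (hK : ∀ x, |H x| ≤ K) (hR : 0 < R) (hr : 0 < r)
    (hv : ∀ s, 0 < s → s < r → v s < 0) (hur : 0 ≤ u r) (hc : u 0 ≤ c) :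
    v R ^ 2 / 2 + H (u R) - (m / R) * (4 * K + 1) * c ≤ v r ^ 2 / 2 + H (u r) := by
  have hK0 := (abs_nonneg _).trans (hK 0)
  have hua := T.u_anti hv
  have hu0 : 0 ≤ u 0 := by linarith [hua ⟨le_rfl, hr.le⟩ ⟨hr.le, le_rfl⟩ hr]
  have hk : 0 ≤ (m / R) * (4 * K + 1) := by positivity
  rcases le_total r R with hrR | hrR
  · have := T.E_anti hH (Set.mem_Ici.2 hr.le) (Set.mem_Ici.2 hR.le) hrR
    have h2 : 0 ≤ (m / R) * (4 * K + 1) * c := mul_nonneg hk (hu0.trans hc)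
    simp only at this
    linarith
  · have hmono : MonotoneOn (fun r => v r ^ 2 / 2 + H (u r) - (m / R) * (4 * K + 1) * u r)
        (Set.Icc R r) := by
      have hd := fun s => (T.dE hH s).sub ((T.du s).const_mul ((m / R) * (4 * K + 1)))
      apply monotoneOn_of_deriv_nonneg (convex_Icc R r)
      · exact fun s _ => (hd s).continuousAt.continuousWithinAt
      · exact fun s _ => (hd s).differentiableAt.differentiableWithinAt
      · intro s hs
        rw [interior_Icc] at hs
        have hs0 : 0 < s := hR.trans hs.1
        refine le_of_le_of_eq ?_ (hd s).deriv.symm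
        rw [T.dE' hs0]
        have h1 := hv s hs0 hs.2
        have h2 := (abs_le.1 (T.v_sq_le hH hK hs0.le)).1
        have h3 : (m:ℝ) / s ≤ m / R := by
          have := hs.1.le
          gcongr
        have h4 : 0 ≤ (m:ℝ) / s := by positivity
        have h5 : (m:ℝ) / s * (-v s) ≤ m / R * (4 * K + 1) := by
          apply mul_le_mul h3 (by linarith) (by linarith) (by positivity)
        nlinarith
    have h1 := hmono ⟨le_rfl, hrR⟩ ⟨hrR, le_rfl⟩ hrR
    simp only at h1
    have h2 : u R ≤ c := (hua.antitoneOn ⟨le_rfl, hr.le⟩ ⟨hR.le, hrR⟩ hR.le).trans hc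
    have h3 := mul_le_mul_of_nonneg_left h2 hk
    have h4 := mul_nonneg hk hur
    linarith

lemma stays_neg (T : Traj m h u v w) (hz : ∀ x, x ≤ 0 → h x = 0) {ξ r : ℝ} (hξ : 0 < ξ)
    (hu : u ξ < 0) (hv : v ξ < 0) (hr : ξ ≤ r) : u r < 0 := by
  by_contra hcon
  obtain ⟨c, h1, h2, h3, h4⟩ := first_zero T.ucont hr hu (not_lt.1 hcon)
  have hzc : AntitoneOn (fun r => r ^ m * v r) (Set.Icc ξ c) := by
    apply antitoneOn_of_deriv_nonpos (convex_Icc ξ c) T.zcont.continuousOn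
    · intro s hs
      rw [interior_Icc] at hs
      exact (T.dz (hξ.trans hs.1)).differentiableAt.differentiableWithinAt
    · intro s hs
      rw [interior_Icc] at hs
      rw [(T.dz (hξ.trans hs.1)).deriv, hz _ (h4 s hs.1.le hs.2).le]
      simp
  have hvneg : ∀ s ∈ Set.Icc ξ c, v s < 0 := by
    intro s hs
    have e1 := hzc ⟨le_rfl, h1.le⟩ hs hs.1
    simp only at e1
    have e2 : ξ ^ m * v ξ < 0 := mul_neg_of_pos_of_neg (pow_pos hξ m) hv
    by_contra hcon
    have := mul_nonneg (pow_pos (hξ.trans_le hs.1) m).le (not_lt.1 hcon)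
    linarith
  have : AntitoneOn u (Set.Icc ξ c) := by
    apply antitoneOn_of_deriv_nonpos (convex_Icc ξ c) T.ucont.continuousOn
    · exact fun s _ => (T.du s).differentiableAt.differentiableWithinAt
    · intro s hs
      rw [(T.du s).deriv]
      exact (hvneg s (interior_subset hs)).le
  have := this ⟨le_rfl, h1.le⟩ ⟨h1.le, le_rfl⟩ h1.le
  linarith

lemma unique_zero (T : Traj m h u v w) {L : ℝ} (hL : 0 ≤ L) (hlip : ∀ x, |h x| ≤ L * |x|)
    {r0 : ℝ} (hr0 : 0 < r0) (hu : u r0 = 0) (hv : v r0 = 0) : u (r0 / 2) = 0 := by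
  obtain ⟨k, hk⟩ : ∃ k : ℝ, k = 1 + L + 2 * (m / (r0 / 2)) := ⟨_, rfl⟩
  have hmono : MonotoneOn (fun r => (u r ^ 2 + v r ^ 2) * Real.exp (k * r))
      (Set.Icc (r0 / 2) r0) := by
    have hd : ∀ r, HasDerivAt (fun r => (u r ^ 2 + v r ^ 2) * Real.exp (k * r))
        ((2 * u r * v r + 2 * v r * w r) * Real.exp (k * r) +
          (u r ^ 2 + v r ^ 2) * (Real.exp (k * r) * k)) r := by
      intro r
      have h1 := ((T.du r).pow 2).add ((T.dv r).pow 2)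
      have h2 : HasDerivAt (fun r => Real.exp (k * r)) (Real.exp (k * r) * k) r := by
        have := ((hasDerivAt_id r).const_mul k).exp
        simpa using this
      refine (h1.mul h2).congr_deriv ?_
      simp
    apply monotoneOn_of_deriv_nonneg (convex_Icc _ _)
    · exact fun s _ => (hd s).continuousAt.continuousWithinAt
    · exact fun s _ => (hd s).differentiableAt.differentiableWithinAt
    · intro s hs
      rw [interior_Icc] at hs
      have hs0 : 0 < s := by linarith [hs.1]
      rw [(hd s).deriv, T.eqn s hs0]
      have h3 : (m:ℝ) / s ≤ m / (r0 / 2) := by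
        have := hs.1.le
        gcongr
      have h4 : |v s * h (u s)| ≤ L * |u s| * |v s| := by
        rw [abs_mul, mul_comm]
        exact mul_le_mul_of_nonneg_right (hlip _) (abs_nonneg _)
      have h5 : 2 * (|u s| * |v s|) ≤ u s ^ 2 + v s ^ 2 := by
        have := two_mul_le_add_sq |u s| |v s|
        rw [sq_abs, sq_abs] at this
        linarith
      have h6 : 2 * (v s * h (u s)) ≤ L * (u s ^ 2 + v s ^ 2) := by
        have := le_abs_self (v s * h (u s))
        nlinarith
      have h7 : (m:ℝ) / s * v s ^ 2 ≤ m / (r0 / 2) * v s ^ 2 := by gcongr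
      have h8 : 0 ≤ (m:ℝ) / (r0 / 2) * u s ^ 2 := by positivity
      have h9 : 0 ≤ (2 * u s * v s + 2 * v s * (-(m / s) * v s - h (u s))) +
          (u s ^ 2 + v s ^ 2) * k := by
        rw [hk]
        nlinarith [sq_nonneg (u s + v s)]
      have := mul_nonneg h9 (Real.exp_pos (k * s)).le
      linarith
  have h1 := hmono ⟨le_rfl, by linarith⟩ ⟨by linarith, le_rfl⟩ (by linarith : r0 / 2 ≤ r0)
  simp only [hu, hv] at h1
  have h2 : u (r0 / 2) ^ 2 + v (r0 / 2) ^ 2 ≤ 0 := by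
    by_contra hcon
    have := mul_pos (not_le.1 hcon) (Real.exp_pos (k * (r0 / 2)))
    norm_num at h1
    linarith
  nlinarith [sq_nonneg (u (r0 / 2)), sq_nonneg (v (r0 / 2))]

end Traj

theorem shooting (m : ℕ) (h H : ℝ → ℝ) (L M K b c : ℝ) (hL : 0 ≤ L)
    (hlip : ∀ x y, |h x - h y| ≤ L * |x - y|) (hb : ∀ x, |h x| ≤ M) (hh : Continuous h)
    (hH : ∀ x, HasDerivAt H (h x) x) (hK : ∀ x, |H x| ≤ K)
    (hz : ∀ x, x ≤ 0 → h x = 0) (hHz : ∀ x, x ≤ 0 → H x = 0)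
    (hb0 : 0 < b) (hbc : b < c) (hc : h c = 0) (hHc : 0 < H c)
    (hpos : ∀ x, b < x → x < c → 0 < h x) (hneg : ∀ x, 0 < x → x ≤ b → H x < 0) :
    ∃ u v w : ℝ → ℝ, Traj m h u v w ∧ Continuous w ∧ (∀ r, 0 ≤ r → 0 < u r ∧ u r < c) ∧
      Tendsto u atTop (nhds 0) := by
  obtain ⟨u, v, w, hu0, hv0, hdu, hdv, hw, heq, hcu, hcv, hconst⟩ := ivp m h L M hL hlip hb hh
  have T : ∀ a, Traj m h (u a) (v a) (w a) := fun a => ⟨hdu a, hdv a, hv0 a, heq a⟩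
  have hHcont : Continuous H := continuous_iff_continuousAt.2 fun x => (hH x).continuousAt
  have hEcont : ∀ r, Continuous fun a => v a r ^ 2 / 2 + H (u a r) := fun r => by
    have := hcu r
    have := hcv r
    fun_prop
  have hH0 : H 0 = 0 := hHz 0 le_rfl
  have hK0 := (abs_nonneg _).trans (hK 0)
  have hlip0 : ∀ x, |h x| ≤ L * |x| := fun x => by
    have := hlip x 0
    rwa [hz 0 le_rfl, sub_zero, sub_zero] at this
  let P : Set ℝ := ⋃ r ∈ Set.Ici (0:ℝ), {a | v a r ^ 2 / 2 + H (u a r) < 0}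
  let N : Set ℝ := ⋃ r ∈ Set.Ioi (0:ℝ), {a | u a r < 0 ∧ v a r < 0}
  have hPo : IsOpen P := isOpen_biUnion fun r _ => isOpen_lt (hEcont r) continuous_const
  have hNo : IsOpen N := isOpen_biUnion fun r _ =>
    (isOpen_lt (hcu r) continuous_const).inter (isOpen_lt (hcv r) continuous_const)
  have memP : ∀ a, a ∈ P ↔ ∃ r, 0 ≤ r ∧ v a r ^ 2 / 2 + H (u a r) < 0 := fun a => by simp [P]
  have memN : ∀ a, a ∈ N ↔ ∃ r, 0 < r ∧ u a r < 0 ∧ v a r < 0 := fun a => by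
    simp only [N, Set.mem_iUnion, Set.mem_Ioi, exists_prop, Set.mem_ofPred_eq]
  have hdisj : ∀ a, a ∈ P → a ∈ N → False := by
    intro a haP haN
    obtain ⟨r1, hr1, hE1⟩ := (memP a).1 haP
    obtain ⟨r2, hr2, hu2, hv2⟩ := (memN a).1 haN
    have key : ∀ r, u a r < 0 → 0 ≤ v a r ^ 2 / 2 + H (u a r) := by
      intro r hr
      rw [hHz _ hr.le]; positivity
    rcases le_total r1 r2 with h12 | h12
    · have := (T a).E_anti hH (Set.mem_Ici.2 hr1) (Set.mem_Ici.2 hr2.le) h12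
      simp only at this
      linarith [key r2 hu2]
    · linarith [key r1 ((T a).stays_neg hz hr2 hu2 hv2 h12)]
  have hbP : b ∈ P := (memP b).2 ⟨0, le_rfl, by
    rw [hv0, hu0]; simpa using hneg b hb0 le_rfl⟩
  -- nonnegativity facts outside of N
  have nonneg1 : ∀ a, b ≤ a → a ∉ N → ∀ r0, 0 < r0 → (∀ s, 0 < s → s < r0 → v a s < 0) →
      0 ≤ u a r0 := by
    intro a hba haN r0 hr0 hv
    by_contra hcon
    obtain ⟨ε, hε, hball⟩ := Metric.isOpen_iff.1
      (isOpen_Iio.preimage (T a).ucont : IsOpen (u a ⁻¹' Set.Iio 0)) r0 (not_le.1 hcon)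
    have hs : max (r0 / 2) (r0 - ε / 2) ∈ Metric.ball r0 ε := by
      rw [Metric.mem_ball, Real.dist_eq, abs_lt]
      constructor
      · linarith [le_max_right (r0 / 2) (r0 - ε / 2)]
      · have : max (r0 / 2) (r0 - ε / 2) < r0 := max_lt (by linarith) (by linarith)
        linarith
    have hs0 : 0 < max (r0 / 2) (r0 - ε / 2) := lt_max_of_lt_left (by linarith)
    exact haN ((memN a).2 ⟨_, hs0, hball hs, hv _ hs0 (max_lt (by linarith) (by linarith))⟩)
  have nonneg2 : ∀ a, b ≤ a → a ∉ N → (∀ s, 0 < s → v a s < 0) → ∀ r, 0 ≤ r → 0 ≤ u a r := by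
    intro a hba haN hv r hr
    rcases hr.eq_or_lt with rfl | hr
    · rw [hu0]; linarith
    · exact nonneg1 a hba haN r hr fun s hs _ => hv s hs
  have hNne : (Set.Ico b c ∩ N).Nonempty := by
    obtain ⟨R, hR, hRe⟩ : ∃ R : ℝ, 0 < R ∧ (m / R) * (4 * K + 1) * c ≤ H c / 2 := by
      refine ⟨2 * (m * (4 * K + 1) * c) / H c + 1, ?_, ?_⟩
      · have : 0 ≤ 2 * (m * (4 * K + 1) * c) / H c := by
          have : 0 < c := hb0.trans hbc
          positivity
        linarith
      · have hc0 : 0 < c := hb0.trans hbc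
        have h1 : 0 ≤ 2 * (m * (4 * K + 1) * c) / H c := by positivity
        have h2 : m / (2 * (m * (4 * K + 1) * c) / H c + 1) * (4 * K + 1) * c =
          (m * (4 * K + 1) * c) / (2 * (m * (4 * K + 1) * c) / H c + 1) := by ring
        rw [h2, div_le_iff₀ (by linarith)]
        have h3 : H c / 2 * (2 * (m * (4 * K + 1) * c) / H c + 1) =
          m * (4 * K + 1) * c + H c / 2 := by field_simp
        linarith
    have hEc : v c R ^ 2 / 2 + H (u c R) > H c / 2 := by
      rw [hconst c hc R]
      nlinarith [sq_nonneg (v c R)]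
    have hopen : IsOpen {a | H c / 2 < v a R ^ 2 / 2 + H (u a R)} :=
      isOpen_lt continuous_const (hEcont R)
    obtain ⟨ε, hε, hball⟩ := Metric.isOpen_iff.1 hopen c hEc
    obtain ⟨a, ha⟩ : ∃ a, a = max ((b + c) / 2) (c - ε / 2) := ⟨_, rfl⟩
    have hab : b < a := by rw [ha]; exact lt_max_of_lt_left (by linarith)
    have hac : a < c := by rw [ha]; exact max_lt (by linarith) (by linarith)
    have haE : H c / 2 < v a R ^ 2 / 2 + H (u a R) := by
      apply hball
      rw [Metric.mem_ball, Real.dist_eq, abs_lt]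
      constructor
      · have : c - ε / 2 ≤ a := by rw [ha]; exact le_max_right _ _
        linarith
      · linarith
    refine ⟨a, ⟨hab.le, hac⟩, ?_⟩
    by_contra haN
    have hua : b < u a 0 := by rw [hu0]; exact hab
    have huc : u a 0 < c := by rw [hu0]; exact hac
    rcases (T a).first_crit hpos hua huc with hv | ⟨r0, hr0, hvr0, hv, hub⟩
    · have hun := nonneg2 a hab.le haN hv
      have hlow : ∀ r, 0 < r → v a R ^ 2 / 2 + H (u a R) - H c / 2 ≤ v a r ^ 2 / 2 + H (u a r) := by
        intro r hr
        have := (T a).E_lower hH hK hR hr (fun s hs _ => hv s hs) (hun r hr.le) huc.le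
        linarith
      have := ((T a).limit_zero hH hH0 hK hh hpos hneg huc hv hun
        (e := v a R ^ 2 / 2 + H (u a R) - H c / 2) (by linarith) (by
          intro r hr
          rcases hr.eq_or_lt with rfl | hr
          · have h1 := hlow R hR
            have h2 := (T a).E_anti hH (Set.mem_Ici.2 le_rfl) (Set.mem_Ici.2 hR.le) hR.le
            simp only at h2
            linarith
          · exact hlow r hr)).2
      linarith
    · have hun := nonneg1 a hab.le haN r0 hr0 hv
      have h1 := (T a).E_lower hH hK hR hr0 hv hun huc.le
      rw [hvr0] at h1
      have h2 : H (u a r0) ≤ 0 := by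
        rcases hun.eq_or_lt with h0 | h0
        · rw [← h0, hH0]
        · exact (hneg _ h0 hub).le
      norm_num at h1
      linarith
  obtain ⟨a, ⟨hab, hac⟩, haPN⟩ : ∃ a ∈ Set.Ico b c, a ∉ P ∪ N := by
    by_contra hcon
    push Not at hcon
    obtain ⟨x, _, hxP, hxN⟩ := isPreconnected_Ico P N hPo hNo hcon
      ⟨b, ⟨le_rfl, hbc⟩, hbP⟩ hNne
    exact hdisj x hxP hxN
  have haP : a ∉ P := fun hx => haPN (Or.inl hx)
  have haN : a ∉ N := fun hx => haPN (Or.inr hx)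
  have hab' : b < a := lt_of_le_of_ne hab (by rintro rfl; exact haP hbP)
  have hE : ∀ r, 0 ≤ r → 0 ≤ v a r ^ 2 / 2 + H (u a r) := by
    intro r hr
    by_contra hcon
    exact haP ((memP a).2 ⟨r, hr, not_le.1 hcon⟩)
  have hua : b < u a 0 := by rw [hu0]; exact hab'
  have huc : u a 0 < c := by rw [hu0]; exact hac
  rcases (T a).first_crit hpos hua huc with hv | ⟨r0, hr0, hvr0, hv, hub⟩
  · have hun := nonneg2 a hab haN hv
    refine ⟨u a, v a, w a, T a, hw a, ?_, ((T a).limit_zero hH hH0 hK hh hpos hneg huc hv hun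
      le_rfl hE).1⟩
    intro r hr
    have hst := (T a).u_anti (r0 := r + 1) (fun s hs _ => hv s hs)
    constructor
    · have := hst ⟨hr, by linarith⟩ ⟨by linarith, le_rfl⟩ (by linarith : r < r + 1)
      linarith [hun (r + 1) (by linarith)]
    · exact (hst.antitoneOn ⟨le_rfl, by linarith⟩ ⟨hr, by linarith⟩ hr).trans_lt huc
  · exfalso
    have hun := nonneg1 a hab haN r0 hr0 hv
    rcases hun.eq_or_lt with h0 | h0
    · have h1 := (T a).unique_zero hL hlip0 hr0 h0.symm hvr0
      have h2 := (T a).u_anti hv ⟨by linarith, by linarith⟩ ⟨hr0.le, le_rfl⟩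
        (by linarith : r0 / 2 < r0)
      linarith
    · have h1 := hE r0 hr0.le
      rw [hvr0] at h1
      have := hneg _ h0 hub
      norm_num at h1
      linarith

section shape
variable {ω p q : ℝ}

lemma f_contDiff (hp : 1 < p) (hpq : p < q) : ContDiff ℝ 1 (f ω p q) := by
  unfold f
  have h1 : ContDiff ℝ 1 (fun x : ℝ => x ^ p) := by
    exact_mod_cast Real.contDiff_rpow_const_of_le (n := 1) (by simpa using hp.le)
  have h2 : ContDiff ℝ 1 (fun x : ℝ => x ^ q) := by
    exact_mod_cast Real.contDiff_rpow_const_of_le (n := 1) (by simpa using (hp.trans hpq).le)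
  fun_prop

lemma f_cont (hp : 1 < p) (hpq : p < q) : Continuous (f ω p q) := (f_contDiff hp hpq).continuous

lemma f_zero (hp : 1 < p) (hpq : p < q) : f ω p q 0 = 0 := by
  unfold f
  rw [Real.zero_rpow (by linarith), Real.zero_rpow (by linarith)]
  simp

lemma f_factor (hp : 1 < p) {x : ℝ} (hx : 0 < x) : f ω p q x =
    x * (-ω + (x ^ (p - 1) - (x ^ (p - 1)) ^ ((q - 1) / (p - 1)))) := by
  unfold f
  rw [← Real.rpow_mul hx.le, mul_div_cancel₀ _ (by linarith : p - 1 ≠ 0)]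
  have h1 : x ^ p = x * x ^ (p - 1) := by
    rw [Real.rpow_sub_one hx.ne']; field_simp
  have h2 : x ^ q = x * x ^ (q - 1) := by
    rw [Real.rpow_sub_one hx.ne']; field_simp
  rw [h1, h2]; ring

lemma f_ordConn (hp : 1 < p) (hpq : p < q) {x y z : ℝ} (hx : 0 < x) (hxy : x ≤ y) (hyz : y ≤ z)
    (hfx : 0 < f ω p q x) (hfz : 0 < f ω p q z) : 0 < f ω p q y := by
  have hy : 0 < y := hx.trans_le hxy
  have hz : 0 < z := hy.trans_le hyz
  rw [f_factor hp hx] at hfx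
  rw [f_factor hp hz] at hfz
  rw [f_factor hp hy]
  have hγ : 1 ≤ (q - 1) / (p - 1) := by
    rw [le_div_iff₀ (by linarith)]; linarith
  have hconc : ConcaveOn ℝ (Set.Ici 0) (fun t : ℝ => t - t ^ ((q - 1) / (p - 1))) :=
    (concaveOn_id (convex_Ici 0)).sub (convexOn_rpow hγ)
  have hord := (hconc.convex_gt ω).ordConnected
  have e1 : ∀ a b : ℝ, 0 < a → 0 < a * b → 0 < b := fun a b ha hab => (mul_pos_iff_of_pos_left ha).1 hab
  have hx1 := e1 _ _ hx hfx
  have hz1 := e1 _ _ hz hfz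
  have hm := hord.out (x := x ^ (p - 1)) (y := z ^ (p - 1))
    ⟨(Real.rpow_pos_of_pos hx _).le, by linarith⟩
    ⟨(Real.rpow_pos_of_pos hz _).le, by linarith⟩
    (show y ^ (p - 1) ∈ Set.Icc _ _ from
    ⟨Real.rpow_le_rpow hx.le hxy (by linarith), Real.rpow_le_rpow hy.le hyz (by linarith)⟩)
  have := hm.2
  exact mul_pos hy (by linarith)

lemma f_neg_large (hω : 0 < ω) (hpq : p < q) {x : ℝ} (hx : 1 ≤ x) : f ω p q x < 0 := by
  unfold f
  have := Real.rpow_le_rpow_of_exponent_le hx hpq.le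
  nlinarith

lemma f_neg_small (hω : 0 < ω) (hp : 1 < p) {x : ℝ} (hx : 0 < x)
    (hxl : x < ω ^ (1 / (p - 1))) : f ω p q x < 0 := by
  unfold f
  have hp1 : 0 < p - 1 := by linarith
  have h1 : x ^ (p - 1) < ω := by
    have := Real.rpow_lt_rpow hx.le hxl hp1
    rwa [← Real.rpow_mul hω.le, one_div_mul_cancel hp1.ne', Real.rpow_one] at this
  have h2 : x ^ p = x * x ^ (p - 1) := by
    rw [Real.rpow_sub_one hx.ne']; field_simp
  have h3 := Real.rpow_pos_of_pos hx q
  rw [h2]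
  nlinarith

lemma f_shape (hω : 0 < ω) (hp : 1 < p) (hpq : p < q)
    (hex : ∃ u : ℝ, 0 < u ∧ 0 < ∫ s in (0:ℝ)..u, f ω p q s) :
    ∃ b c : ℝ, 0 < b ∧ b < c ∧ f ω p q c = 0 ∧ (∀ x, b < x → x < c → 0 < f ω p q x) ∧
      (∀ x, 0 < x → x ≤ b → ∫ s in (0:ℝ)..x, f ω p q s < 0) ∧
      0 < ∫ s in (0:ℝ)..c, f ω p q s := by
  obtain ⟨u0, hu0, hF⟩ := hex
  have hc := f_cont (ω := ω) hp hpq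
  have hf0 := f_zero (ω := ω) hp hpq
  have hii : ∀ a b, IntervalIntegrable (f ω p q) MeasureTheory.volume a b :=
    fun a b => hc.intervalIntegrable a b
  have nonpos : ∀ a b, a ≤ b → (∀ x ∈ Set.Icc a b, f ω p q x ≤ 0) →
      ∫ s in a..b, f ω p q s ≤ 0 := by
    intro a b hab hx
    have := intervalIntegral.integral_nonneg (f := fun x => -f ω p q x) (μ := MeasureTheory.volume)
      hab (fun x h => by linarith [hx x h])
    rw [intervalIntegral.integral_neg] at this
    linarith
  obtain ⟨S, hS⟩ : ∃ S : Set ℝ, S = Set.Ioi 0 ∩ f ω p q ⁻¹' Set.Ioi 0 := ⟨_, rfl⟩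
  have memS : ∀ x, x ∈ S ↔ 0 < x ∧ 0 < f ω p q x := fun x => by rw [hS]; rfl
  have hSo : IsOpen S := by
    rw [hS]; exact isOpen_Ioi.inter (isOpen_Ioi.preimage hc)
  have hnotS : ∀ x, 0 < x → x ∉ S → f ω p q x ≤ 0 := by
    intro x hx hxS
    by_contra hcon
    exact hxS ((memS x).2 ⟨hx, not_le.1 hcon⟩)
  have hSne : S.Nonempty := by
    by_contra hcon
    rw [Set.not_nonempty_iff_eq_empty] at hcon
    have := nonpos 0 u0 hu0.le (by
      intro x hx
      rcases hx.1.eq_or_lt with h | h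
      · rw [← h, hf0]
      · exact hnotS x h (by rw [hcon]; simp))
    linarith
  obtain ⟨δ, hδ⟩ : ∃ δ, δ = ω ^ (1 / (p - 1)) := ⟨_, rfl⟩
  have hδ0 : 0 < δ := by rw [hδ]; exact Real.rpow_pos_of_pos hω _
  have hsm : ∀ x, 0 < x → x < δ → f ω p q x < 0 := fun x hx hxd =>
    f_neg_small hω hp hx (by rwa [← hδ])
  have hlow : ∀ x ∈ S, δ ≤ x := by
    intro x hx
    by_contra hcon
    have := hsm x ((memS x).1 hx).1 (not_le.1 hcon)
    linarith [((memS x).1 hx).2]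
  have hup : ∀ x ∈ S, x ≤ 1 := by
    intro x hx
    by_contra hcon
    have := f_neg_large (p := p) hω hpq (not_le.1 hcon).le
    linarith [((memS x).1 hx).2]
  have hbb : BddBelow S := ⟨δ, hlow⟩
  have hba : BddAbove S := ⟨1, hup⟩
  obtain ⟨b, hb⟩ : ∃ b, b = sInf S := ⟨_, rfl⟩
  obtain ⟨c, hcc⟩ : ∃ c, c = sSup S := ⟨_, rfl⟩
  have hbδ : δ ≤ b := by rw [hb]; exact le_csInf hSne hlow
  have hb0 : 0 < b := by linarith
  have hbS : b ∉ S := by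
    intro hmem
    obtain ⟨ε, hε, hball⟩ := Metric.isOpen_iff.1 hSo b hmem
    have : b - ε / 2 ∈ S := hball (by
      rw [Metric.mem_ball, Real.dist_eq, abs_lt]; constructor <;> linarith)
    have := csInf_le hbb this
    linarith
  have hcS : c ∉ S := by
    intro hmem
    obtain ⟨ε, hε, hball⟩ := Metric.isOpen_iff.1 hSo c hmem
    have : c + ε / 2 ∈ S := hball (by
      rw [Metric.mem_ball, Real.dist_eq, abs_lt]; constructor <;> linarith)
    have := le_csSup hba this
    linarith
  obtain ⟨s, hs⟩ := hSne
  have hbs : b ≤ s := by rw [hb]; exact csInf_le hbb hs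
  have hsc : s < c := by
    refine lt_of_le_of_ne (by rw [hcc]; exact le_csSup hba hs) ?_
    rintro rfl; exact hcS hs
  have hbc : b < c := by linarith
  have hc0 : 0 < c := by linarith
  have hfc : f ω p q c = 0 := by
    apply le_antisymm (hnotS c hc0 hcS)
    have h1 : c ∈ closure S := by rw [hcc]; exact csSup_mem_closure ⟨s, hs⟩ hba
    have h2 : closure S ⊆ {x | 0 ≤ f ω p q x} :=
      closure_minimal (fun x hx => ((memS x).1 hx).2.le) (isClosed_le continuous_const hc)
    exact h2 h1
  have hpos : ∀ x, b < x → x < c → 0 < f ω p q x := by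
    intro x hbx hxc
    rw [hb] at hbx
    rw [hcc] at hxc
    obtain ⟨s1, hs1, h1⟩ := exists_lt_of_csInf_lt ⟨s, hs⟩ hbx
    obtain ⟨s2, hs2, h2⟩ := exists_lt_of_lt_csSup ⟨s, hs⟩ hxc
    exact f_ordConn hp hpq ((memS s1).1 hs1).1 h1.le h2.le ((memS s1).1 hs1).2 ((memS s2).1 hs2).2
  have hleb : ∀ x, 0 < x → x ≤ b → f ω p q x ≤ 0 := by
    intro x hx hxb
    apply hnotS x hx
    intro hmem
    rcases hxb.eq_or_lt with rfl | h
    · exact hbS hmem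
    · have := csInf_le hbb hmem
      linarith
  have hFneg : ∀ x, 0 < x → x ≤ b → ∫ s in (0:ℝ)..x, f ω p q s < 0 := by
    intro x hx hxb
    obtain ⟨y, hy0, hyx, hyd⟩ : ∃ y, 0 < y ∧ y ≤ x ∧ y ≤ δ :=
      ⟨min x δ, lt_min hx hδ0, min_le_left _ _, min_le_right _ _⟩
    have h1 := intervalIntegral.intervalIntegral_pos_of_pos_on (f := fun x => -f ω p q x)
      (hii 0 y).neg (fun t ht => by linarith [hsm t ht.1 (ht.2.trans_le hyd)]) hy0
    rw [intervalIntegral.integral_neg] at h1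
    have h2 := nonpos y x hyx (fun t ht => hleb t (hy0.trans_le ht.1) (ht.2.trans hxb))
    have h3 := intervalIntegral.integral_add_adjacent_intervals (hii 0 y) (hii y x)
    linarith
  refine ⟨b, c, hb0, hbc, hfc, hpos, hFneg, ?_⟩
  have hadd := intervalIntegral.integral_add_adjacent_intervals (hii 0 u0) (hii u0 c)
  rcases le_total u0 c with h | h
  · have hbu : b < u0 := by
      by_contra hcon
      linarith [hFneg u0 hu0 (not_lt.1 hcon)]
    have := intervalIntegral.integral_nonneg (f := f ω p q) (μ := MeasureTheory.volume) h
      (fun x hx => by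
        rcases hx.2.eq_or_lt with h' | h'
        · rw [h', hfc]
        · exact (hpos x (by linarith [hx.1]) h').le)
    linarith
  · have h1 := nonpos c u0 h (fun x hx => by
      rcases hx.1.eq_or_lt with h' | h'
      · rw [← h', hfc]
      · apply hnotS x (by linarith)
        intro hmem
        have := le_csSup hba hmem
        linarith)
    rw [intervalIntegral.integral_symm] at h1
    linarith

lemma f_lip (hp : 1 < p) (hpq : p < q) (c : ℝ) : ∃ L : ℝ, 0 ≤ L ∧ ∀ x ∈ Set.Icc 0 c,
    ∀ y ∈ Set.Icc 0 c, |f ω p q x - f ω p q y| ≤ L * |x - y| := by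
  obtain ⟨K, hK⟩ := (f_contDiff (ω := ω) hp hpq).contDiffOn.exists_lipschitzOnWith one_ne_zero
    (convex_Icc 0 c) isCompact_Icc
  refine ⟨K, K.2, fun x hx y hy => ?_⟩
  simpa [Real.dist_eq] using hK.dist_le_mul x hx y hy

lemma F_deriv (hp : 1 < p) (hpq : p < q) (x : ℝ) :
    HasDerivAt (fun x => ∫ s in (0:ℝ)..x, f ω p q s) (f ω p q x) x := by
  have hc := f_cont (ω := ω) hp hpq
  exact intervalIntegral.integral_hasDerivAt_right (hc.intervalIntegrable _ _)
    (hc.stronglyMeasurableAtFilter _ _) hc.continuousAt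

lemma sufficiency (hω : 0 < ω) (hp : 1 < p) (hpq : p < q) (n : ℕ) (hn : 1 ≤ n)
    (hex : ∃ u : ℝ, 0 < u ∧ 0 < ∫ s in (0:ℝ)..u, f ω p q s) :
    ∃ u : ℝ → ℝ, IsPositiveSolution n (f ω p q) u := by
  obtain ⟨b, c, hb0, hbc, hfc, hpos, hFneg, hFc⟩ := f_shape hω hp hpq hex
  obtain ⟨L, hL, hlip⟩ := f_lip (ω := ω) hp hpq c
  have hc := f_cont (ω := ω) hp hpq
  have hf0 := f_zero (ω := ω) hp hpq
  have hc0 : 0 < c := hb0.trans hbc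
  obtain ⟨cl, hcl⟩ : ∃ cl : ℝ → ℝ, cl = fun x => max 0 (min x c) := ⟨_, rfl⟩
  have hclm : ∀ x, cl x ∈ Set.Icc 0 c := fun x => by
    rw [hcl]; exact ⟨le_max_left _ _, max_le hc0.le (min_le_right _ _)⟩
  have hclc : Continuous cl := by rw [hcl]; fun_prop
  have hcl0 : ∀ x, x ≤ 0 → cl x = 0 := fun x hx => by
    rw [hcl]; exact max_eq_left ((min_le_left _ _).trans hx)
  have hcl1 : ∀ x, 0 ≤ x → x ≤ c → cl x = x := fun x hx hxc => by
    rw [hcl]; simp [hx, hxc]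
  have hcl2 : ∀ x, c ≤ x → cl x = c := fun x hx => by
    rw [hcl]; simp [hx, hc0.le]
  have hcld : ∀ x y, |cl x - cl y| ≤ |x - y| := fun x y => by
    rw [hcl]
    have h1 := abs_max_sub_max_le_max 0 (min x c) 0 (min y c)
    have h2 := abs_min_sub_min_le_max x c y c
    simp only [sub_self, abs_zero] at h1 h2
    rw [max_eq_right (abs_nonneg (min x c - min y c))] at h1
    rw [max_eq_left (abs_nonneg (x - y))] at h2
    exact h1.trans h2
  obtain ⟨h, hh⟩ : ∃ h : ℝ → ℝ, h = fun x => f ω p q (cl x) := ⟨_, rfl⟩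
  have hhx : ∀ x, h x = f ω p q (cl x) := fun x => by rw [hh]
  have hhc : Continuous h := by rw [hh]; exact hc.comp hclc
  obtain ⟨H, hH⟩ : ∃ H : ℝ → ℝ, H = fun x => ∫ s in (0:ℝ)..x, h s := ⟨_, rfl⟩
  have hHx : ∀ x, H x = ∫ s in (0:ℝ)..x, h s := fun x => by rw [hH]
  have hHd : ∀ x, HasDerivAt H (h x) x := fun x => by
    rw [hH]
    exact intervalIntegral.integral_hasDerivAt_right (hhc.intervalIntegrable _ _)
      (hhc.stronglyMeasurableAtFilter _ _) hhc.continuousAt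
  have hHcont : Continuous H := continuous_iff_continuousAt.2 fun x => (hHd x).continuousAt
  have hhf : ∀ x, 0 ≤ x → x ≤ c → h x = f ω p q x := fun x h1 h2 => by rw [hhx, hcl1 x h1 h2]
  have hHF : ∀ x, 0 ≤ x → x ≤ c → H x = ∫ s in (0:ℝ)..x, f ω p q s := by
    intro x hx hxc
    rw [hHx]
    apply intervalIntegral.integral_congr
    intro s hs
    rw [Set.uIcc_of_le hx] at hs
    exact hhf s hs.1 (hs.2.trans hxc)
  have hz : ∀ x, x ≤ 0 → h x = 0 := fun x hx => by rw [hhx, hcl0 x hx, hf0]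
  have hHz : ∀ x, x ≤ 0 → H x = 0 := by
    intro x hx
    have : ∫ s in (0:ℝ)..x, h s = ∫ s in (0:ℝ)..x, (0:ℝ) := by
      apply intervalIntegral.integral_congr
      intro s hs
      rw [Set.uIcc_of_ge hx] at hs
      exact hz s hs.2
    rw [hHx, this]; simp
  have hHlarge : ∀ x, c ≤ x → H x = H c := by
    intro x hx
    have : ∫ s in c..x, h s = ∫ s in c..x, (0:ℝ) := by
      apply intervalIntegral.integral_congr
      intro s hs
      rw [Set.uIcc_of_le hx] at hs
      change h s = 0
      rw [hhx, hcl2 s hs.1, hfc]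
    rw [hHx, hHx, ← intervalIntegral.integral_add_adjacent_intervals
      (hhc.intervalIntegrable 0 c) (hhc.intervalIntegrable c x), this]
    simp
  obtain ⟨K, hK⟩ : ∃ K, ∀ x, |H x| ≤ K := by
    obtain ⟨K, hK⟩ := (isCompact_Icc (a := (0:ℝ)) (b := c)).exists_bound_of_continuousOn
      hHcont.continuousOn
    refine ⟨K, fun x => ?_⟩
    rcases le_total x 0 with h1 | h1
    · rw [hHz x h1, ← hHz 0 le_rfl]
      exact hK 0 ⟨le_rfl, hc0.le⟩
    · rcases le_total x c with h2 | h2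
      · exact hK x ⟨h1, h2⟩
      · rw [hHlarge x h2]
        exact hK c ⟨hc0.le, le_rfl⟩
  have hhlip : ∀ x y, |h x - h y| ≤ L * |x - y| := fun x y => by
    rw [hhx, hhx]
    exact (hlip _ (hclm x) _ (hclm y)).trans (mul_le_mul_of_nonneg_left (hcld x y) hL)
  have hhb : ∀ x, |h x| ≤ L * c := fun x => by
    have h1 := hlip _ (hclm x) 0 ⟨le_rfl, hc0.le⟩
    rw [hf0, sub_zero, sub_zero, abs_of_nonneg (hclm x).1] at h1
    rw [hhx]
    exact h1.trans (mul_le_mul_of_nonneg_left (hclm x).2 hL)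
  obtain ⟨u, v, w, T, hw, hu, hlim⟩ := shooting (n - 1) h H L (L * c) K b c hL hhlip hhb hhc hHd hK
    hz hHz hb0 hbc (by rw [hhf c hc0.le le_rfl, hfc]) (by rwa [hHF c hc0.le le_rfl])
    (fun x h1 h2 => by rw [hhf x (hb0.trans h1).le h2.le]; exact hpos x h1 h2)
    (fun x h1 h2 => by rw [hHF x h1.le (h2.trans hbc.le)]; exact hFneg x h1 h2)
  have hdu : deriv u = v := funext fun r => (T.du r).deriv
  have hdv : deriv v = w := funext fun r => (T.dv r).deriv
  have hC2 : ContDiff ℝ 2 u := by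
    have h1 : ContDiff ℝ 1 v := by
      rw [contDiff_one_iff_deriv, hdv]
      exact ⟨fun r => (T.dv r).differentiableAt, hw⟩
    have : ContDiff ℝ (1 + 1) u := by
      rw [contDiff_succ_iff_deriv, hdu]
      exact ⟨fun r => (T.du r).differentiableAt, by simp, h1⟩
    simpa [one_add_one_eq_two] using this
  have hdw : ∀ r ∈ Set.Ici (0:ℝ), derivWithin u (Set.Ici 0) r = v r := fun r hr =>
    (T.du r).hasDerivWithinAt.derivWithin (uniqueDiffOn_Ici 0 r hr)
  refine ⟨u, hC2.contDiffOn, fun r hr => (hu r hr).1, ?_, ?_, hlim⟩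
  · intro r hr
    have hr' : r ∈ Set.Ici (0:ℝ) := hr.le
    have h2 : iteratedDerivWithin 2 u (Set.Ici 0) r = w r := by
      rw [iteratedDerivWithin_succ]
      have : derivWithin (iteratedDerivWithin 1 u (Set.Ici 0)) (Set.Ici 0) r =
          derivWithin v (Set.Ici 0) r := by
        apply derivWithin_congr
        · intro s hs
          rw [iteratedDerivWithin_one]
          exact hdw s hs
        · rw [iteratedDerivWithin_one]
          exact hdw r hr'
      rw [this]
      exact (T.dv r).hasDerivWithinAt.derivWithin (uniqueDiffOn_Ici 0 r hr')
    rw [h2, hdw r hr', T.eqn r hr, hhf _ (hu r hr.le).1.le (hu r hr.le).2.le,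
      Nat.cast_sub hn]
    push_cast
    ring
  · rw [hdw 0 (Set.mem_Ici.2 le_rfl), T.v0]

lemma necessity (hp : 1 < p) (hpq : p < q) (n : ℕ) (hn : 1 ≤ n) (u : ℝ → ℝ)
    (hu : IsPositiveSolution n (f ω p q) u) :
    ∃ u : ℝ, 0 < u ∧ 0 < ∫ s in (0:ℝ)..u, f ω p q s := by
  obtain ⟨hC, hpos, heq, hv0, hlim⟩ := hu
  by_contra hcon
  push Not at hcon
  obtain ⟨F, hF⟩ : ∃ F : ℝ → ℝ, F = fun x => ∫ s in (0:ℝ)..x, f ω p q s := ⟨_, rfl⟩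
  have hFd : ∀ x, HasDerivAt F (f ω p q x) x := fun x => by rw [hF]; exact F_deriv hp hpq x
  have hF0 : F 0 = 0 := by rw [hF]; simp
  have hFle : ∀ x, 0 < x → F x ≤ 0 := fun x hx => by rw [hF]; exact hcon x hx
  have hFc : Continuous F := continuous_iff_continuousAt.2 fun x => (hFd x).continuousAt
  obtain ⟨v, hv⟩ : ∃ v, v = derivWithin u (Set.Ici 0) := ⟨_, rfl⟩
  have hun := uniqueDiffOn_Ici (0:ℝ)
  have hdu : ∀ r, 0 ≤ r → HasDerivWithinAt u (v r) (Set.Ici 0) r := fun r hr => by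
    rw [hv]
    exact ((hC.differentiableOn two_ne_zero) r hr).hasDerivWithinAt
  have hvC : ContDiffOn ℝ 1 v (Set.Ici 0) := by
    rw [hv]
    exact hC.derivWithin hun (by norm_num [one_add_one_eq_two])
  have hw : ∀ r, 0 < r → HasDerivAt v (-(((n:ℝ) - 1) / r * v r) - f ω p q (u r)) r := by
    intro r hr
    have h1 := ((hvC.differentiableOn one_ne_zero) r hr.le).hasDerivWithinAt.hasDerivAt
      (Ici_mem_nhds hr)
    have h2 := heq r hr
    have h3 : iteratedDerivWithin 1 u (Set.Ici 0) = derivWithin u (Set.Ici 0) := by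
      ext s; rw [iteratedDerivWithin_one]
    rw [iteratedDerivWithin_succ, h3] at h2
    rw [← hv] at h2
    refine h1.congr_deriv ?_
    linarith
  have hdu' : ∀ r, 0 < r → HasDerivAt u (v r) r := fun r hr =>
    (hdu r hr.le).hasDerivAt (Ici_mem_nhds hr)
  have hvc : ContinuousOn v (Set.Ici 0) := hvC.continuousOn
  have huc : ContinuousOn u (Set.Ici 0) := hC.continuousOn
  have hE : AntitoneOn (fun r => v r ^ 2 / 2 + F (u r)) (Set.Ici 0) := by
    have hd : ∀ r, 0 < r → HasDerivAt (fun r => v r ^ 2 / 2 + F (u r))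
        (-(((n:ℝ) - 1) / r * v r ^ 2)) r := by
      intro r hr
      have h1 := ((hw r hr).pow 2).div_const 2
      have h2 := (hFd (u r)).comp r (hdu' r hr)
      refine (h1.add h2).congr_deriv ?_
      simp; ring
    apply antitoneOn_of_deriv_nonpos (convex_Ici 0)
    · exact ((hvc.pow 2).div_const 2).add (hFc.comp_continuousOn huc)
    · intro r hr
      rw [interior_Ici] at hr
      exact (hd r hr).differentiableAt.differentiableWithinAt
    · intro r hr
      rw [interior_Ici] at hr
      have hr : 0 < r := hr
      rw [(hd r hr).deriv]
      have hn1 : (0:ℝ) ≤ n - 1 := by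
        have : (1:ℝ) ≤ n := by exact_mod_cast hn
        linarith
      have : 0 ≤ ((n:ℝ) - 1) / r * v r ^ 2 := by positivity
      linarith
  have hE0 : ∀ r, 0 ≤ r → 0 ≤ v r ^ 2 / 2 + F (u r) := by
    intro r hr
    have ht : Tendsto (fun s => F (u s)) atTop (nhds 0) := by
      have := (hFc.tendsto 0).comp hlim
      rwa [hF0] at this
    apply le_of_tendsto ht
    filter_upwards [eventually_ge_atTop r] with s hs
    have := hE (Set.mem_Ici.2 hr) (Set.mem_Ici.2 (hr.trans hs)) hs
    simp only at this
    nlinarith [sq_nonneg (v s)]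
  have hv00 : v 0 = 0 := by rw [hv]; exact hv0
  have hu0 := hpos 0 le_rfl
  have hFu0 : F (u 0) = 0 := by
    have := hE0 0 le_rfl
    rw [hv00] at this
    norm_num at this
    exact le_antisymm (hFle _ hu0) this
  have hfu0 : f ω p q (u 0) = 0 := by
    have hmax : IsLocalMax F (u 0) := by
      filter_upwards [Ioi_mem_nhds hu0] with x hx
      rw [hFu0]; exact hFle x hx
    exact hmax.hasDerivAt_eq_zero (hFd (u 0))
  have hEle : ∀ r, 0 ≤ r → v r ^ 2 / 2 + F (u r) ≤ 0 := by
    intro r hr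
    have := hE (Set.mem_Ici.2 le_rfl) (Set.mem_Ici.2 hr) hr
    simp only [hv00, hFu0] at this
    norm_num at this
    exact this
  have hconst : ∀ R, 0 ≤ R → u R = u 0 := by
    intro R hR
    obtain ⟨B, hB⟩ := (isCompact_Icc (a := (0:ℝ)) (b := R)).exists_bound_of_continuousOn
      (huc.mono Set.Icc_subset_Ici_self)
    have hBm : ∀ r ∈ Set.Icc 0 R, u r ∈ Set.Icc 0 B := fun r hr =>
      ⟨(hpos r hr.1).le, (le_abs_self _).trans (hB r hr)⟩
    have h0m := hBm 0 ⟨le_rfl, hR⟩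
    obtain ⟨L, hL, hlip⟩ := f_lip (ω := ω) hp hpq B
    have hFq : ∀ x ∈ Set.Icc 0 B, |F x| ≤ L * |x - u 0| ^ 2 := by
      intro x hx
      have hsub : Set.uIcc (u 0) x ⊆ Set.Icc 0 B := Set.uIcc_subset_Icc h0m hx
      have := (convex_uIcc (u 0) x).norm_image_sub_le_of_norm_hasDerivWithin_le
        (f := F) (f' := f ω p q) (C := L * |x - u 0|) (fun y _ => (hFd y).hasDerivWithinAt)
        (fun y hy => by
          have h1 := hlip y (hsub hy) (u 0) h0m
          rw [hfu0, sub_zero] at h1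
          refine h1.trans (mul_le_mul_of_nonneg_left ?_ hL)
          exact Set.abs_sub_left_of_mem_uIcc hy)
        Set.left_mem_uIcc Set.right_mem_uIcc
      rw [hFu0, sub_zero, Real.norm_eq_abs, Real.norm_eq_abs] at this
      linarith
    have := eq_zero_of_abs_deriv_le_mul_abs_self_of_eq_zero_right (f := fun r => u r - u 0)
      (f' := v) (K := Real.sqrt (2 * L)) (a := 0) (b := R)
      ((huc.mono Set.Icc_subset_Ici_self).sub continuousOn_const)
      (fun r hr => ((hdu r hr.1).mono (Set.Ici_subset_Ici.2 hr.1)).sub_const _)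
      (by simp)
      (fun r hr => by
        rw [Real.norm_eq_abs, Real.norm_eq_abs]
        have hrm := hBm r ⟨hr.1, hr.2.le⟩
        have h1 := hFq _ hrm
        have h2 := hEle r hr.1
        have h3 := (abs_le.1 h1).1
        apply abs_le_of_sq_le_sq _ (by positivity)
        rw [mul_pow, Real.sq_sqrt (by positivity)]
        nlinarith)
      R ⟨hR, le_rfl⟩
    linarith
  have hl2 : Tendsto u atTop (nhds (u 0)) := by
    refine tendsto_const_nhds.congr' ?_
    filter_upwards [eventually_ge_atTop 0] with r hr
    exact (hconst r hr).symm
  have := tendsto_nhds_unique hlim hl2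
  linarith

end shape

theorem existence_iff_F_pos (ω p q : ℝ) (hω : 0 < ω) (hp : 1 < p) (hpq : p < q)
    (n : ℕ) (hn : 1 ≤ n) :
    (∃ u : ℝ → ℝ, IsPositiveSolution n (f ω p q) u) ↔
      ∃ u : ℝ, 0 < u ∧ 0 < ∫ s in (0:ℝ)..u, f ω p q s :=
  ⟨fun ⟨u, hu⟩ => necessity hp hpq n hn u hu, sufficiency hω hp hpq n hn⟩
end

section
/- Let ω > 0 and q > p > 1 be real numbers, let n ≥ 1 be a natural number, and let f(u) = -ω·u + u^p - u^q. Suppose that f̃(u) := (f'(u) + u·f''(u))·f(u) - u·f'(u)² < 0 for all u > 0. Then the boundary value problem u''(r) + ((n-1)/r)·u'(r) + f(u(r)) = 0 for r > 0, u'(0) = 0, lim_{r→∞} u(r) = 0 has at most one positive solution. -/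
open Filter

/-- Its derivative for `u > 0`: `f'(u) = -ω + p·u^(p-1) - q·u^(q-1)`. -/
noncomputable def f' (ω p q u : ℝ) : ℝ := -ω + p * u ^ (p - 1) - q * u ^ (q - 1)

/-- Its second derivative for `u > 0`:
`f''(u) = p(p-1)·u^(p-2) - q(q-1)·u^(q-2)`. -/
noncomputable def f'' (p q u : ℝ) : ℝ :=
  p * (p - 1) * u ^ (p - 2) - q * (q - 1) * u ^ (q - 2)

section PartA

/-- Structural facts on the nonlinearity `u * h u` with primitive `H`. -/
structure NL (h dh H : ℝ → ℝ) (ω b m c : ℝ) : Prop where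
  hω : 0 < ω
  hb : 0 < b
  hbm : b < m
  hmc : m < c
  der : ∀ u, 0 < u → HasDerivAt h (dh u) u
  lip : ∀ M, 0 < M → ∃ L, 0 ≤ L ∧ ∀ x y, 0 < x → x ≤ M → 0 < y → y ≤ M →
    |x * h x - y * h y| ≤ L * |x - y|
  neg1 : ∀ u, 0 < u → u < b → h u < 0
  zb : h b = 0
  pos : ∀ u, b < u → u < c → 0 < h u
  zc : h c = 0
  neg2 : ∀ u, c < u → h u < 0
  dpos : ∀ u, 0 < u → u < m → 0 < dh u
  dneg : ∀ u, m ≤ u → dh u ≤ 0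
  kap : StrictAntiOn (fun u => u * dh u / h u) (Set.Ioo b c)
  derH : ∀ u, 0 < u → HasDerivAt H (u * h u) u
  H0 : Tendsto H (nhdsWithin 0 (Set.Ioi 0)) (nhds 0)
  h0 : Tendsto h (nhdsWithin 0 (Set.Ioi 0)) (nhds (-ω))
  V : ∀ u, 0 < u → u ≤ m → 0 ≤ u ^ 2 * h u / 2 - H u

/-- A positive decaying solution, with derivative `v`, in dimension `k + 1`. -/
structure Sol (k : ℕ) (h : ℝ → ℝ) (u v : ℝ → ℝ) : Prop where
  cu : ContinuousOn u (Set.Ici 0)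
  cv : ContinuousOn v (Set.Ici 0)
  pos : ∀ r, 0 ≤ r → 0 < u r
  du : ∀ r, 0 < r → HasDerivAt u (v r) r
  dv : ∀ r, 0 < r → HasDerivAt v (-(k / r) * v r - u r * h (u r)) r
  v0 : v 0 = 0
  lim : Tendsto u atTop (nhds 0)
  lim0 : Tendsto (fun r => v r / r) (nhdsWithin 0 (Set.Ioi 0)) (nhds (-(u 0 * h (u 0)) / (k + 1)))

lemma hda {f g : ℝ → ℝ} {a b x : ℝ} (hf : HasDerivAt f a x) (h1 : ∀ y, g y = f y)
    (h2 : b = a) : HasDerivAt g b x := by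
  have : g = f := funext h1
  rw [this, h2]; exact hf

lemma right_gt {g : ℝ → ℝ} {d x : ℝ} (hg : HasDerivAt g d x) (hd : 0 < d) :
    ∀ᶠ s in nhdsWithin x (Set.Ioi x), g x < g s := by
  have h1 := (hasDerivAt_iff_tendsto_slope.1 hg).eventually (lt_mem_nhds hd)
  have h2 : ∀ᶠ s in nhdsWithin x (Set.Ioi x), 0 < slope g x s :=
    h1.filter_mono (nhdsWithin_mono _ (fun y hy => ne_of_gt hy))
  filter_upwards [h2, self_mem_nhdsWithin] with s hs hs2
  have hs2 : x < s := hs2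
  rw [slope_def_field, div_pos_iff_of_pos_right (by linarith)] at hs
  linarith

lemma left_lt {g : ℝ → ℝ} {d x : ℝ} (hg : HasDerivAt g d x) (hd : 0 < d) :
    ∀ᶠ s in nhdsWithin x (Set.Iio x), g s < g x := by
  have h1 := (hasDerivAt_iff_tendsto_slope.1 hg).eventually (lt_mem_nhds hd)
  have h2 : ∀ᶠ s in nhdsWithin x (Set.Iio x), 0 < slope g x s :=
    h1.filter_mono (nhdsWithin_mono _ (fun y hy => ne_of_lt hy))
  filter_upwards [h2, self_mem_nhdsWithin] with s hs hs2
  have hs2 : s < x := hs2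
  rw [slope_def_field] at hs
  have := (div_pos_iff.1 hs)
  rcases this with h | h <;> linarith

/-- barrier lemma, forward -/
lemma stay_nonneg {D : ℝ → ℝ} {a b : ℝ} (hD : ContinuousOn D (Set.Icc a b))
    (ha : 0 ≤ D a)
    (hz : ∀ m, a ≤ m → m < b → (∀ s, a ≤ s → s ≤ m → 0 ≤ D s) → D m = 0 →
      ∃ d, 0 < d ∧ HasDerivAt D d m) :
    ∀ s, a ≤ s → s ≤ b → 0 ≤ D s := by
  intro r har hrb
  by_contra hr
  push Not at hr
  set S := {s | a ≤ s ∧ s ≤ b ∧ D s < 0} with hS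
  have hrS : r ∈ S := ⟨har, hrb, hr⟩
  have hbd : BddBelow S := ⟨a, fun s hs => hs.1⟩
  set m := sInf S with hm
  have ham : a ≤ m := le_csInf ⟨r, hrS⟩ (fun s hs => hs.1)
  have hmr : m ≤ r := csInf_le hbd hrS
  have hlt : ∀ s, a ≤ s → s < m → 0 ≤ D s := by
    intro s hs hsm
    by_contra hc
    push Not at hc
    have : m ≤ s := csInf_le hbd ⟨hs, by linarith, hc⟩
    linarith
  have hcm : ContinuousWithinAt D (Set.Icc a b) m := hD m ⟨ham, by linarith⟩
  have hmge : 0 ≤ D m := by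
    rcases eq_or_lt_of_le ham with h | h
    · rw [← h]; exact ha
    · have hc2 : Tendsto D (nhdsWithin m (Set.Ico a m)) (nhds (D m)) :=
        (hcm.mono (fun y hy => ⟨hy.1, by linarith [hy.2]⟩))
      have hne : (nhdsWithin m (Set.Ico a m)).NeBot := by
        rw [nhdsWithin_Ico_eq_nhdsLT h]; infer_instance
      refine ge_of_tendsto hc2 ?_
      filter_upwards [self_mem_nhdsWithin] with s hs
      exact hlt s hs.1 hs.2
  have hall : ∀ s, a ≤ s → s ≤ m → 0 ≤ D s := by
    intro s h1 h2
    rcases eq_or_lt_of_le h2 with h | h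
    · rw [h]; exact hmge
    · exact hlt s h1 h
  have hmltr : m < r := by
    rcases eq_or_lt_of_le hmr with h | h
    · rw [← h] at hr; linarith
    · exact h
  have key : ∀ᶠ s in nhdsWithin m (Set.Ioi m), 0 ≤ D s := by
    rcases eq_or_lt_of_le hmge with h | h
    · obtain ⟨d, hd, hder⟩ := hz m ham (by linarith) hall h.symm
      filter_upwards [right_gt hder hd] with s hs
      linarith
    · have h3 : ∀ᶠ s in nhdsWithin m (Set.Icc a b), 0 < D s :=
        hcm.eventually (lt_mem_nhds h)
      have h4 : ∀ᶠ s in nhdsWithin m (Set.Ioo m b), 0 < D s :=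
        h3.filter_mono (nhdsWithin_mono _
          (Set.Ioo_subset_Icc_self.trans (Set.Icc_subset_Icc_left ham)))
      rw [nhdsWithin_Ioo_eq_nhdsGT (by linarith)] at h4
      filter_upwards [h4] with s hs using hs.le
  obtain ⟨e, he, hee⟩ := (mem_nhdsGT_iff_exists_Ioo_subset).1 key
  have he : m < e := he
  obtain ⟨s, hsS, hse⟩ := exists_lt_of_csInf_lt (Set.nonempty_of_mem hrS) (show sInf S < e from he)
  have hms : m ≤ s := csInf_le hbd hsS
  have hne : m ≠ s := by
    rintro h
    have := hsS.2.2
    rw [← h] at this; linarith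
  have : 0 ≤ D s := hee (Set.mem_Ioo.2 ⟨lt_of_le_of_ne hms hne, hse⟩)
  have h5 := hsS.2.2
  linarith

/-- monotonicity from derivative on an interval, closed form -/
lemma mono_of_deriv {g g' : ℝ → ℝ} {a b : ℝ} (hc : ContinuousOn g (Set.Icc a b))
    (hd : ∀ x, a < x → x < b → HasDerivAt g (g' x) x) (hn : ∀ x, a < x → x < b → 0 ≤ g' x)
    (hab : a ≤ b) : g a ≤ g b := by
  have : MonotoneOn g (Set.Icc a b) := by
    apply monotoneOn_of_deriv_nonneg (convex_Icc a b) hc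
    · intro x hx
      rw [interior_Icc] at hx
      exact (hd x hx.1 hx.2).differentiableAt.differentiableWithinAt
    · intro x hx
      rw [interior_Icc] at hx
      rw [(hd x hx.1 hx.2).deriv]
      exact hn x hx.1 hx.2
  exact this ⟨le_refl _, hab⟩ ⟨hab, le_refl _⟩ hab

lemma smono_of_deriv {g g' : ℝ → ℝ} {a b : ℝ} (hc : ContinuousOn g (Set.Icc a b))
    (hd : ∀ x, a < x → x < b → HasDerivAt g (g' x) x) (hn : ∀ x, a < x → x < b → 0 < g' x)
    (hab : a < b) : g a < g b := by
  have : StrictMonoOn g (Set.Icc a b) := by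
    apply strictMonoOn_of_deriv_pos (convex_Icc a b) hc
    · intro x hx
      rw [interior_Icc] at hx
      rw [(hd x hx.1 hx.2).deriv]
      exact hn x hx.1 hx.2
  exact this ⟨le_refl _, hab.le⟩ ⟨hab.le, le_refl _⟩ hab

/-- inverse matching: `g (σ r) = φ r` -/
lemma matching {g g' φ φ' : ℝ → ℝ} {I : Set ℝ} (hI : IsOpen I)
    (hg : ∀ x, 0 < x → HasDerivAt g (g' x) x) (hg' : ∀ x, 0 < x → 0 < g' x)
    (hφ : ∀ r ∈ I, HasDerivAt φ (φ' r) r)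
    (hr : ∀ r ∈ I, ∃ s, 0 < s ∧ g s = φ r) :
    ∃ σ : ℝ → ℝ, ∀ r ∈ I, 0 < σ r ∧ g (σ r) = φ r ∧ HasDerivAt σ (φ' r / g' (σ r)) r := by
  classical
  have hmono : StrictMonoOn g (Set.Ioi 0) := by
    apply strictMonoOn_of_deriv_pos (convex_Ioi 0)
    · intro x hx
      exact (hg x hx).continuousAt.continuousWithinAt
    · intro x hx
      rw [interior_Ioi] at hx
      rw [(hg x hx).deriv]; exact hg' x hx
  choose! σ hσ1 hσ2 using hr
  refine ⟨σ, fun r hrI => ⟨hσ1 r hrI, hσ2 r hrI, ?_⟩⟩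
  have hIn : ∀ᶠ s in nhds r, s ∈ I := hI.mem_nhds hrI
  have hne : g' (σ r) ≠ 0 := ne_of_gt (hg' _ (hσ1 r hrI))
  -- use a left inverse of g
  have hopen : ∃ ψ : ℝ → ℝ, ContinuousAt ψ (g (σ r)) ∧ (∀ᶠ y in nhds (g (σ r)), g (ψ y) = y)
      ∧ ψ (g (σ r)) = σ r ∧ (∀ᶠ s in nhds r, σ s = ψ (φ s)) := by
    have hsurj : ∀ᶠ y in nhds (g (σ r)), ∃ x, 0 < x ∧ g x = y := by
      have h0 := hσ1 r hrI
      have l1 : g (σ r / 2) < g (σ r) := hmono (by simpa using h0) h0 (by linarith)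
      have l2 : g (σ r) < g (2 * σ r) := hmono h0 (by simpa using h0) (by linarith)
      filter_upwards [Ioo_mem_nhds l1 l2] with y hy
      have hcont : ContinuousOn g (Set.Icc (σ r / 2) (2 * σ r)) := fun x hx =>
        (hg x (by linarith [hx.1])).continuousAt.continuousWithinAt
      obtain ⟨x, hx, hxy⟩ := intermediate_value_Icc (by linarith) hcont ⟨hy.1.le, hy.2.le⟩
      exact ⟨x, by linarith [hx.1], hxy⟩
    set ψ : ℝ → ℝ := fun y => if hy : ∃ x, 0 < x ∧ g x = y then hy.choose else 0 with hψ
    have hψ1 : ∀ y, (∃ x, 0 < x ∧ g x = y) → 0 < ψ y ∧ g (ψ y) = y := by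
      intro y hy
      simp only [hψ, dif_pos hy]
      exact hy.choose_spec
    have hψ2 : ∀ x, 0 < x → ψ (g x) = x := by
      intro x hx
      have := hψ1 (g x) ⟨x, hx, rfl⟩
      exact hmono.injOn this.1 hx this.2
    refine ⟨ψ, ?_, ?_, hψ2 _ (hσ1 r hrI), ?_⟩
    · rw [ContinuousAt, hψ2 _ (hσ1 r hrI), tendsto_order]
      constructor
      · intro a ha
        set a' := max a (σ r / 2) with ha'
        have hpos : 0 < a' := lt_max_of_lt_right (by linarith [hσ1 r hrI])
        have hlt' : a' < σ r := max_lt ha (by linarith [hσ1 r hrI])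
        filter_upwards [hsurj, lt_mem_nhds (hmono hpos (hσ1 r hrI) hlt')] with y hy hy2
        have h3 := hψ1 y hy
        rw [← h3.2] at hy2
        have := (hmono.lt_iff_lt hpos h3.1).1 hy2
        linarith [le_max_left a (σ r / 2)]
      · intro a ha
        have hpos : 0 < a := by linarith [hσ1 r hrI]
        filter_upwards [hsurj, gt_mem_nhds (hmono (hσ1 r hrI) hpos ha)] with y hy hy2
        have h3 := hψ1 y hy
        rw [← h3.2] at hy2
        exact (hmono.lt_iff_lt h3.1 hpos).1 hy2
    · filter_upwards [hsurj] with y hy using (hψ1 y hy).2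
    · filter_upwards [hIn] with s hs
      rw [← hσ2 s hs, hψ2 _ (hσ1 s hs)]
  obtain ⟨ψ, hψc, hψi, hψv, hψσ⟩ := hopen
  have hψd : HasDerivAt ψ (g' (σ r))⁻¹ (g (σ r)) := by
    apply HasDerivAt.of_local_left_inverse hψc _ hne hψi
    rw [hψv]; exact hg _ (hσ1 r hrI)
  rw [hσ2 r hrI] at hψd
  have := hψd.comp r (hφ r hrI)
  have h2 := this.congr_of_eventuallyEq (f₁ := σ) hψσ
  rw [div_eq_inv_mul]
  exact h2

end PartA

section PartB

section NLfacts
variable {h dh H : ℝ → ℝ} {ω b m c : ℝ}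

lemma NL.Hanti (P : NL h dh H ω b m c) {x y : ℝ} (hx : 0 < x) (hxy : x < y) (hy : y ≤ b) :
    H y < H x := by
  have := smono_of_deriv (g := fun s => - H s) (g' := fun s => -(s * h s)) (a := x) (b := y)
    (fun s hs => (P.derH s (by linarith [hs.1])).continuousAt.neg.continuousWithinAt)
    (fun s h1 h2 => (P.derH s (by linarith)).neg)
    (fun s h1 h2 => by
      have := P.neg1 s (by linarith) (by linarith)
      have h0 : 0 < s := by linarith
      nlinarith) hxy
  linarith

lemma NL.Hneg (P : NL h dh H ω b m c) {x : ℝ} (hx : 0 < x) (hxb : x ≤ b) : H x < 0 := by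
  have h1 : H x < H (x / 2) := P.Hanti (by linarith) (by linarith) hxb
  have h2 : H (x / 2) ≤ 0 := by
    refine ge_of_tendsto P.H0 ?_
    filter_upwards [Ioo_mem_nhdsGT (show (0:ℝ) < x / 2 by linarith)] with s hs
    exact (P.Hanti hs.1 hs.2 (by linarith)).le
  linarith

lemma NL.Hmono (P : NL h dh H ω b m c) {x y : ℝ} (hx : b ≤ x) (hxy : x < y) (hy : y ≤ c) :
    H x < H y := by
  have hb := P.hb
  refine smono_of_deriv (g' := fun s => (s * h s)) 
    (fun s hs => (P.derH s (by linarith [hs.1])).continuousAt.continuousWithinAt)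
    (fun s h1 h2 => (P.derH s (by linarith)))
    (fun s h1 h2 => ?_) hxy
  have := P.pos s (by linarith) (by linarith)
  have h0 : 0 < s := by linarith
  positivity

lemma NL.zero_or (P : NL h dh H ω b m c) {x : ℝ} (hx : 0 < x) (h0 : h x = 0) : x = b ∨ x = c := by
  rcases lt_trichotomy x b with h1 | h1 | h1
  · have := P.neg1 x hx h1; linarith
  · exact Or.inl h1
  · rcases lt_trichotomy x c with h2 | h2 | h2
    · have := P.pos x h1 h2; linarith
    · exact Or.inr h2
    · have := P.neg2 x h2; linarith

end NLfacts

/-- forward uniqueness -/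
lemma forward_unique {k : ℕ} {h u v U V : ℝ → ℝ} {r0 L : ℝ} (hr0 : 0 ≤ r0)
    (cu : ContinuousOn u (Set.Ici r0)) (cv : ContinuousOn v (Set.Ici r0))
    (cU : ContinuousOn U (Set.Ici r0)) (cV : ContinuousOn V (Set.Ici r0))
    (du : ∀ r, r0 < r → HasDerivAt u (v r) r)
    (dv : ∀ r, r0 < r → HasDerivAt v (-(k / r) * v r - u r * h (u r)) r)
    (dU : ∀ r, r0 < r → HasDerivAt U (V r) r)
    (dV : ∀ r, r0 < r → HasDerivAt V (-(k / r) * V r - U r * h (U r)) r)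
    (hL : ∀ r, r0 < r → |u r * h (u r) - U r * h (U r)| ≤ L * |u r - U r|)
    (e1 : u r0 = U r0) (e2 : v r0 = V r0) :
    ∀ r, r0 ≤ r → u r = U r := by
  intro r hr
  rcases eq_or_lt_of_le hr with hr' | hr'
  · rw [← hr']; exact e1
  have key := mono_of_deriv (a := r0) (b := r)
    (g := fun s => - (((v s - V s) ^ 2 + (u s - U s) ^ 2) * Real.exp (-(|L| + 1) * s)))
    (g' := fun s => - ((2 * (v s - V s) * ((-(k / s) * v s - u s * h (u s)) -
      (-(k / s) * V s - U s * h (U s))) + 2 * (u s - U s) * (v s - V s)) * Real.exp (-(|L| + 1) * s)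
      + ((v s - V s) ^ 2 + (u s - U s) ^ 2) * (Real.exp (-(|L| + 1) * s) * (-(|L| + 1)))))
    ?_ ?_ ?_ hr
  · have hE : 0 < Real.exp (-(|L| + 1) * r) := Real.exp_pos _
    simp only [e1, e2, sub_self] at key
    have h2 : ((v r - V r) ^ 2 + (u r - U r) ^ 2) * Real.exp (-(|L| + 1) * r) ≤ 0 := by linarith
    have h3 : ((v r - V r) ^ 2 + (u r - U r) ^ 2) ≤ 0 := by
      by_contra hc
      push Not at hc
      have := mul_pos hc hE
      linarith
    have h4 : (u r - U r) ^ 2 = 0 := by nlinarith [sq_nonneg (v r - V r), sq_nonneg (u r - U r)]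
    have := pow_eq_zero_iff (two_ne_zero) |>.1 h4
    linarith
  · have hs : Set.Icc r0 r ⊆ Set.Ici r0 := fun x hx => hx.1
    refine ContinuousOn.neg (ContinuousOn.mul ?_ (by fun_prop))
    exact (((cv.mono hs).sub (cV.mono hs)).pow 2).add (((cu.mono hs).sub (cU.mono hs)).pow 2)
  · intro s hs1 hs2
    have a1 := (((dv s hs1).sub (dV s hs1)).pow 2).add (((du s hs1).sub (dU s hs1)).pow 2)
    have a2 : HasDerivAt (fun s : ℝ => Real.exp (-(|L| + 1) * s))
        (Real.exp (-(|L| + 1) * s) * (-(|L| + 1))) s := by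
      have := ((hasDerivAt_id s).const_mul (-(|L| + 1))).exp
      simpa using this
    have := (a1.mul a2).neg
    refine hda this (fun y => rfl) ?_
    simp only [Pi.sub_apply, Pi.add_apply, Pi.pow_apply]
    norm_num
  · intro s hs1 hs2
    have hspos : 0 < s := by linarith
    have hE : 0 < Real.exp (-(|L| + 1) * s) := Real.exp_pos _
    have hks : 0 ≤ (k : ℝ) / s := by positivity
    have hl := hL s hs1
    set X := u s * h (u s) - U s * h (U s) with hX
    set w := u s - U s with hw
    set z := v s - V s with hz
    have e : (-(k / s) * v s - u s * h (u s)) - (-(k / s) * V s - U s * h (U s))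
       = -(k / s) * z - X := by rw [hX, hz]; ring
    rw [e]
    have b1 : -(2 * z * X) ≤ |L| * (z ^ 2 + w ^ 2) := by
      have c1 : -(z * X) ≤ |z| * |X| := by
        rw [← abs_mul]; exact neg_le_abs _
      have c2 : |z| * |X| ≤ |z| * (|L| * |w|) := by
        apply mul_le_mul_of_nonneg_left _ (abs_nonneg _)
        exact hl.trans (mul_le_mul_of_nonneg_right (le_abs_self L) (abs_nonneg _))
      have c3 : 2 * (|z| * |w|) ≤ z ^ 2 + w ^ 2 := by
        nlinarith [sq_nonneg (|z| - |w|), sq_abs z, sq_abs w]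
      nlinarith [abs_nonneg L]
    have b2 : 2 * w * z ≤ z ^ 2 + w ^ 2 := by nlinarith [sq_nonneg (w - z)]
    have b3 : 0 ≤ (k / s : ℝ) * z ^ 2 := by positivity
    have : 2 * z * (-(k / s) * z - X) + 2 * w * z - (|L| + 1) * (z ^ 2 + w ^ 2) ≤ 0 := by
      nlinarith
    nlinarith

section Solfacts
variable {h dh H : ℝ → ℝ} {ω b m c : ℝ} {k : ℕ} {u v : ℝ → ℝ}

lemma Sol.posI (S : Sol k h u v) {r : ℝ} (hr : 0 < r) : 0 < u r := S.pos r hr.le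

lemma Sol.cE (S : Sol k h u v) (P : NL h dh H ω b m c) :
    ContinuousOn (fun r => v r ^ 2 / 2 + H (u r)) (Set.Ici 0) := by
  refine ((S.cv.pow 2).div_const 2).add ?_
  intro r hr
  exact (P.derH (u r) (S.pos r hr)).continuousAt.comp_continuousWithinAt (S.cu r hr)

lemma Sol.dE (S : Sol k h u v) (P : NL h dh H ω b m c) {r : ℝ} (hr : 0 < r) :
    HasDerivAt (fun r => v r ^ 2 / 2 + H (u r)) (-(k / r) * v r ^ 2) r := by
  have := (((S.dv r hr).pow 2).div_const 2).add ((P.derH (u r) (S.posI hr)).comp r (S.du r hr))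
  refine hda this (fun y => rfl) ?_
  norm_num
  ring

lemma Sol.Eanti (S : Sol k h u v) (P : NL h dh H ω b m c) {x y : ℝ} (hx : 0 ≤ x) (hxy : x ≤ y) :
    v y ^ 2 / 2 + H (u y) ≤ v x ^ 2 / 2 + H (u x) := by
  have := mono_of_deriv (g := fun r => -(v r ^ 2 / 2 + H (u r))) (g' := fun r => -(-(k / r) * v r ^ 2))
    (a := x) (b := y)
    ((S.cE P).neg.mono (fun s hs => hx.trans hs.1))
    (fun s h1 h2 => (S.dE P (by linarith)).neg)
    (fun s h1 h2 => by
      have : 0 < s := by linarith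
      have : 0 ≤ (k / s : ℝ) * v s ^ 2 := by positivity
      linarith) hxy
  linarith

lemma Sol.Hlim (S : Sol k h u v) (P : NL h dh H ω b m c) :
    Tendsto (fun r => H (u r)) atTop (nhds 0) := by
  refine P.H0.comp ?_
  refine tendsto_nhdsWithin_iff.2 ⟨S.lim, ?_⟩
  filter_upwards [eventually_ge_atTop 0] with r hr using S.pos r hr

lemma Sol.Enonneg (S : Sol k h u v) (P : NL h dh H ω b m c) {x : ℝ} (hx : 0 ≤ x) :
    0 ≤ v x ^ 2 / 2 + H (u x) := by
  refine le_of_tendsto (S.Hlim P) ?_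
  filter_upwards [eventually_ge_atTop x] with r hr
  have := S.Eanti P hx hr
  nlinarith [sq_nonneg (v r)]

lemma Sol.vnonpos (S : Sol k h u v) (P : NL h dh H ω b m c) {r : ℝ} (hr : 0 < r) : v r ≤ 0 := by
  by_contra hv
  push Not at hv
  have hur := S.posI hr
  -- a far point
  obtain ⟨R, hR1, hR2⟩ : ∃ R, r < R ∧ u R < u r := by
    have := (S.lim.eventually (gt_mem_nhds hur)).and (eventually_gt_atTop r)
    obtain ⟨R, h1, h2⟩ := this.exists
    exact ⟨R, h2, h1⟩
  have hI : Set.Icc r R ⊆ Set.Ici 0 := fun s hs => hr.le.trans hs.1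
  obtain ⟨s, hs, hsmax⟩ := isCompact_Icc.exists_isMaxOn (Set.nonempty_Icc.2 hR1.le) (S.cu.mono hI)
  have hgr : u r < u s := by
    have := (right_gt (S.du r hr) hv).and (Ioo_mem_nhdsGT hR1)
    obtain ⟨t, ht1, ht2⟩ := this.exists
    exact ht1.trans_le (hsmax ⟨ht2.1.le, ht2.2.le⟩)
  have hsr : r < s := lt_of_le_of_ne hs.1 (by rintro rfl; exact lt_irrefl _ hgr)
  have hsR : s < R := lt_of_le_of_ne hs.2 (by rintro rfl; linarith)
  have hs0 : 0 < s := by linarith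
  have hloc : IsLocalMax u s := hsmax.isLocalMax (Icc_mem_nhds hsr hsR)
  have hvs : v s = 0 := hloc.hasDerivAt_eq_zero (S.du s hs0)
  have hfs : 0 ≤ h (u s) := by
    by_contra hneg
    push Not at hneg
    have hd := S.dv s hs0
    rw [hvs] at hd
    have hpos : 0 < -(k / s) * 0 - u s * h (u s) := by
      have := S.posI hs0; nlinarith
    obtain ⟨e, he, hee⟩ := mem_nhdsGT_iff_exists_Ioo_subset.1 (right_gt hd hpos)
    have he : s < e := he
    set t := min ((s + e) / 2) R with ht
    have hst : s < t := lt_min (by linarith) hsR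
    have hte : t < e := (min_le_left _ _).trans_lt (by linarith)
    have := smono_of_deriv (g := u) (g' := v) (a := s) (b := t)
      (S.cu.mono (fun x hx => hs0.le.trans hx.1)) (fun x h1 h2 => S.du x (by linarith))
      (fun x h1 h2 => by
        have : v s < v x := hee (Set.mem_Ioo.2 ⟨h1, by linarith⟩)
        linarith) hst
    have h2 : u t ≤ u s := hsmax ⟨by linarith, min_le_right _ _⟩
    linarith
  -- min on [0,s]
  obtain ⟨t, ht, htmin⟩ := isCompact_Icc.exists_isMinOn (Set.nonempty_Icc.2 hs0.le)
    (S.cu.mono (fun x (hx : x ∈ Set.Icc 0 s) => hx.1))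
  have hts : u t < u s := lt_of_le_of_lt (htmin ⟨hr.le, hsr.le⟩) hgr
  have htlt : t < s := lt_of_le_of_ne ht.2 (by rintro rfl; linarith)
  have hvt : v t = 0 := by
    rcases eq_or_lt_of_le ht.1 with h0 | h0
    · rw [← h0]; exact S.v0
    · have hloc : IsLocalMin u t := htmin.isLocalMin (Icc_mem_nhds h0 htlt)
      exact hloc.hasDerivAt_eq_zero (S.du t h0)
  have e1 := S.Eanti P ht.1 htlt.le
  have e2 := S.Enonneg P hs0.le
  rw [hvt, hvs] at e1
  rw [hvs] at e2
  have hus := S.posI hs0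
  have hsb : b < u s := by
    by_contra hc
    push Not at hc
    have := P.Hneg hus hc
    linarith
  have hsc : u s ≤ c := by
    by_contra hc
    push Not at hc
    have := P.neg2 _ hc
    linarith
  rcases le_or_gt (u t) b with h1 | h1
  · have := P.Hneg (S.pos t ht.1) h1
    linarith
  · have := P.Hmono h1.le hts hsc
    linarith

lemma Sol.anti (S : Sol k h u v) (P : NL h dh H ω b m c) {x y : ℝ} (hx : 0 ≤ x) (hxy : x ≤ y) :
    u y ≤ u x := by
  have := mono_of_deriv (g := fun r => - u r) (g' := fun r => - v r)
    (a := x) (b := y)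
    (S.cu.neg.mono (fun s hs => hx.trans hs.1))
    (fun s h1 h2 => (S.du s (by linarith)).neg)
    (fun s h1 h2 => by
      have := S.vnonpos P (show 0 < s by linarith)
      linarith) hxy
  linarith

lemma Sol.not_c (S : Sol k h u v) (P : NL h dh H ω b m c) {r : ℝ} (hr : 0 ≤ r) (h1 : u r = c)
    (h2 : v r = 0) : False := by
  have hc : 0 < c := by linarith [P.hb, P.hbm, P.hmc]
  obtain ⟨L, hL0, hL⟩ := P.lip c hc
  have := forward_unique (k := k) (h := h) (u := u) (v := v) (U := fun _ => c) (V := fun _ => 0)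
    (L := L) hr
    (S.cu.mono (fun s hs => hr.trans hs)) (S.cv.mono (fun s hs => hr.trans hs))
    continuousOn_const continuousOn_const
    (fun s hs => S.du s (by linarith)) (fun s hs => S.dv s (by linarith))
    (fun s hs => hasDerivAt_const s c)
    (fun s hs => by rw [P.zc]; simpa using hasDerivAt_const s (0:ℝ))
    (fun s hs => hL _ _ (S.posI (by linarith)) (by rw [← h1]; exact S.anti P hr hs.le) hc le_rfl)
    h1 h2
  have h3 := (S.lim.eventually (gt_mem_nhds hc)).and (eventually_ge_atTop r)
  obtain ⟨R, h4, h5⟩ := h3.exists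
  have := this R h5
  linarith

lemma Sol.vneg (S : Sol k h u v) (P : NL h dh H ω b m c) {r : ℝ} (hr : 0 < r) : v r < 0 := by
  rcases eq_or_lt_of_le (S.vnonpos P hr) with h0 | h0
  swap
  · exact h0
  exfalso
  have hloc : IsLocalMax v r := by
    filter_upwards [Ioi_mem_nhds hr] with s hs
    rw [h0]; exact S.vnonpos P hs
  have hd := hloc.hasDerivAt_eq_zero (S.dv r hr)
  rw [h0] at hd
  have hu := S.posI hr
  have hh : h (u r) = 0 := by
    have : u r * h (u r) = 0 := by linarith
    rcases mul_eq_zero.1 this with h1 | h1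
    · linarith
    · exact h1
  rcases P.zero_or hu hh with h1 | h1
  · have e := S.Enonneg P hr.le
    have := P.Hneg hu h1.le
    rw [h0] at e
    linarith
  · exact S.not_c P hr.le h1 h0

lemma Sol.santi (S : Sol k h u v) (P : NL h dh H ω b m c) {x y : ℝ} (hx : 0 ≤ x) (hxy : x < y) :
    u y < u x := by
  have := smono_of_deriv (g := fun r => - u r) (g' := fun r => - v r)
    (a := x) (b := y)
    (S.cu.neg.mono (fun s hs => hx.trans hs.1))
    (fun s h1 h2 => (S.du s (by linarith)).neg)
    (fun s h1 h2 => by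
      have := S.vneg P (show 0 < s by linarith)
      linarith) hxy
  linarith

lemma Sol.b_lt (S : Sol k h u v) (P : NL h dh H ω b m c) : b < u 0 := by
  by_contra hc
  push Not at hc
  have e := S.Enonneg P le_rfl
  have := P.Hneg (S.pos 0 le_rfl) hc
  rw [S.v0] at e
  linarith

lemma Sol.lt_c (S : Sol k h u v) (P : NL h dh H ω b m c) : u 0 < c := by
  rcases lt_trichotomy (u 0) c with h1 | h1 | h1
  · exact h1
  · exact (S.not_c P le_rfl h1 S.v0).elim
  · exfalso
    have hneg := P.neg2 _ h1
    have hlim : 0 < -(u 0 * h (u 0)) / (k + 1) := by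
      have := S.pos 0 le_rfl
      have : 0 < -(u 0 * h (u 0)) := by nlinarith
      positivity
    have := (S.lim0.eventually (lt_mem_nhds hlim)).and self_mem_nhdsWithin
    obtain ⟨s, hs1, hs2⟩ := this.exists
    have hs2 : 0 < s := hs2
    have := S.vneg P hs2
    have := div_neg_of_neg_of_pos this hs2
    linarith

lemma Sol.ltc (S : Sol k h u v) (P : NL h dh H ω b m c) {r : ℝ} (hr : 0 ≤ r) : u r < c :=
  (S.anti P le_rfl hr).trans_lt (S.lt_c P)

end Solfacts

end PartB

section PartC

/-- Riccati asymptotics -/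
lemma riccati_upper {ρ g : ℝ → ℝ} {k ω A : ℝ} (hk : 0 ≤ k) (hω : 0 < ω)
    (hd : ∀ r, 0 < r → HasDerivAt ρ (ρ r ^ 2 - k / r * ρ r + g r) r)
    (hg : Tendsto g atTop (nhds (-ω))) (hA0 : 0 < A) (hA : ω < A ^ 2) :
    ∀ᶠ r in atTop, ρ r ≤ A := by
  set c := (1 - ω / A ^ 2) / 2 with hc
  have hq : ω / A ^ 2 < 1 := (div_lt_one (by positivity)).2 hA
  have hc0 : 0 < c := by rw [hc]; linarith
  have hlim : Tendsto (fun r : ℝ => 1 - k / r / A + g r / A ^ 2) atTop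
      (nhds (1 - 0 / A + (-ω) / A ^ 2)) :=
    (((tendsto_const_nhds.div_atTop tendsto_id).div_const A).const_sub 1).add (hg.div_const _)
  have hcl : c < 1 - 0 / A + (-ω) / A ^ 2 := by
    rw [hc, neg_div, zero_div]; linarith
  have hev := (hlim.eventually (lt_mem_nhds hcl)).and
    ((hg.eventually (gt_mem_nhds (show -ω < 0 by linarith))).and (eventually_gt_atTop 0))
  obtain ⟨R, hR⟩ := eventually_atTop.1 hev
  filter_upwards [eventually_ge_atTop R] with r hr
  by_contra hcon
  push Not at hcon
  have hder : ∀ s, R ≤ s → A ≤ ρ s → c * ρ s ^ 2 ≤ ρ s ^ 2 - k / s * ρ s + g s := by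
    intro s hs hA'
    obtain ⟨h1, h2, h3⟩ := hR s hs
    have hp : 0 < ρ s := by linarith
    have e1 : k / s * ρ s ≤ k / s / A * ρ s ^ 2 := by
      have : k / s / A * ρ s ^ 2 = k / s * ρ s * (ρ s / A) := by field_simp
      rw [this]
      have h4 : 1 ≤ ρ s / A := (one_le_div hA0).2 hA'
      have h5 : 0 ≤ k / s * ρ s := by positivity
      nlinarith
    have e2 : g s / A ^ 2 * ρ s ^ 2 ≤ g s := by
      have : g s / A ^ 2 * ρ s ^ 2 = g s * (ρ s / A) ^ 2 := by field_simp
      rw [this]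
      have h4 : 1 ≤ ρ s / A := (one_le_div hA0).2 hA'
      have h5 : 1 ≤ (ρ s / A) ^ 2 := by nlinarith
      nlinarith
    have e3 : c * ρ s ^ 2 ≤ (1 - k / s / A + g s / A ^ 2) * ρ s ^ 2 := by
      apply mul_le_mul_of_nonneg_right h1.le (by positivity)
    nlinarith
  have hr0 : 0 < r := (hR r hr).2.2
  set T := r + 2 / (c * A) with hT
  have hTr : r < T := by rw [hT]; have : 0 < 2 / (c * A) := by positivity
                         linarith
  have hstay := stay_nonneg (D := fun s => ρ s - A) (a := r) (b := T)
    (fun s hs => ((hd s (by linarith [hs.1])).continuousAt.sub continuousAt_const).continuousWithinAt)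
    (by linarith)
    (fun s h1 h2 h3 h4 => by
      refine ⟨_, ?_, (hd s (by linarith)).sub_const A⟩
      have h5 : ρ s = A := by linarith
      have := hder s (by linarith) h5.ge
      rw [h5] at this ⊢
      have : 0 < c * A ^ 2 := by positivity
      linarith)
  have hge : ∀ s, r ≤ s → s ≤ T → A ≤ ρ s := fun s h1 h2 => by
    have := hstay s h1 h2; linarith
  have hm := mono_of_deriv (g := fun s => -((ρ s)⁻¹ + c * s))
    (g' := fun s => -(-(ρ s ^ 2 - k / s * ρ s + g s) / ρ s ^ 2 + c * 1)) (a := r) (b := T)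
    (fun s hs => by
      have := hge s hs.1 hs.2
      exact (((hd s (by linarith [hs.1])).continuousAt.inv₀ (by linarith)).add
        (by fun_prop)).neg.continuousWithinAt)
    (fun s h1 h2 => by
      have := hge s h1.le h2.le
      exact (((hd s (by linarith)).inv (by linarith)).add ((hasDerivAt_id s).const_mul c)).neg)
    (fun s h1 h2 => by
      have h3 := hge s h1.le h2.le
      have h4 := hder s (by linarith) h3
      have h5 : 0 < ρ s ^ 2 := by
        have : 0 < ρ s := by linarith
        positivity
      have h6 : c ≤ (ρ s ^ 2 - k / s * ρ s + g s) / ρ s ^ 2 := by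
        rw [le_div_iff₀ h5]; exact h4
      rw [neg_div]; linarith) hTr.le
  have h1 : 0 < (ρ T)⁻¹ := inv_pos.2 (by linarith [hge T hTr.le le_rfl])
  have h2 : (ρ r)⁻¹ ≤ A⁻¹ := by
    apply inv_anti₀ hA0 hcon.le
  have h3 : c * T = c * r + 2 * A⁻¹ := by rw [hT]; field_simp
  have h4 : 0 < A⁻¹ := inv_pos.2 hA0
  linarith

lemma riccati_lower {ρ g : ℝ → ℝ} {k ω A : ℝ} (hk : 0 ≤ k)
    (hpos : ∀ r, 0 < r → 0 < ρ r)
    (hd : ∀ r, 0 < r → HasDerivAt ρ (ρ r ^ 2 - k / r * ρ r + g r) r)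
    (hg : Tendsto g atTop (nhds (-ω))) (hA0 : 0 < A) (hA : A ^ 2 < ω) :
    ∀ᶠ r in atTop, A ≤ ρ r := by
  set c := (ω - A ^ 2) / 2 with hc
  have hc0 : 0 < c := by rw [hc]; linarith
  have hev := (hg.eventually (gt_mem_nhds (show -ω < -(A ^ 2) - c by rw [hc]; linarith))).and
    (eventually_gt_atTop 0)
  obtain ⟨R, hR⟩ := eventually_atTop.1 hev
  filter_upwards [eventually_ge_atTop R] with r hr
  by_contra hcon
  push Not at hcon
  have hr0 : 0 < r := (hR r hr).2
  have hder : ∀ s, R ≤ s → ρ s ≤ A → ρ s ^ 2 - k / s * ρ s + g s ≤ -c := by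
    intro s hs hA'
    obtain ⟨h1, h3⟩ := hR s hs
    have hp := hpos s h3
    have : 0 ≤ k / s * ρ s := by positivity
    nlinarith
  set T := r + A / c with hT
  have hTr : r < T := by rw [hT]; have : 0 < A / c := by positivity
                         linarith
  have hstay := stay_nonneg (D := fun s => A - ρ s) (a := r) (b := T)
    (fun s hs => (continuousAt_const.sub (hd s (by linarith [hs.1])).continuousAt).continuousWithinAt)
    (by linarith)
    (fun s h1 h2 h3 h4 => by
      refine ⟨_, ?_, (hd s (by linarith)).const_sub A⟩
      have h5 : ρ s = A := by linarith
      have := hder s (by linarith) h5.le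
      linarith)
  have hm := mono_of_deriv (g := fun s => -(ρ s + c * s))
    (g' := fun s => -((ρ s ^ 2 - k / s * ρ s + g s) + c * 1)) (a := r) (b := T)
    (fun s hs => ((hd s (by linarith [hs.1])).continuousAt.add
        (by fun_prop)).neg.continuousWithinAt)
    (fun s h1 h2 => ((hd s (by linarith)).add ((hasDerivAt_id s).const_mul c)).neg)
    (fun s h1 h2 => by
      have h3 := hstay s h1.le h2.le
      have h4 := hder s (by linarith) (by linarith)
      linarith) hTr.le
  have h1 := hpos T (by linarith)
  have h3 : c * T = c * r + A := by rw [hT]; field_simp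
  linarith

lemma riccati {ρ g : ℝ → ℝ} {k ω : ℝ} (hk : 0 ≤ k) (hω : 0 < ω)
    (hpos : ∀ r, 0 < r → 0 < ρ r)
    (hd : ∀ r, 0 < r → HasDerivAt ρ (ρ r ^ 2 - k / r * ρ r + g r) r)
    (hg : Tendsto g atTop (nhds (-ω))) : Tendsto ρ atTop (nhds (Real.sqrt ω)) := by
  have hs : 0 < Real.sqrt ω := Real.sqrt_pos.2 hω
  have hsq : Real.sqrt ω ^ 2 = ω := Real.sq_sqrt hω.le
  rw [tendsto_order]
  constructor
  · intro a ha
    set A := (max a 0 + Real.sqrt ω) / 2 with hA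
    have h1 : max a 0 < Real.sqrt ω := max_lt ha hs
    have h2 : 0 ≤ max a 0 := le_max_right _ _
    have h3 : a ≤ max a 0 := le_max_left _ _
    filter_upwards [riccati_lower hk hpos hd hg (show 0 < A by rw [hA]; linarith)
      (show A ^ 2 < ω by rw [hA]; nlinarith)] with r hr
    rw [hA] at hr
    linarith
  · intro a ha
    set A := (a + Real.sqrt ω) / 2 with hA
    filter_upwards [riccati_upper hk hω hd hg (show 0 < A by rw [hA]; linarith)
      (show ω < A ^ 2 by rw [hA]; nlinarith)] with r hr
    rw [hA] at hr
    linarith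

section Solfacts
variable {h dh H : ℝ → ℝ} {ω b m c : ℝ} {k : ℕ} {u v : ℝ → ℝ}

lemma Sol.rho (S : Sol k h u v) (P : NL h dh H ω b m c) :
    Tendsto (fun r => - v r / u r) atTop (nhds (Real.sqrt ω)) := by
  refine riccati (g := fun r => h (u r)) (k := k) (by positivity) P.hω ?_ ?_ ?_
  · intro r hr
    have := S.vneg P hr
    have := S.posI hr
    apply div_pos (by linarith) this
  · intro r hr
    have hu := S.posI hr
    refine hda ((S.dv r hr).neg.div (S.du r hr) hu.ne') (fun y => rfl) ?_
    simp only [Pi.neg_apply]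
    field_simp
    ring
  · refine P.h0.comp ?_
    refine tendsto_nhdsWithin_iff.2 ⟨S.lim, ?_⟩
    filter_upwards [eventually_ge_atTop 0] with r hr using S.pos r hr

lemma Sol.decay (S : Sol k h u v) (P : NL h dh H ω b m c) (j : ℕ) :
    Tendsto (fun r => r ^ j * v r) atTop (nhds 0) ∧ Tendsto (fun r => r ^ j * u r) atTop (nhds 0) := by
  set a := Real.sqrt ω / 2 with ha
  have hs : 0 < Real.sqrt ω := Real.sqrt_pos.2 P.hω
  have ha0 : 0 < a := by rw [ha]; linarith
  have h1 := ((S.rho P).eventually (lt_mem_nhds (show a < Real.sqrt ω by rw [ha]; linarith))).and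
    (((S.rho P).eventually (gt_mem_nhds (show Real.sqrt ω < 4 * a by rw [ha]; linarith))).and
      (eventually_gt_atTop 0))
  obtain ⟨R, hR⟩ := eventually_atTop.1 h1
  have hR0 : 0 < R := (hR R le_rfl).2.2
  have hv1 : ∀ r, R ≤ r → v r ≤ - a * u r := by
    intro r hr
    obtain ⟨h1, h2, h3⟩ := hR r hr
    have := S.posI h3
    rw [lt_div_iff₀ this] at h1
    linarith
  have hv2 : ∀ r, R ≤ r → |v r| ≤ 4 * a * u r := by
    intro r hr
    obtain ⟨h1, h2, h3⟩ := hR r hr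
    have := S.posI h3
    rw [div_lt_iff₀ this] at h2
    rw [abs_of_neg (S.vneg P h3)]
    linarith
  set C := u R * Real.exp (a * R) with hC
  have hu : ∀ r, R ≤ r → u r ≤ C * Real.exp (-a * r) := by
    intro r hr
    have := mono_of_deriv (g := fun s => -(u s * Real.exp (a * s)))
      (g' := fun s => -(v s * Real.exp (a * s) + u s * (Real.exp (a * s) * a))) (a := R) (b := r)
      (fun s hs => by
        have := (S.du s (by linarith [hs.1])).continuousAt
        exact (this.mul (by fun_prop)).neg.continuousWithinAt)
      (fun s h1 h2 => by
        have a2 : HasDerivAt (fun s : ℝ => Real.exp (a * s)) (Real.exp (a * s) * a) s := by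
          simpa using ((hasDerivAt_id s).const_mul a).exp
        exact ((S.du s (by linarith)).mul a2).neg)
      (fun s h1 h2 => by
        have := hv1 s h1.le
        have hE := Real.exp_pos (a * s)
        nlinarith) hr
    have e : u r = (u r * Real.exp (a * r)) * Real.exp (-a * r) := by
      rw [mul_assoc, ← Real.exp_add]; simp
    rw [e]
    apply mul_le_mul_of_nonneg_right _ (Real.exp_pos _).le
    rw [hC]; linarith
  have hexp : Tendsto (fun r : ℝ => r ^ j * Real.exp (-a * r)) atTop (nhds 0) := by
    have h1 := (Real.tendsto_pow_mul_exp_neg_atTop_nhds_zero j).comp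
      (tendsto_id.const_mul_atTop ha0)
    have h2 := h1.const_mul ((a ^ j)⁻¹)
    rw [mul_zero] at h2
    refine h2.congr (fun r => ?_)
    simp only [Function.comp, id]
    rw [mul_pow, neg_mul]
    field_simp
  have hU : Tendsto (fun r => r ^ j * u r) atTop (nhds 0) := by
    refine tendsto_of_tendsto_of_tendsto_of_le_of_le' tendsto_const_nhds
      (h := fun r => C * (r ^ j * Real.exp (-a * r))) (by simpa using hexp.const_mul C) ?_ ?_
    · filter_upwards [eventually_ge_atTop R] with r hr
      have := S.posI (show 0 < r by linarith)
      have : 0 < r := by linarith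
      positivity
    · filter_upwards [eventually_ge_atTop R] with r hr
      have : 0 < r := by linarith
      have h3 := hu r hr
      have h4 : 0 < r ^ j := by positivity
      nlinarith
  refine ⟨?_, hU⟩
  refine squeeze_zero_norm' (a := fun r => 4 * a * (r ^ j * u r)) ?_ (by simpa using hU.const_mul (4 * a))
  filter_upwards [eventually_ge_atTop R] with r hr
  have : 0 < r := by linarith
  have h4 : 0 < r ^ j := by positivity
  rw [Real.norm_eq_abs, abs_mul, abs_of_pos h4]
  have := hv2 r hr
  nlinarith

end Solfacts

end PartC

section PartD

noncomputable def thF (u v : ℝ → ℝ) (r : ℝ) : ℝ := r * (- v r / u r)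
noncomputable def YF (h u : ℝ → ℝ) (r : ℝ) : ℝ := r ^ 2 * h (u r)
noncomputable def NF (k : ℕ) (h u v : ℝ → ℝ) (r : ℝ) : ℝ :=
  thF u v r ^ 2 - (k - 1) * thF u v r + YF h u r

section NLG
variable {h dh H : ℝ → ℝ} {ω b m c : ℝ}

lemma NL.Gneg (P : NL h dh H ω b m c) {k : ℝ} (hk : 1 ≤ k) {x : ℝ} (hx : 0 < x) (hxb : x ≤ b) :
    (k + 1) * H x - (k - 1) / 2 * (x ^ 2 * h x) < 0 := by
  have h1 := P.Hneg hx hxb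
  have h2 := P.V x hx (by linarith [P.hbm])
  nlinarith

lemma NL.Gder (P : NL h dh H ω b m c) (k : ℝ) {x : ℝ} (hx : 0 < x) :
    HasDerivAt (fun x => (k + 1) * H x - (k - 1) / 2 * (x ^ 2 * h x))
      ((k + 1) * (x * h x) - (k - 1) / 2 * (2 * x * h x + x ^ 2 * dh x)) x := by
  have := ((P.derH x hx).const_mul (k + 1)).sub
    (((hasDerivAt_pow 2 x).mul (P.der x hx)).const_mul ((k - 1) / 2))
  refine hda this (fun y => rfl) ?_
  norm_num

lemma NL.Gstep (P : NL h dh H ω b m c) {k : ℝ} (hk : 1 ≤ k) {x y : ℝ} (hx : b < x)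
    (hG : 0 ≤ (k + 1) * H x - (k - 1) / 2 * (x ^ 2 * h x)) (hxy : x < y) (hy : y < c) :
    0 < (k + 1) * H y - (k - 1) / 2 * (y ^ 2 * h y) := by
  have hb := P.hb
  have form : ∀ s, b < s → s < c →
      (k + 1) * (s * h s) - (k - 1) / 2 * (2 * s * h s + s ^ 2 * dh s)
      = s * h s * (2 - (k - 1) / 2 * (s * dh s / h s)) := by
    intro s h1 h2
    have := P.pos s h1 h2
    field_simp
    ring
  have kap : ∀ s t, b < s → s ≤ t → t < c → t * dh t / h t ≤ s * dh s / h s := by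
    intro s t h1 h2 h3
    exact P.kap.antitoneOn ⟨h1, by linarith⟩ ⟨by linarith, h3⟩ h2
  rcases le_or_gt (2 - (k - 1) / 2 * (x * dh x / h x)) 0 with hg | hg
  · exfalso
    have := mono_of_deriv (a := b) (b := x)
      (g := fun x => -((k + 1) * H x - (k - 1) / 2 * (x ^ 2 * h x)))
      (g' := fun x => -((k + 1) * (x * h x) - (k - 1) / 2 * (2 * x * h x + x ^ 2 * dh x)))
      (fun s hs => (P.Gder k (by linarith [hs.1])).continuousAt.neg.continuousWithinAt)
      (fun s h1 h2 => (P.Gder k (by linarith)).neg)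
      (fun s h1 h2 => by
        have e := form s h1 (by linarith)
        have h3 := kap s x h1 h2.le (by linarith)
        have h4 : 2 - (k - 1) / 2 * (s * dh s / h s) ≤ 0 := by nlinarith
        have h5 := P.pos s h1 (by linarith)
        have h6 : 0 < s * h s := mul_pos (by linarith) h5
        nlinarith) hx.le
    have h2 := P.Gneg hk hb le_rfl
    linarith
  · have := smono_of_deriv (a := x) (b := y)
      (g := fun x => ((k + 1) * H x - (k - 1) / 2 * (x ^ 2 * h x)))
      (g' := fun x => ((k + 1) * (x * h x) - (k - 1) / 2 * (2 * x * h x + x ^ 2 * dh x)))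
      (fun s hs => (P.Gder k (by linarith [hs.1])).continuousAt.continuousWithinAt)
      (fun s h1 h2 => (P.Gder k (by linarith)))
      (fun s h1 h2 => by
        have e := form s (by linarith) (by linarith)
        have h3 := kap x s hx h1.le (by linarith)
        have h4 : 0 < 2 - (k - 1) / 2 * (s * dh s / h s) := by nlinarith
        have h5 := P.pos s (by linarith) (by linarith)
        have h6 : 0 < s * h s := mul_pos (by linarith) h5
        rw [e]
        positivity) hxy
    linarith
end NLG

section Solfacts
variable {h dh H : ℝ → ℝ} {ω b m c : ℝ} {k : ℕ} {u v : ℝ → ℝ}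

lemma Sol.Elim (S : Sol k h u v) (P : NL h dh H ω b m c) (j : ℕ) :
    Tendsto (fun r => r ^ j * (v r ^ 2 / 2 + H (u r))) atTop (nhds 0) := by
  have h1 : Tendsto (fun r => (r ^ j * v r) * (r ^ 0 * v r) / 2) atTop (nhds 0) := by
    simpa using (((S.decay P j).1.mul (S.decay P 0).1).div_const 2)
  refine tendsto_of_tendsto_of_tendsto_of_le_of_le' tendsto_const_nhds h1 ?_ ?_
  · filter_upwards [eventually_gt_atTop 0] with r hr
    have := S.Enonneg P hr.le
    positivity
  · filter_upwards [eventually_gt_atTop 0, S.lim.eventually (gt_mem_nhds P.hb)] with r hr hb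
    have := P.Hneg (S.posI hr) hb.le
    have h2 : 0 < r ^ j := by positivity
    have : r ^ j * H (u r) ≤ 0 := by nlinarith
    calc r ^ j * (v r ^ 2 / 2 + H (u r)) = r ^ j * v r ^ 2 / 2 + r ^ j * H (u r) := by ring
      _ ≤ r ^ j * v r ^ 2 / 2 := by linarith
      _ = _ := by ring

lemma Sol.Pder (S : Sol k h u v) (P : NL h dh H ω b m c) (hk : 1 ≤ k) {r : ℝ} (hr : 0 < r) :
    HasDerivAt (fun r => r ^ (k + 1) * (v r ^ 2 / 2 + H (u r)) + (k - 1) / 2 * (r ^ k * (u r * v r)))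
      (r ^ k * ((k + 1) * H (u r) - (k - 1) / 2 * (u r ^ 2 * h (u r)))) r := by
  obtain ⟨j, rfl⟩ : ∃ j, k = j + 1 := ⟨k - 1, by omega⟩
  have := ((hasDerivAt_pow (j + 1 + 1) r).mul (S.dE P hr)).add
    (((hasDerivAt_pow (j + 1) r).mul ((S.du r hr).mul (S.dv r hr))).const_mul
      ((((j + 1 : ℕ) : ℝ) - 1) / 2))
  refine hda this (fun y => rfl) ?_
  simp only [Nat.add_sub_cancel, Pi.mul_apply]
  push_cast
  field_simp
  ring

lemma Sol.Ppos (S : Sol k h u v) (P : NL h dh H ω b m c) {r : ℝ} (hr : 0 < r) :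
    0 < r ^ (k + 1) * (v r ^ 2 / 2 + H (u r)) + (k - 1) / 2 * (r ^ k * (u r * v r)) := by
  rcases Nat.eq_zero_or_pos k with hk | hk
  · subst hk
    have h1 := S.vneg P hr
    have h2 := S.posI hr
    have h3 := S.Enonneg P hr.le
    have h4 : u r * v r < 0 := by nlinarith
    have : 0 ≤ r ^ (0 + 1) * (v r ^ 2 / 2 + H (u r)) := by positivity
    norm_num
    norm_num at this
    linarith
  have hkR : (1 : ℝ) ≤ k := by exact_mod_cast hk
  set Q : ℝ → ℝ := fun r => r ^ (k + 1) * (v r ^ 2 / 2 + H (u r)) + (k - 1) / 2 * (r ^ k * (u r * v r))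
    with hQ
  have hQc : ContinuousOn Q (Set.Ici 0) := by
    refine ContinuousOn.add (ContinuousOn.mul (by fun_prop) (S.cE P)) ?_
    exact continuousOn_const.mul (ContinuousOn.mul (by fun_prop) (S.cu.mul S.cv))
  have hQ0 : Q 0 = 0 := by simp [hQ, S.v0]
  have hQl : Tendsto Q atTop (nhds 0) := by
    have h1 := S.Elim P (k + 1)
    have h2 := ((S.decay P k).1.mul S.lim).const_mul (((k : ℝ) - 1) / 2)
    have h3 := h1.add h2
    simp only [mul_zero, add_zero] at h3
    refine h3.congr (fun r => ?_)
    simp only [hQ]; ring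
  set G : ℝ → ℝ := fun x => ((k : ℝ) + 1) * H x - (k - 1) / 2 * (x ^ 2 * h x) with hG
  have hQd : ∀ s, 0 < s → HasDerivAt Q (s ^ k * G (u s)) s := fun s hs => S.Pder P hk hs
  have step : ∀ s t, 0 ≤ s → s < t → 0 ≤ G (u t) → 0 < G (u s) := by
    intro s t hs hst hGt
    have hb : b < u t := by
      by_contra hc
      push Not at hc
      have := P.Gneg hkR (S.pos t (by linarith)) hc
      simp only [hG] at hGt
      linarith
    exact P.Gstep hkR hb hGt (S.santi P hs hst) (S.ltc P hs)
  change 0 < Q r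
  rcases le_or_gt 0 (G (u r)) with hg | hg
  · have := smono_of_deriv (g := Q) (g' := fun s => s ^ k * G (u s)) (a := 0) (b := r)
      (hQc.mono (fun s hs => hs.1)) (fun s h1 h2 => hQd s h1)
      (fun s h1 h2 => by
        have := step s r h1.le h2 hg
        positivity) hr
    linarith
  · have hneg : ∀ s, r ≤ s → G (u s) < 0 := by
      intro s hs
      by_contra hc
      push Not at hc
      rcases eq_or_lt_of_le hs with h1 | h1
      · rw [← h1] at hc; linarith
      · have := step r s hr.le h1 hc
        linarith
    have mono : ∀ s t, r ≤ s → s < t → Q t < Q s := by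
      intro s t hs hst
      have := smono_of_deriv (g := fun s => - Q s) (g' := fun s => -(s ^ k * G (u s))) (a := s) (b := t)
        (hQc.neg.mono (fun x hx => hr.le.trans (hs.trans hx.1)))
        (fun x h1 h2 => (hQd x (by linarith)).neg)
        (fun x h1 h2 => by
          have := hneg x (by linarith)
          have h3 : 0 < x ^ k := by
            have : 0 < x := by linarith
            positivity
          nlinarith) hst
      linarith
    have h1 := mono r (r + 1) le_rfl (by linarith)
    have h2 : 0 ≤ Q (r + 1) := by
      refine le_of_tendsto hQl ?_
      filter_upwards [eventually_gt_atTop (r + 1)] with s hs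
      exact (mono (r + 1) s (by linarith) hs).le
    linarith

lemma Sol.th_pos (S : Sol k h u v) (P : NL h dh H ω b m c) {r : ℝ} (hr : 0 < r) : 0 < thF u v r := by
  have := S.vneg P hr
  have h2 := S.posI hr
  exact mul_pos hr (div_pos (by linarith) h2)

lemma Sol.th_der (S : Sol k h u v) {r : ℝ} (hr : 0 < r) :
    HasDerivAt (thF u v) (NF k h u v r / r) r := by
  have hu := S.posI hr
  refine hda ((hasDerivAt_id r).mul ((S.dv r hr).neg.div (S.du r hr) hu.ne')) (fun y => rfl) ?_
  simp only [NF, YF, thF, Pi.neg_apply, Pi.div_apply, id]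
  field_simp
  ring

lemma Sol.Y_der (S : Sol k h u v) (P : NL h dh H ω b m c) {r : ℝ} (hr : 0 < r) :
    HasDerivAt (YF h u) (2 * r * h (u r) + r ^ 2 * (dh (u r) * v r)) r := by
  have hu := S.posI hr
  refine hda ((hasDerivAt_pow 2 r).mul ((P.der _ hu).comp r (S.du r hr))) (fun y => rfl) ?_
  norm_num

lemma Sol.N_der (S : Sol k h u v) (P : NL h dh H ω b m c) {r : ℝ} (hr : 0 < r) :
    HasDerivAt (NF k h u v) ((2 * thF u v r - (k - 1)) * (NF k h u v r / r) +
      (2 * r * h (u r) + r ^ 2 * (dh (u r) * v r))) r := by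
  refine hda ((((S.th_der hr).pow 2).sub ((S.th_der hr).const_mul ((k : ℝ) - 1))).add (S.Y_der P hr))
    (fun y => rfl) ?_
  norm_num
  ring

lemma Sol.th_lim0 (S : Sol k h u v) :
    Tendsto (fun r => thF u v r / r ^ 2) (nhdsWithin 0 (Set.Ioi 0)) (nhds (h (u 0) / (k + 1))) := by
  have hu0 := S.pos 0 le_rfl
  have hcu : Tendsto u (nhdsWithin 0 (Set.Ioi 0)) (nhds (u 0)) :=
    (S.cu 0 Set.self_mem_Ici).mono_left (nhdsWithin_mono _ Set.Ioi_subset_Ici_self)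
  have h1 := (S.lim0.neg).div hcu hu0.ne'
  have e : -(-(u 0 * h (u 0)) / ((k : ℝ) + 1)) / u 0 = h (u 0) / (k + 1) := by
    field_simp
  rw [e] at h1
  refine h1.congr' ?_
  filter_upwards [self_mem_nhdsWithin] with r hr
  have hr : 0 < r := hr
  have := S.posI hr
  simp only [thF, Pi.div_apply]
  field_simp

lemma Sol.hu_lim0 (S : Sol k h u v) (P : NL h dh H ω b m c) :
    Tendsto (fun r => h (u r)) (nhdsWithin 0 (Set.Ioi 0)) (nhds (h (u 0))) := by
  have hu0 := S.pos 0 le_rfl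
  have hcu : Tendsto u (nhdsWithin 0 (Set.Ioi 0)) (nhds (u 0)) :=
    (S.cu 0 Set.self_mem_Ici).mono_left (nhdsWithin_mono _ Set.Ioi_subset_Ici_self)
  exact (P.der _ hu0).continuousAt.tendsto.comp hcu

lemma Sol.th_zero (S : Sol k h u v) :
    Tendsto (thF u v) (nhdsWithin 0 (Set.Ioi 0)) (nhds 0) := by
  have h2 : Tendsto (fun r : ℝ => r ^ 2) (nhdsWithin 0 (Set.Ioi 0)) (nhds 0) := by
    have : Tendsto (fun r : ℝ => r ^ 2) (nhds 0) (nhds (0 ^ 2)) := (continuous_pow 2).tendsto 0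
    simpa using this.mono_left nhdsWithin_le_nhds
  have := S.th_lim0.mul h2
  rw [mul_zero] at this
  refine this.congr' ?_
  filter_upwards [self_mem_nhdsWithin] with r hr
  have hr : 0 < r := hr
  field_simp

lemma Sol.N_near (S : Sol k h u v) (P : NL h dh H ω b m c) :
    ∀ᶠ r in nhdsWithin 0 (Set.Ioi 0), 0 < NF k h u v r := by
  have hh := P.pos _ (S.b_lt P) (S.lt_c P)
  have h1 := ((S.th_lim0.mul S.th_zero).sub (S.th_lim0.const_mul ((k : ℝ) - 1))).add (S.hu_lim0 P)
  have e : h (u 0) / (k + 1) * 0 - ((k : ℝ) - 1) * (h (u 0) / (k + 1)) + h (u 0)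
      = 2 * h (u 0) / (k + 1) := by
    field_simp
    ring
  rw [e] at h1
  have h0 : 0 < 2 * h (u 0) / ((k : ℝ) + 1) := by positivity
  filter_upwards [h1.eventually (lt_mem_nhds h0), self_mem_nhdsWithin] with r h2 hr
  have hr : 0 < r := hr
  have e2 : NF k h u v r = r ^ 2 * (thF u v r / r ^ 2 * thF u v r -
      ((k : ℝ) - 1) * (thF u v r / r ^ 2) + h (u r)) := by
    simp only [NF, YF]
    field_simp
  rw [e2]
  positivity

lemma Sol.N_pos (S : Sol k h u v) (P : NL h dh H ω b m c) {r : ℝ} (hr : 0 < r) :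
    0 < NF k h u v r := by
  have hu := S.posI hr
  rcases le_or_gt (u r) m with hm | hm
  · have h1 := S.Ppos P hr
    have h2 := P.V _ hu hm
    have e : r ^ k * (u r ^ 2 * NF k h u v r) = 2 * r * (r ^ (k + 1) * (v r ^ 2 / 2 + H (u r)) +
        (k - 1) / 2 * (r ^ k * (u r * v r))) + 2 * r ^ (k + 2) * (u r ^ 2 * h (u r) / 2 - H (u r)) := by
      simp only [NF, YF, thF]
      field_simp
      ring
    have h3 : 0 < r ^ k * (u r ^ 2 * NF k h u v r) := by
      rw [e]
      have : 0 ≤ 2 * r ^ (k + 2) * (u r ^ 2 * h (u r) / 2 - H (u r)) := by positivity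
      have : 0 < 2 * r * (r ^ (k + 1) * (v r ^ 2 / 2 + H (u r)) +
        (k - 1) / 2 * (r ^ k * (u r * v r))) := by positivity
      linarith
    have h4 : 0 < u r ^ 2 * NF k h u v r := (pos_iff_pos_of_mul_pos h3).1 (by positivity)
    exact (pos_iff_pos_of_mul_pos h4).1 (by positivity)
  · obtain ⟨e, he, hee⟩ := mem_nhdsGT_iff_exists_Ioo_subset.1 (S.N_near P)
    have he : 0 < e := he
    set a := min (e / 2) (r / 2) with ha
    have ha0 : 0 < a := lt_min (by linarith) (by linarith)
    have har : a < r := (min_le_right _ _).trans_lt (by linarith)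
    have hae : a < e := (min_le_left _ _).trans_lt (by linarith)
    have hNa : 0 < NF k h u v a := hee (Set.mem_Ioo.2 ⟨ha0, hae⟩)
    have hder : ∀ s, 0 < s → s ≤ r → NF k h u v s = 0 →
        ∃ d, 0 < d ∧ HasDerivAt (NF k h u v) d s := by
      intro s hs hsr h0
      refine ⟨_, ?_, S.N_der P hs⟩
      rw [h0]
      have hus : m < u s := hm.trans_le (S.anti P hs.le hsr)
      have h1 := P.pos (u s) (by linarith [P.hbm]) (S.ltc P hs.le)
      have h2 := P.dneg (u s) hus.le
      have h3 := S.vneg P hs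
      have h4 : 0 ≤ dh (u s) * v s := mul_nonneg_of_nonpos_of_nonpos h2 h3.le
      have : 0 < 2 * s * h (u s) := by positivity
      have : 0 ≤ s ^ 2 * (dh (u s) * v s) := by positivity
      simp only [zero_div, mul_zero]
      linarith
    have hstay := stay_nonneg (D := NF k h u v) (a := a) (b := r)
      (fun s hs => (S.N_der P (by linarith [hs.1])).continuousAt.continuousWithinAt) hNa.le
      (fun s h1 h2 _ h4 => hder s (by linarith) h2.le h4)
    rcases eq_or_lt_of_le (hstay r har.le le_rfl) with h0 | h0
    · exfalso
      obtain ⟨d, hd, hdd⟩ := hder r hr le_rfl h0.symm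
      obtain ⟨s, hs1, hs2⟩ := ((left_lt hdd hd).and (Ioo_mem_nhdsLT har)).exists
      have := hstay s hs2.1.le hs2.2.le
      linarith
    · exact h0

lemma Sol.th_mono (S : Sol k h u v) (P : NL h dh H ω b m c) {x y : ℝ} (hx : 0 < x) (hxy : x < y) :
    thF u v x < thF u v y := by
  refine smono_of_deriv (g' := fun r => NF k h u v r / r)
    (fun s hs => (S.th_der (by linarith [hs.1])).continuousAt.continuousWithinAt)
    (fun s h1 h2 => S.th_der (by linarith)) (fun s h1 h2 => ?_) hxy
  have : 0 < s := by linarith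
  exact div_pos (S.N_pos P this) this

lemma Sol.th_top (S : Sol k h u v) (P : NL h dh H ω b m c) : Tendsto (thF u v) atTop atTop :=
  tendsto_id.atTop_mul_pos (Real.sqrt_pos.2 P.hω) (S.rho P)

lemma Sol.th_surj (S : Sol k h u v) (P : NL h dh H ω b m c) {t : ℝ} (ht : 0 < t) :
    ∃ s, 0 < s ∧ thF u v s = t := by
  obtain ⟨x, hx1, hx2⟩ := ((S.th_zero.eventually (gt_mem_nhds ht)).and self_mem_nhdsWithin).exists
  have hx2 : 0 < x := hx2
  obtain ⟨y, hy1, hy2⟩ := (((S.th_top P).eventually_gt_atTop t).and (eventually_gt_atTop x)).exists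
  obtain ⟨s, hs1, hs2⟩ := intermediate_value_Icc hy2.le
    (f := thF u v) (fun s hs => (S.th_der (by linarith [hs.1])).continuousAt.continuousWithinAt)
    ⟨hx1.le, hy1.le⟩
  exact ⟨s, by linarith [hs1.1], hs2⟩

end Solfacts

end PartD

section PartE

variable {k : ℕ} {h dh H u v u1 v1 u2 v2 : ℝ → ℝ} {ω b m c : ℝ}

lemma crossing (S1 : Sol k h u1 v1) (S2 : Sol k h u2 v2) (P : NL h dh H ω b m c)
    (h0 : u2 0 < u1 0) (hgt : ∀ r, 0 < r → u2 r < u1 r) : False := by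
  -- the radius where u1 reaches u2 0
  obtain ⟨r0, hr0, hr0e⟩ : ∃ r, 0 < r ∧ u1 r = u2 0 := by
    obtain ⟨y, hy1, hy2⟩ := ((S1.lim.eventually (gt_mem_nhds (S2.pos 0 le_rfl))).and
      (eventually_gt_atTop 0)).exists
    have hc : ContinuousOn u1 (Set.Icc 0 y) := S1.cu.mono (fun x hx => hx.1)
    obtain ⟨x, hx, hxe⟩ := intermediate_value_Icc' hy2.le hc ⟨hy1.le, h0.le⟩
    refine ⟨x, lt_of_le_of_ne hx.1 ?_, hxe⟩
    rintro rfl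
    linarith
  have hsurj : ∀ r ∈ Set.Ioi r0, ∃ s, 0 < s ∧ -u2 s = -u1 r := by
    intro r hr
    have hr : r0 < r := hr
    have hlt : u1 r < u2 0 := by rw [← hr0e]; exact S1.santi P hr0.le hr
    have hpos : 0 < u1 r := S1.posI (by linarith)
    obtain ⟨y, hy1, hy2⟩ := ((S2.lim.eventually (gt_mem_nhds hpos)).and
      (eventually_gt_atTop 0)).exists
    have hc : ContinuousOn u2 (Set.Icc 0 y) := S2.cu.mono (fun x hx => hx.1)
    obtain ⟨x, hx, hxe⟩ := intermediate_value_Icc' hy2.le hc ⟨hy1.le, hlt.le⟩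
    refine ⟨x, lt_of_le_of_ne hx.1 ?_, by rw [hxe]⟩
    rintro rfl
    linarith
  obtain ⟨σ, hσ⟩ := matching (g := fun x => -u2 x) (g' := fun x => -v2 x) (φ := fun x => -u1 x)
    (φ' := fun x => -v1 x) isOpen_Ioi (fun x hx => (S2.du x hx).neg)
    (fun x hx => by have := S2.vneg P hx; linarith)
    (fun r hr => (S1.du r (lt_trans hr0 hr)).neg) hsurj
  have hs0 : ∀ r, r0 < r → 0 < σ r := fun r hr => (hσ r hr).1
  have hse : ∀ r, r0 < r → u2 (σ r) = u1 r := fun r hr => by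
    have := (hσ r hr).2.1; linarith
  have hsd : ∀ r, r0 < r → HasDerivAt σ (v1 r / v2 (σ r)) r := fun r hr => by
    have := (hσ r hr).2.2
    rwa [neg_div_neg_eq] at this
  have hslt : ∀ r, r0 < r → σ r < r := by
    intro r hr
    by_contra hc
    push Not at hc
    have h1 := S2.anti P (by linarith : (0:ℝ) ≤ r) hc
    have h2 := hgt r (by linarith)
    have h3 := hse r hr
    linarith
  set W : ℝ → ℝ := fun r => r ^ (2 * k) * ((v1 r ^ 2 / 2 + H (u1 r)) -
    (v2 (σ r) ^ 2 / 2 + H (u2 (σ r)))) with hW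
  have hWe : ∀ r, r0 < r → W r = r ^ (2 * k) * (v1 r ^ 2 / 2 - v2 (σ r) ^ 2 / 2) := by
    intro r hr
    simp only [hW, hse r hr]; ring
  have hWd : ∀ r, r0 < r → HasDerivAt W (r ^ (2 * k) * (k * -v2 (σ r) *
      (-v1 r / σ r - -v2 (σ r) / r))) r := by
    intro r hr
    have hrp : 0 < r := by linarith
    have hsp := hs0 r hr
    have hv2 := S2.vneg P hsp
    have h1 := (hasDerivAt_pow (2 * k) r).mul
      ((S1.dE P hrp).sub ((S2.dE P hsp).comp r (hsd r hr)))
    refine hda h1 (fun y => rfl) ?_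
    have hp : r ^ (2 * k - 1) * k = r ^ (2 * k) / r * k := by
      rcases Nat.eq_zero_or_pos k with hk | hk
      · subst hk; simp
      · obtain ⟨j, hj⟩ : ∃ j, 2 * k = j + 1 := ⟨2 * k - 1, by omega⟩
        rw [hj, pow_succ, Nat.add_sub_cancel]; field_simp
    simp only [Pi.sub_apply, Function.comp, hse r hr]
    push_cast
    have e : (2 * (k:ℝ) * r ^ (2 * k - 1)) = 2 * (r ^ (2 * k) / r * k) := by rw [← hp]; ring
    rw [e]
    have hne := hv2.ne
    field_simp
    ring
  -- starting point
  obtain ⟨r1, hr1, hw1⟩ : ∃ r, r0 < r ∧ 0 < W r := by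
    have hv := S1.vneg P hr0
    have hc0 : Tendsto v2 (nhdsWithin 0 (Set.Ioi 0)) (nhds 0) := by
      have := (S2.cv 0 Set.self_mem_Ici).mono_left (nhdsWithin_mono _ Set.Ioi_subset_Ici_self)
      rwa [S2.v0] at this
    obtain ⟨e, he, hee⟩ := mem_nhdsGT_iff_exists_Ioo_subset.1
      (hc0.eventually (lt_mem_nhds (show v1 r0 / 2 < 0 by linarith)))
    have he : 0 < e := he
    have hue : u2 (e / 2) < u1 r0 := by
      rw [hr0e]; exact S2.santi P le_rfl (by linarith)
    have c1 := (S1.du r0 hr0).continuousAt.eventually (lt_mem_nhds hue)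
    have c2 := (S1.dv r0 hr0).continuousAt.eventually (gt_mem_nhds (show v1 r0 < v1 r0 / 2 by linarith))
    obtain ⟨r, ⟨hra, hrb⟩, hrc⟩ := (((c1.and c2).filter_mono
      (nhdsWithin_le_nhds (s := Set.Ioi r0))).and self_mem_nhdsWithin).exists
    have hrc : r0 < r := hrc
    refine ⟨r, hrc, ?_⟩
    have hsp := hs0 r hrc
    have hsl : σ r < e := by
      by_contra hcn
      push Not at hcn
      have h1 := S2.anti P (by linarith : (0:ℝ) ≤ e / 2) (by linarith : e / 2 ≤ σ r)
      have h3 := hse r hrc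
      linarith
    have hv2 : v1 r0 / 2 < v2 (σ r) := hee (Set.mem_Ioo.2 ⟨hsp, hsl⟩)
    have hv3 := S2.vneg P hsp
    rw [hWe r hrc]
    refine mul_pos (pow_pos (by linarith) _) ?_
    nlinarith
  have hr1p : 0 < r1 := by linarith
  have hGd : ∀ r, r0 < r → HasDerivAt (fun r => W r - W r1 * (1 + r1 / r) / 2)
      (r ^ (2 * k) * (k * -v2 (σ r) * (-v1 r / σ r - -v2 (σ r) / r)) + W r1 * r1 / (2 * r ^ 2)) r := by
    intro r hr
    have hrp : 0 < r := by linarith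
    refine hda ((hWd r hr).sub (((((hasDerivAt_inv hrp.ne').const_mul r1).const_add 1).const_mul
      (W r1)).div_const 2)) (fun y => by simp only [Pi.sub_apply]; ring) ?_
    field_simp
    ring
  have hall : ∀ r, r1 ≤ r → W r1 / 2 ≤ W r := by
    intro r hr
    have := stay_nonneg (D := fun r => W r - W r1 * (1 + r1 / r) / 2) (a := r1) (b := r)
      (fun s hs => (hGd s (by linarith [hs.1])).continuousAt.continuousWithinAt)
      (by have : r1 / r1 = 1 := div_self hr1p.ne'
          simp only [this]; linarith) ?_ r hr le_rfl
    · skip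
      have h2 : 0 < W r1 * (r1 / r) := mul_pos hw1 (div_pos hr1p (by linarith))
      linarith
    · intro s hs1 hs2 _ hz
      have hsr0 : r0 < s := by linarith
      refine ⟨_, ?_, hGd s hsr0⟩
      have hsp : 0 < s := by linarith
      have hWs : 0 < W s := by
        have h2 : 0 < W r1 * (r1 / s) := mul_pos hw1 (div_pos hr1p hsp)
        linarith
      rw [hWe s hsr0] at hWs
      have hD := (mul_pos_iff_of_pos_left (pow_pos hsp _)).1 hWs
      have ha := S1.vneg P hsp
      have hb := S2.vneg P (hs0 s hsr0)
      have hab : -v2 (σ s) < -v1 s := by nlinarith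
      have h3 : -v2 (σ s) / s ≤ -v1 s / σ s :=
        div_le_div₀ (by linarith) hab.le (hs0 s hsr0) (hslt s hsr0).le
      have h4 : 0 ≤ s ^ (2 * k) * (k * -v2 (σ s) * (-v1 s / σ s - -v2 (σ s) / s)) := by
        refine mul_nonneg (by positivity) (mul_nonneg (mul_nonneg (by positivity) (by linarith))
          (by linarith))
      have h5 : 0 < W r1 * r1 / (2 * s ^ 2) := by positivity
      linarith
  have hl := (S1.decay P k).1
  have hl2 : Tendsto (fun r => (r ^ k * v1 r) ^ 2 / 2) atTop (nhds 0) := by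
    have := (hl.pow 2).div_const 2
    simpa using this
  obtain ⟨r, ha, hb⟩ := ((hl2.eventually (gt_mem_nhds (show 0 < W r1 / 2 by linarith))).and
    (eventually_ge_atTop r1)).exists
  have h1 := hall r hb
  rw [hWe r (by linarith)] at h1
  have : r ^ (2 * k) * (v1 r ^ 2 / 2 - v2 (σ r) ^ 2 / 2) = (r ^ k * v1 r) ^ 2 / 2 -
    (r ^ k * v2 (σ r)) ^ 2 / 2 := by ring
  rw [this] at h1
  have := sq_nonneg (r ^ k * v2 (σ r))
  linarith

end PartE

section PartF

variable {k : ℕ} {h dh H u v u1 v1 u2 v2 σ : ℝ → ℝ} {ω b m c : ℝ}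

/-- matched pair of solutions -/
structure Mat (k : ℕ) (h u1 v1 u2 v2 σ : ℝ → ℝ) : Prop where
  S1 : Sol k h u1 v1
  S2 : Sol k h u2 v2
  h0 : u2 0 < u1 0
  sp : ∀ r, 0 < r → 0 < σ r
  se : ∀ r, 0 < r → thF u2 v2 (σ r) = thF u1 v1 r
  sd : ∀ r, 0 < r → HasDerivAt σ ((NF k h u1 v1 r / r) / (NF k h u2 v2 (σ r) / σ r)) r

lemma exists_mat (S1 : Sol k h u1 v1) (S2 : Sol k h u2 v2) (P : NL h dh H ω b m c)
    (h0 : u2 0 < u1 0) : ∃ σ, Mat k h u1 v1 u2 v2 σ := by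
  obtain ⟨σ, hσ⟩ := matching (g := thF u2 v2) (g' := fun x => NF k h u2 v2 x / x)
    (φ := thF u1 v1) (φ' := fun x => NF k h u1 v1 x / x) (I := Set.Ioi 0) isOpen_Ioi
    (fun x hx => S2.th_der hx) (fun x hx => div_pos (S2.N_pos P hx) hx)
    (fun r hr => S1.th_der hr) (fun r hr => S2.th_surj P (S1.th_pos P hr))
  exact ⟨σ, S1, S2, h0, fun r hr => (hσ r hr).1, fun r hr => (hσ r hr).2.1,
    fun r hr => (hσ r hr).2.2⟩

lemma Mat.lt_of (A : Mat k h u1 v1 u2 v2 σ) (P : NL h dh H ω b m c) {r x : ℝ} (hr : 0 < r)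
    (hx : 0 < x) (hlt : thF u1 v1 r < thF u2 v2 x) : σ r < x := by
  by_contra hc
  push Not at hc
  have h1 := A.se r hr
  rcases eq_or_lt_of_le hc with e | e
  · rw [← e] at h1; linarith
  · have := A.S2.th_mono P hx e; linarith

lemma Mat.gt_of (A : Mat k h u1 v1 u2 v2 σ) (P : NL h dh H ω b m c) {r x : ℝ} (hr : 0 < r)
    (hx : 0 < x) (hlt : thF u2 v2 x < thF u1 v1 r) : x < σ r := by
  by_contra hc
  push Not at hc
  have h1 := A.se r hr
  rcases eq_or_lt_of_le hc with e | e
  · rw [e] at h1; linarith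
  · have := A.S2.th_mono P (A.sp r hr) e; linarith

lemma Mat.smono (A : Mat k h u1 v1 u2 v2 σ) (P : NL h dh H ω b m c) {r x : ℝ} (hr : 0 < r)
    (hx : r < x) : σ r < σ x := by
  refine A.lt_of P hr (A.sp x (by linarith)) ?_
  rw [A.se x (by linarith)]
  exact A.S1.th_mono P hr hx

lemma Mat.mono (A : Mat k h u1 v1 u2 v2 σ) (P : NL h dh H ω b m c) {r x : ℝ} (hr : 0 < r)
    (hx : r ≤ x) : σ r ≤ σ x := by
  rcases eq_or_lt_of_le hx with e | e
  · rw [e]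
  · exact (A.smono P hr e).le

lemma Mat.lim0 (A : Mat k h u1 v1 u2 v2 σ) (P : NL h dh H ω b m c) :
    Tendsto σ (nhdsWithin 0 (Set.Ioi 0)) (nhdsWithin 0 (Set.Ioi 0)) := by
  refine tendsto_nhdsWithin_iff.2 ⟨?_, ?_⟩
  · rw [tendsto_order]
    constructor
    · intro a ha
      filter_upwards [self_mem_nhdsWithin] with r hr
      have := A.sp r hr; linarith
    · intro a ha
      filter_upwards [self_mem_nhdsWithin,
        A.S1.th_zero.eventually (gt_mem_nhds (A.S2.th_pos P ha))] with r hr hr2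
      exact A.lt_of P hr ha hr2
  · filter_upwards [self_mem_nhdsWithin] with r hr using A.sp r hr

lemma Mat.limtop (A : Mat k h u1 v1 u2 v2 σ) (P : NL h dh H ω b m c) :
    Tendsto σ atTop atTop := by
  rw [tendsto_atTop]
  intro x
  have hx : 0 < max x 1 := lt_max_of_lt_right one_pos
  filter_upwards [eventually_gt_atTop 0,
    (A.S1.th_top P).eventually_gt_atTop (thF u2 v2 (max x 1))] with r hr hr2
  have := A.gt_of P hr hx hr2
  linarith [le_max_left x 1]

/-- difference of the potentials at matched points -/
noncomputable def QF (h u1 u2 σ : ℝ → ℝ) (r : ℝ) : ℝ := YF h u1 r - YF h u2 (σ r)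

lemma Mat.NQ (A : Mat k h u1 v1 u2 v2 σ) {r : ℝ} (hr : 0 < r) :
    NF k h u1 v1 r = NF k h u2 v2 (σ r) + QF h u1 u2 σ r := by
  simp only [NF, QF, A.se r hr]; ring

lemma Mat.Zder (A : Mat k h u1 v1 u2 v2 σ) (P : NL h dh H ω b m c) {r : ℝ} (hr : 0 < r) :
    HasDerivAt (fun r => Real.log (u1 r) - Real.log (u2 (σ r)))
      (thF u1 v1 r * QF h u1 u2 σ r / (NF k h u2 v2 (σ r) * r)) r := by
  have hs := A.sp r hr
  have hN := A.S2.N_pos P hs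
  have hu1 := A.S1.posI hr
  have hu2 := A.S2.posI hs
  refine hda (((A.S1.du r hr).log hu1.ne').sub
    (((A.S2.du _ hs).comp r (A.sd r hr)).log hu2.ne')) (fun y => rfl) ?_
  have e1 : v1 r / u1 r = - thF u1 v1 r / r := by simp only [thF]; field_simp
  have e2 : v2 (σ r) = - thF u1 v1 r / σ r * u2 (σ r) := by
    rw [← A.se r hr]; simp only [thF]; field_simp
  simp only [Function.comp]
  rw [e1, e2, A.NQ hr]
  field_simp
  ring

lemma Mat.Tder (A : Mat k h u1 v1 u2 v2 σ) (P : NL h dh H ω b m c) {r : ℝ} (hr : 0 < r) :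
    HasDerivAt (fun r => Real.log (σ r) - Real.log r)
      (QF h u1 u2 σ r / (NF k h u2 v2 (σ r) * r)) r := by
  have hs := A.sp r hr
  have hN := A.S2.N_pos P hs
  refine hda (((A.sd r hr).log hs.ne').sub (Real.hasDerivAt_log hr.ne')) (fun y => rfl) ?_
  rw [A.NQ hr]
  field_simp
  ring

lemma Mat.Qder (A : Mat k h u1 v1 u2 v2 σ) (P : NL h dh H ω b m c) {r : ℝ} (hr : 0 < r) :
    HasDerivAt (QF h u1 u2 σ) ((2 * YF h u1 r - r ^ 2 * (u1 r * dh (u1 r)) * thF u1 v1 r) / r -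
      (2 * YF h u2 (σ r) - σ r ^ 2 * (u2 (σ r) * dh (u2 (σ r))) * thF u1 v1 r)
        * (NF k h u1 v1 r / NF k h u2 v2 (σ r)) / r) r := by
  have hs := A.sp r hr
  have hN := A.S2.N_pos P hs
  have hu1 := A.S1.posI hr
  have hu2 := A.S2.posI hs
  refine hda ((A.S1.Y_der P hr).sub ((A.S2.Y_der P hs).comp r (A.sd r hr))) (fun y => rfl) ?_
  have e1 : v1 r = - thF u1 v1 r / r * u1 r := by simp only [thF]; field_simp
  have e2 : v2 (σ r) = - thF u1 v1 r / σ r * u2 (σ r) := by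
    rw [← A.se r hr]; simp only [thF]; field_simp
  rw [e2]
  rw [e1]
  simp only [YF]
  field_simp
  ring

/-- logarithmic form of the derivative, valid where both values of `h` are positive -/
lemma Mat.Dder (A : Mat k h u1 v1 u2 v2 σ) (P : NL h dh H ω b m c) {r : ℝ} (hr : 0 < r)
    (h1 : 0 < h (u1 r)) (h2 : 0 < h (u2 (σ r))) :
    HasDerivAt (fun r => Real.log (YF h u1 r) - Real.log (YF h u2 (σ r)))
      ((2 - u1 r * dh (u1 r) / h (u1 r) * thF u1 v1 r) / r -
      (2 - u2 (σ r) * dh (u2 (σ r)) / h (u2 (σ r)) * thF u1 v1 r)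
        * (NF k h u1 v1 r / NF k h u2 v2 (σ r)) / r) r := by
  have hs := A.sp r hr
  have hN := A.S2.N_pos P hs
  have hu1 := A.S1.posI hr
  have hu2 := A.S2.posI hs
  have y1 : 0 < YF h u1 r := mul_pos (by positivity) h1
  have y2 : 0 < YF h u2 (σ r) := mul_pos (by positivity) h2
  refine hda (((A.S1.Y_der P hr).log y1.ne').sub
    (((A.S2.Y_der P hs).comp r (A.sd r hr)).log y2.ne')) (fun y => rfl) ?_
  have e1 : v1 r = - thF u1 v1 r / r * u1 r := by simp only [thF]; field_simp
  have e2 : v2 (σ r) = - thF u1 v1 r / σ r * u2 (σ r) := by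
    rw [← A.se r hr]; simp only [thF]; field_simp
  simp only [Function.comp]
  rw [e2]
  rw [e1]
  simp only [YF]
  field_simp
  ring

lemma Sol.YT_lim (S : Sol k h u v) (P : NL h dh H ω b m c) :
    Tendsto (fun r => YF h u r / thF u v r) (nhdsWithin 0 (Set.Ioi 0)) (nhds ((k : ℝ) + 1)) := by
  have hh := P.pos _ (S.b_lt P) (S.lt_c P)
  have hk : (0 : ℝ) < (k : ℝ) + 1 := by positivity
  have := (S.hu_lim0 P).div S.th_lim0 (div_pos hh hk).ne'
  have e : h (u 0) / (h (u 0) / ((k : ℝ) + 1)) = (k : ℝ) + 1 := by field_simp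
  rw [e] at this
  refine this.congr' ?_
  filter_upwards [self_mem_nhdsWithin] with r hr
  have hr : 0 < r := hr
  have := S.th_pos P hr
  simp only [YF, Pi.div_apply]
  field_simp

lemma Mat.D_lim (A : Mat k h u1 v1 u2 v2 σ) (P : NL h dh H ω b m c) :
    Tendsto (fun r => Real.log (YF h u1 r) - Real.log (YF h u2 (σ r)))
      (nhdsWithin 0 (Set.Ioi 0)) (nhds 0) := by
  have hk : ((k : ℝ) + 1) ≠ 0 := by positivity
  have a1 := (A.S1.YT_lim P).log hk
  have a2 := ((A.S2.YT_lim P).comp (A.lim0 P)).log hk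
  have := a1.sub a2
  rw [sub_self] at this
  refine this.congr' ?_
  have b1 := (A.S1.hu_lim0 P).eventually (lt_mem_nhds (P.pos _ (A.S1.b_lt P) (A.S1.lt_c P)))
  have b2 := ((A.S2.hu_lim0 P).comp (A.lim0 P)).eventually
    (lt_mem_nhds (P.pos _ (A.S2.b_lt P) (A.S2.lt_c P)))
  filter_upwards [self_mem_nhdsWithin, b1, b2] with r hr h1 h2
  have hr : 0 < r := hr
  have h2 : 0 < h (u2 (σ r)) := h2
  have hs := A.sp r hr
  have y1 : 0 < YF h u1 r := mul_pos (by positivity) h1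
  have y2 : 0 < YF h u2 (σ r) := mul_pos (by positivity) h2
  have t1 := A.S1.th_pos P hr
  have t2 := A.S2.th_pos P hs
  simp only [Function.comp]
  rw [Real.log_div y1.ne' t1.ne', Real.log_div y2.ne' t2.ne', A.se r hr]
  ring

end PartF

section PartI

variable {k : ℕ} {h dh H u v u1 v1 u2 v2 σ : ℝ → ℝ} {ω b m c : ℝ}

lemma Mat.small (A : Mat k h u1 v1 u2 v2 σ) (P : NL h dh H ω b m c) :
    ∀ᶠ r in nhdsWithin 0 (Set.Ioi 0), 0 < r ∧ b < u2 (σ r) ∧ u2 (σ r) < u1 r ∧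
      u1 r * dh (u1 r) / h (u1 r) * thF u1 v1 r < 2 := by
  have c1 : Tendsto u1 (nhdsWithin 0 (Set.Ioi 0)) (nhds (u1 0)) :=
    (A.S1.cu 0 Set.self_mem_Ici).mono_left (nhdsWithin_mono _ Set.Ioi_subset_Ici_self)
  have c2 : Tendsto (fun r => u2 (σ r)) (nhdsWithin 0 (Set.Ioi 0)) (nhds (u2 0)) :=
    ((A.S2.cu 0 Set.self_mem_Ici).mono_left
      (nhdsWithin_mono _ Set.Ioi_subset_Ici_self)).comp (A.lim0 P)
  have hh := A.h0
  obtain ⟨r1, hr1b, hr1⟩ := ((c1.eventually (lt_mem_nhds (A.S1.b_lt P))).and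
    self_mem_nhdsWithin).exists
  have hr1 : 0 < r1 := hr1
  set K := u1 r1 * dh (u1 r1) / h (u1 r1) with hK
  have hz : Tendsto (fun r => K * thF u1 v1 r) (nhdsWithin 0 (Set.Ioi 0)) (nhds 0) := by
    have := A.S1.th_zero.const_mul K
    simpa using this
  filter_upwards [self_mem_nhdsWithin, c2.eventually (lt_mem_nhds (A.S2.b_lt P)),
    c1.eventually (lt_mem_nhds (show (u1 0 + u2 0) / 2 < u1 0 by linarith)),
    c2.eventually (gt_mem_nhds (show u2 0 < (u1 0 + u2 0) / 2 by linarith)),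
    hz.eventually (gt_mem_nhds two_pos), Ioo_mem_nhdsGT hr1] with r a1 a2 a3 a4 a5 a6
  have a1 : 0 < r := a1
  refine ⟨a1, a2, by linarith, ?_⟩
  have hlt := A.S1.santi P a1.le a6.2
  have := P.kap ⟨hr1b, A.S1.ltc P hr1.le⟩ ⟨by linarith, A.S1.ltc P a1.le⟩ hlt
  simp only at this
  have ht := A.S1.th_pos P a1
  have := mul_lt_mul_of_pos_right this ht
  linarith

lemma Mat.Qsmall (A : Mat k h u1 v1 u2 v2 σ) (P : NL h dh H ω b m c) :
    ∃ δ, 0 < δ ∧ ∀ r, 0 < r → r < δ → u2 (σ r) < u1 r ∧ 0 ≤ QF h u1 u2 σ r := by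
  obtain ⟨δ, hδ, hs⟩ := mem_nhdsGT_iff_exists_Ioo_subset.1 (A.small P)
  have hδ : 0 < δ := hδ
  have hs : ∀ r, 0 < r → r < δ → 0 < r ∧ b < u2 (σ r) ∧ u2 (σ r) < u1 r ∧
      u1 r * dh (u1 r) / h (u1 r) * thF u1 v1 r < 2 := fun r h1 h2 => hs (Set.mem_Ioo.2 ⟨h1, h2⟩)
  refine ⟨δ, hδ, fun r hr0 hrδ => ⟨(hs r hr0 hrδ).2.2.1, ?_⟩⟩
  by_contra hneg
  push Not at hneg
  set D : ℝ → ℝ := fun r => Real.log (YF h u1 r) - Real.log (YF h u2 (σ r)) with hD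
  have hp1 : ∀ s, 0 < s → s < δ → 0 < h (u1 s) := fun s h1 h2 =>
    P.pos _ (by have := hs s h1 h2; linarith [this.2.1, this.2.2.1]) (A.S1.ltc P h1.le)
  have hp2 : ∀ s, 0 < s → s < δ → 0 < h (u2 (σ s)) := fun s h1 h2 =>
    P.pos _ (hs s h1 h2).2.1 (A.S2.ltc P (A.sp s h1).le)
  have hy1 : ∀ s, 0 < s → s < δ → 0 < YF h u1 s := fun s h1 h2 =>
    mul_pos (by positivity) (hp1 s h1 h2)
  have hy2 : ∀ s, 0 < s → s < δ → 0 < YF h u2 (σ s) := fun s h1 h2 =>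
    mul_pos (by have := A.sp s h1; positivity) (hp2 s h1 h2)
  have hDr : D r < 0 := by
    have := Real.log_lt_log (hy1 r hr0 hrδ) (show YF h u1 r < YF h u2 (σ r) by
      simp only [QF] at hneg; linarith)
    simp only [hD]; linarith
  have hback : ∀ t, 0 < t → t < r → D t ≤ D r := by
    intro t ht htr
    have := stay_nonneg (D := fun s => D r - D (-s)) (a := -r) (b := -t) ?_ (by simp) ?_
      (-t) (by linarith) le_rfl
    · simpa using this
    · intro s hs'
      have e1 : 0 < -s := by linarith [hs'.2]
      have e2 : -s < δ := by linarith [hs'.1]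
      have := A.Dder P e1 (hp1 _ e1 e2) (hp2 _ e1 e2)
      have hd2 := ((this.comp s (hasDerivAt_neg s))).const_sub (D r)
      exact hd2.continuousAt.continuousWithinAt
    · intro s hs1 hs2 _ hz
      have e1 : 0 < -s := by linarith
      have e2 : -s < δ := by linarith
      have hd := A.Dder P e1 (hp1 _ e1 e2) (hp2 _ e1 e2)
      have hd2 := ((hd.comp s (hasDerivAt_neg s))).const_sub (D r)
      refine ⟨_, ?_, hd2⟩
      set x := -s with hx
      have hDx : D x < 0 := by linarith
      have hYx : YF h u1 x < YF h u2 (σ x) := by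
        by_contra hcn
        push Not at hcn
        have := Real.log_le_log (hy2 x e1 e2) hcn
        simp only [hD] at hDx
        linarith
      obtain ⟨-, f1, f2, f3⟩ := hs x e1 e2
      have hk := P.kap ⟨f1, A.S2.ltc P (A.sp x e1).le⟩ ⟨by linarith, A.S1.ltc P e1.le⟩ f2
      simp only at hk
      have ht := A.S1.th_pos P e1
      have hk2 := mul_lt_mul_of_pos_right hk ht
      have N1 := A.S1.N_pos P e1
      have N2 := A.S2.N_pos P (A.sp x e1)
      have NQ := A.NQ e1
      have hQ : QF h u1 u2 σ x < 0 := by simp only [QF]; linarith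
      have hq1 : 0 < NF k h u1 v1 x / NF k h u2 v2 (σ x) := div_pos N1 N2
      have hq2 : NF k h u1 v1 x / NF k h u2 v2 (σ x) < 1 := by rw [div_lt_one N2]; linarith
      have hmain : (2 - u2 (σ x) * dh (u2 (σ x)) / h (u2 (σ x)) * thF u1 v1 x)
        * (NF k h u1 v1 x / NF k h u2 v2 (σ x)) < 2 - u1 x * dh (u1 x) / h (u1 x) * thF u1 v1 x := by
        set q := NF k h u1 v1 x / NF k h u2 v2 (σ x)
        set a2 := u2 (σ x) * dh (u2 (σ x)) / h (u2 (σ x)) * thF u1 v1 x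
        set a1 := u1 x * dh (u1 x) / h (u1 x) * thF u1 v1 x
        rcases le_or_gt 0 (2 - a2) with h | h
        · nlinarith
        · nlinarith
      have := div_lt_div_of_pos_right hmain e1
      linarith
  have hcon : D r ≥ 0 := by
    refine le_of_tendsto (A.D_lim P) ?_
    filter_upwards [Ioo_mem_nhdsGT hr0] with t ht
    exact hback t ht.1 ht.2
  linarith

lemma Mat.Zmono (A : Mat k h u1 v1 u2 v2 σ) (P : NL h dh H ω b m c) {x y : ℝ} (hx : 0 < x)
    (hxy : x ≤ y) (hQ : ∀ s, x < s → s < y → 0 ≤ QF h u1 u2 σ s) :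
    Real.log (u1 x) - Real.log (u2 (σ x)) ≤ Real.log (u1 y) - Real.log (u2 (σ y)) := by
  refine mono_of_deriv (g := fun r => Real.log (u1 r) - Real.log (u2 (σ r)))
    (fun s hs => (A.Zder P (by linarith [hs.1])).continuousAt.continuousWithinAt)
    (fun s h1 h2 => A.Zder P (by linarith)) (fun s h1 h2 => ?_) hxy
  have hs : 0 < s := by linarith
  exact div_nonneg (mul_nonneg (A.S1.th_pos P hs).le (hQ s h1 h2))
    (mul_pos (A.S2.N_pos P (A.sp s hs)) hs).le

lemma Mat.Tmono (A : Mat k h u1 v1 u2 v2 σ) (P : NL h dh H ω b m c) {x y : ℝ} (hx : 0 < x)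
    (hxy : x ≤ y) (hQ : ∀ s, x < s → s < y → 0 ≤ QF h u1 u2 σ s) :
    Real.log (σ x) - Real.log x ≤ Real.log (σ y) - Real.log y := by
  refine mono_of_deriv (g := fun r => Real.log (σ r) - Real.log r)
    (fun s hs => (A.Tder P (by linarith [hs.1])).continuousAt.continuousWithinAt)
    (fun s h1 h2 => A.Tder P (by linarith)) (fun s h1 h2 => ?_) hxy
  have hs : 0 < s := by linarith
  exact div_nonneg (hQ s h1 h2) (mul_pos (A.S2.N_pos P (A.sp s hs)) hs).le

lemma Mat.Tsmono (A : Mat k h u1 v1 u2 v2 σ) (P : NL h dh H ω b m c) {x y : ℝ} (hx : 0 < x)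
    (hxy : x < y) (hQ : ∀ s, x < s → s < y → 0 < QF h u1 u2 σ s) :
    Real.log (σ x) - Real.log x < Real.log (σ y) - Real.log y := by
  refine smono_of_deriv (g := fun r => Real.log (σ r) - Real.log r)
    (fun s hs => (A.Tder P (by linarith [hs.1])).continuousAt.continuousWithinAt)
    (fun s h1 h2 => A.Tder P (by linarith)) (fun s h1 h2 => ?_) hxy
  have hs : 0 < s := by linarith
  exact div_pos (hQ s h1 h2) (mul_pos (A.S2.N_pos P (A.sp s hs)) hs)

lemma Mat.lt_iff (A : Mat k h u1 v1 u2 v2 σ) {r : ℝ} (hr : 0 < r) :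
    0 < Real.log (u1 r) - Real.log (u2 (σ r)) ↔ u2 (σ r) < u1 r := by
  rw [sub_pos, Real.log_lt_log_iff (A.S2.posI (A.sp r hr)) (A.S1.posI hr)]

/-- first phase: while the second solution is above `b` -/
lemma Mat.phase1 (A : Mat k h u1 v1 u2 v2 σ) (P : NL h dh H ω b m c) {r : ℝ} (hr : 0 < r)
    (hb : b < u2 (σ r)) : 0 ≤ QF h u1 u2 σ r := by
  obtain ⟨δ, hδ, hs⟩ := A.Qsmall P
  rcases lt_or_ge r δ with hrd | hrd
  · exact (hs r hr hrd).2
  have hd2 := hs (δ / 2) (by linarith) (by linarith)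
  refine stay_nonneg (D := QF h u1 u2 σ) (a := δ / 2) (b := r)
    (fun s hs => (A.Qder P (by linarith [hs.1])).continuousAt.continuousWithinAt) hd2.2 ?_ r
    (by linarith) le_rfl
  intro x hx1 hx2 hall hz
  have hx : 0 < x := by linarith
  refine ⟨_, ?_, A.Qder P hx⟩
  have hz1 := A.Zmono P (by linarith : 0 < δ / 2) hx1 (fun s h1 h2 => hall s h1.le h2.le)
  have hz2 := (A.lt_iff (by linarith : 0 < δ / 2)).2 hd2.1
  have hlt := (A.lt_iff hx).1 (by linarith)
  have hbx : b < u2 (σ x) := by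
    have := A.S2.anti P (A.sp x hx).le (A.mono P hx hx2.le)
    linarith
  have hk := P.kap ⟨hbx, A.S2.ltc P (A.sp x hx).le⟩ ⟨by linarith, A.S1.ltc P hx.le⟩ hlt
  simp only at hk
  have ht := A.S1.th_pos P hx
  have hp1 := P.pos _ (hbx.trans hlt) (A.S1.ltc P hx.le)
  have hp2 := P.pos _ hbx (A.S2.ltc P (A.sp x hx).le)
  have hsx := A.sp x hx
  have N2 := A.S2.N_pos P hsx
  have NQ := A.NQ hx
  rw [hz, add_zero] at NQ
  rw [NQ, div_self N2.ne', mul_one]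
  have hYe : YF h u1 x = YF h u2 (σ x) := by simp only [QF] at hz; linarith
  have e1 : x ^ 2 * (u1 x * dh (u1 x)) = YF h u1 x * (u1 x * dh (u1 x) / h (u1 x)) := by
    simp only [YF]; field_simp
  have e2 : σ x ^ 2 * (u2 (σ x) * dh (u2 (σ x))) =
      YF h u1 x * (u2 (σ x) * dh (u2 (σ x)) / h (u2 (σ x))) := by
    rw [hYe]; simp only [YF]; field_simp
  have hY : 0 < YF h u1 x := mul_pos (by positivity) hp1
  rw [e1, e2, ← hYe, ← sub_div]
  refine div_pos ?_ hx
  have := mul_lt_mul_of_pos_right (mul_lt_mul_of_pos_left hk hY) ht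
  linarith

/-- second phase: positivity of the difference -/
lemma Mat.phase2 (A : Mat k h u1 v1 u2 v2 σ) (P : NL h dh H ω b m c) {r : ℝ} (hr : 0 < r)
    (hb : u2 (σ r) ≤ b) (hlt : u2 (σ r) < u1 r) (hσ : r ≤ σ r) : 0 < QF h u1 u2 σ r := by
  have hs := A.sp r hr
  have hu2 := A.S2.posI hs
  have hle : h (u2 (σ r)) ≤ 0 := by
    rcases eq_or_lt_of_le hb with e | e
    · rw [e, P.zb]
    · exact (P.neg1 _ hu2 e).le
  simp only [QF, YF, sub_pos]
  rcases lt_or_ge b (u1 r) with h1 | h1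
  · have hp := P.pos _ h1 (A.S1.ltc P hr.le)
    have a1 : 0 < r ^ 2 * h (u1 r) := by positivity
    have a2 : σ r ^ 2 * h (u2 (σ r)) ≤ 0 := mul_nonpos_of_nonneg_of_nonpos (by positivity) hle
    linarith
  · have hle1 : h (u1 r) ≤ 0 := by
      rcases eq_or_lt_of_le h1 with e | e
      · rw [e, P.zb]
      · exact (P.neg1 _ (A.S1.posI hr) e).le
    have hmon : h (u2 (σ r)) < h (u1 r) := by
      refine smono_of_deriv (g := h) (g' := dh)
        (fun s hs => (P.der s (by linarith [hs.1])).continuousAt.continuousWithinAt)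
        (fun s h1 h2 => P.der s (by linarith)) (fun s h2 h3 => P.dpos s (by linarith) ?_) hlt
      linarith [P.hbm]
    have hsq : r ^ 2 ≤ σ r ^ 2 := by nlinarith
    have := mul_lt_mul_of_pos_left hmon (show 0 < σ r ^ 2 by positivity)
    nlinarith

end PartI

section PartJ

variable {k : ℕ} {h dh H u v u1 v1 u2 v2 σ : ℝ → ℝ} {ω b m c : ℝ}

lemma Mat.Tlim (A : Mat k h u1 v1 u2 v2 σ) (P : NL h dh H ω b m c) :
    Tendsto (fun r => Real.log (σ r) - Real.log r) atTop (nhds 0) := by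
  have hw : Real.sqrt ω ≠ 0 := (Real.sqrt_pos.2 P.hω).ne'
  have a1 := (A.S1.rho P).log hw
  have a2 := ((A.S2.rho P).comp (A.limtop P)).log hw
  have := a1.sub a2
  rw [sub_self] at this
  refine this.congr' ?_
  filter_upwards [eventually_gt_atTop 0] with r hr
  have hs := A.sp r hr
  have e := A.se r hr
  simp only [thF] at e
  have p1 : 0 < - v1 r / u1 r := div_pos (by linarith [A.S1.vneg P hr]) (A.S1.posI hr)
  have p2 : 0 < - v2 (σ r) / u2 (σ r) := div_pos (by linarith [A.S2.vneg P hs]) (A.S2.posI hs)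
  have := congrArg Real.log e
  rw [Real.log_mul hs.ne' p2.ne', Real.log_mul hr.ne' p1.ne'] at this
  simp only [Function.comp]
  linarith

/-- where the matched point lies to the left, the ratio increases -/
lemma Mat.ratio (A : Mat k h u1 v1 u2 v2 σ) (P : NL h dh H ω b m c) {r : ℝ} (hr : 0 < r)
    (hσ : ∀ s, 0 < s → s < r → σ s < s) : u2 r < u1 r := by
  have := mono_of_deriv (g := fun r => Real.log (u1 r) - Real.log (u2 r))
    (g' := fun r => v1 r / u1 r - v2 r / u2 r) (a := 0) (b := r) ?_ ?_ ?_ hr.le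
  · have h0 := Real.log_lt_log (A.S2.pos 0 le_rfl) A.h0
    have h1 : Real.log (u2 r) < Real.log (u1 r) := by
      linarith
    exact (Real.log_lt_log_iff (A.S2.posI hr) (A.S1.posI hr)).1 h1
  · refine ContinuousOn.sub ?_ ?_
    · exact (A.S1.cu.mono (fun x hx => hx.1)).log (fun x hx => (A.S1.pos x hx.1).ne')
    · exact (A.S2.cu.mono (fun x hx => hx.1)).log (fun x hx => (A.S2.pos x hx.1).ne')
  · intro x hx _
    exact ((A.S1.du x hx).log (A.S1.posI hx).ne').sub ((A.S2.du x hx).log (A.S2.posI hx).ne')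
  · intro x hx hxr
    have h1 := A.S2.th_mono P (A.sp x hx) (hσ x hx hxr)
    rw [A.se x hx] at h1
    simp only [thF] at h1
    have := lt_of_mul_lt_mul_left h1 hx.le
    rw [neg_div, neg_div] at this
    linarith

/-- final phase contradiction -/
lemma Mat.phase3 (A : Mat k h u1 v1 u2 v2 σ) (P : NL h dh H ω b m c) {r0 : ℝ} (hr0 : 0 < r0)
    (hb : u2 (σ r0) ≤ b) (hlt : u2 (σ r0) < u1 r0) (hσ : r0 ≤ σ r0) : False := by
  have step : ∀ x, r0 ≤ x → (∀ s, r0 ≤ s → s ≤ x → 0 ≤ QF h u1 u2 σ s) →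
      0 < QF h u1 u2 σ x := by
    intro x hx hall
    have hxp : 0 < x := by linarith
    have h1 := A.Zmono P hr0 hx (fun s a b => hall s a.le b.le)
    have h2 := A.Tmono P hr0 hx (fun s a b => hall s a.le b.le)
    have h3 := (A.lt_iff hr0).2 hlt
    have h4 := Real.log_le_log hr0 hσ
    refine A.phase2 P hxp ?_ ((A.lt_iff hxp).1 (by linarith)) ?_
    · exact (A.S2.anti P (A.sp r0 hr0).le (A.mono P hr0 hx)).trans hb
    · exact (Real.log_le_log_iff hxp (A.sp x hxp)).1 (by linarith)
  have hnn : ∀ x, r0 ≤ x → 0 ≤ QF h u1 u2 σ x := by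
    intro x hx
    refine stay_nonneg (D := QF h u1 u2 σ) (a := r0) (b := x)
      (fun s hs => (A.Qder P (by linarith [hs.1])).continuousAt.continuousWithinAt)
      (A.phase2 P hr0 hb hlt hσ).le ?_ x hx le_rfl
    intro y hy1 hy2 hall hz
    have := step y hy1 hall
    linarith
  have hpos : ∀ x, r0 ≤ x → 0 < QF h u1 u2 σ x := fun x hx =>
    step x hx (fun s a _ => hnn s a)
  have h1 := A.Tsmono P hr0 (show r0 < r0 + 1 by linarith) (fun s a _ => hpos s a.le)
  have h4 := Real.log_le_log hr0 hσ
  have : Real.log (σ (r0 + 1)) - Real.log (r0 + 1) ≤ 0 := by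
    refine ge_of_tendsto (A.Tlim P) ?_
    filter_upwards [eventually_ge_atTop (r0 + 1)] with r hr
    exact A.Tmono P (by linarith) hr (fun s a _ => hnn s (by linarith))
  linarith

theorem no_two (S1 : Sol k h u1 v1) (S2 : Sol k h u2 v2) (P : NL h dh H ω b m c)
    (h0 : u2 0 < u1 0) : False := by
  obtain ⟨σ, A⟩ := exists_mat S1 S2 P h0
  obtain ⟨δ, hδ, hs⟩ := A.Qsmall P
  obtain ⟨r1, hr1p, hr1b, hr1δ⟩ : ∃ r, 0 < r ∧ b < u2 (σ r) ∧ r < δ := by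
    obtain ⟨r, a1, a2⟩ := ((A.small P).and (Ioo_mem_nhdsGT hδ)).exists
    exact ⟨r, a1.1, a1.2.1, a2.2⟩
  have hcont : ∀ r, 0 < r → ContinuousAt (fun r => u2 (σ r)) r := fun r hr =>
    ((A.S2.du _ (A.sp r hr)).comp r (A.sd r hr)).continuousAt
  obtain ⟨rb, hrb1, hrb⟩ : ∃ r, r1 < r ∧ u2 (σ r) = b := by
    obtain ⟨y, hy1, hy2⟩ := (((A.S2.lim.comp (A.limtop P)).eventually (gt_mem_nhds P.hb)).and
      (eventually_gt_atTop r1)).exists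
    have hc : ContinuousOn (fun r => u2 (σ r)) (Set.Icc r1 y) := fun s hs =>
      (hcont s (by linarith [hs.1])).continuousWithinAt
    have hy1 : u2 (σ y) < b := hy1
    obtain ⟨x, hx, hxe⟩ := intermediate_value_Icc' hy2.le hc ⟨hy1.le, hr1b.le⟩
    have hxe : u2 (σ x) = b := hxe
    refine ⟨x, lt_of_le_of_ne hx.1 ?_, hxe⟩
    rintro rfl
    linarith
  have hrbp : 0 < rb := by linarith
  have hQ : ∀ s, 0 < s → s < rb → 0 ≤ QF h u1 u2 σ s := by
    intro s hs hsb
    refine A.phase1 P hs ?_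
    rw [← hrb]
    exact A.S2.santi P (A.sp s hs).le (A.smono P hs hsb)
  have hZ : u2 (σ rb) < u1 rb := by
    have e1 := A.Zmono P hr1p hrb1.le (fun s a b => hQ s (by linarith) b)
    have e2 := (A.lt_iff hr1p).2 (hs r1 hr1p hr1δ).1
    exact (A.lt_iff hrbp).1 (by linarith)
  rcases le_or_gt rb (σ rb) with hT | hT
  · exact A.phase3 P hrbp hrb.le hZ hT
  have hbefore : ∀ s, 0 < s → s ≤ rb → σ s < s := by
    intro s hs hsb
    have e1 := A.Tmono P hs hsb (fun t a b => hQ t (by linarith) b)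
    have e2 := Real.log_lt_log (A.sp rb hrbp) hT
    exact (Real.log_lt_log_iff (A.sp s hs) hs).1 (by linarith)
  by_cases hex : ∃ r, rb < r ∧ r ≤ σ r
  · obtain ⟨r', hr'1, hr'2⟩ := hex
    have hcl : IsCompact (Set.Icc rb r' ∩ {s | s ≤ σ s}) := by
      have hcσ : ContinuousOn (fun s => σ s - s) (Set.Icc rb r') := fun s hs =>
        ((A.sd s (by linarith [hs.1])).continuousAt.sub continuousAt_id).continuousWithinAt
      have : IsClosed (Set.Icc rb r' ∩ (fun s => σ s - s) ⁻¹' Set.Ici 0) :=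
        hcσ.preimage_isClosed_of_isClosed isClosed_Icc isClosed_Ici
      have e : Set.Icc rb r' ∩ {s | s ≤ σ s} = Set.Icc rb r' ∩ (fun s => σ s - s) ⁻¹' Set.Ici 0 := by
        ext s; simp
      rw [e]
      exact isCompact_Icc.of_isClosed_subset this Set.inter_subset_left
    obtain ⟨x, hx, hxl⟩ := hcl.exists_isLeast ⟨r', ⟨hr'1.le, le_rfl⟩, hr'2⟩
    obtain ⟨⟨hx1, hx2⟩, hx3⟩ := hx
    have hx3 : x ≤ σ x := hx3
    have hxp : 0 < x := by linarith
    have hlow : ∀ s, 0 < s → s < x → σ s < s := by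
      intro s hs hsx
      rcases le_or_gt s rb with h1 | h1
      · exact hbefore s hs h1
      · by_contra hcn
        push Not at hcn
        have := hxl ⟨⟨h1.le, by linarith⟩, hcn⟩
        linarith
    have h1 := A.ratio P hxp hlow
    refine A.phase3 P hxp ?_ ?_ hx3
    · rw [← hrb]; exact A.S2.anti P (A.sp rb hrbp).le (A.mono P hrbp hx1)
    · exact (A.S2.anti P hxp.le hx3).trans_lt h1
  · push Not at hex
    refine crossing S1 S2 P h0 (fun r hr => A.ratio P hr (fun s hs _ => ?_))
    rcases le_or_gt s rb with h1 | h1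
    · exact hbefore s hs h1
    · exact hex s h1

theorem uniq (S1 : Sol k h u1 v1) (S2 : Sol k h u2 v2) (P : NL h dh H ω b m c) :
    ∀ r, 0 ≤ r → u1 r = u2 r := by
  rcases lt_trichotomy (u1 0) (u2 0) with h0 | h0 | h0
  · exact (no_two S2 S1 P h0).elim
  · obtain ⟨L, hL0, hL⟩ := P.lip (u1 0) (S1.pos 0 le_rfl)
    refine forward_unique le_rfl S1.cu S1.cv S2.cu S2.cv S1.du S1.dv S2.du S2.dv (L := L) ?_ h0
      (by rw [S1.v0, S2.v0])
    intro r hr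
    refine hL _ _ (S1.posI hr) (S1.anti P le_rfl hr.le) (S2.posI hr) ?_
    rw [h0]; exact S2.anti P le_rfl hr.le
  · exact (no_two S1 S2 P h0).elim

end PartJ

section PartG

noncomputable def hC (ω p q u : ℝ) : ℝ := -ω + u ^ (p - 1) - u ^ (q - 1)
noncomputable def dhC (p q u : ℝ) : ℝ := (p - 1) * u ^ (p - 2) - (q - 1) * u ^ (q - 2)
noncomputable def HC (ω p q u : ℝ) : ℝ :=
  -ω * u ^ 2 / 2 + u ^ (p + 1) / (p + 1) - u ^ (q + 1) / (q + 1)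

section Concrete
variable {ω p q : ℝ}

lemma rp1 {u : ℝ} (hu : 0 < u) (p : ℝ) : u ^ (p - 2) = u ^ (p - 3) * u := by
  rw [← Real.rpow_add_one hu.ne']; congr 1; ring
lemma rp2 {u : ℝ} (hu : 0 < u) (p : ℝ) : u ^ (p - 1) = u ^ (p - 3) * u ^ 2 := by
  have : u ^ (p - 1) = u ^ (p - 2) * u := by rw [← Real.rpow_add_one hu.ne']; congr 1; ring
  rw [this, rp1 hu]; ring
lemma rp3 {u : ℝ} (hu : 0 < u) (p : ℝ) : u ^ p = u ^ (p - 3) * u ^ 3 := by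
  have : u ^ p = u ^ (p - 1) * u := by rw [← Real.rpow_add_one hu.ne']; congr 1; ring
  rw [this, rp2 hu]; ring
lemma rp4 {u : ℝ} (hu : 0 < u) (p : ℝ) : u ^ (p + 1) = u ^ (p - 3) * u ^ 4 := by
  rw [Real.rpow_add_one hu.ne', rp3 hu]; ring

lemma f_eq {u : ℝ} (hu : 0 < u) : f ω p q u = u * hC ω p q u := by
  simp only [f, hC, rp3 hu p, rp3 hu q, rp2 hu p, rp2 hu q]; ring

lemma hC_der {u : ℝ} (hu : 0 < u) : HasDerivAt (hC ω p q) (dhC p q u) u := by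
  refine hda (((Real.hasDerivAt_rpow_const (p := p - 1) (Or.inl hu.ne')).const_add (-ω)).sub
    (Real.hasDerivAt_rpow_const (p := q - 1) (Or.inl hu.ne'))) (fun y => rfl) ?_
  simp only [dhC]
  rw [show p - 1 - 1 = p - 2 by ring, show q - 1 - 1 = q - 2 by ring]

lemma dhC_der {u : ℝ} (hu : 0 < u) : HasDerivAt (dhC p q)
    ((p - 1) * ((p - 2) * u ^ (p - 3)) - (q - 1) * ((q - 2) * u ^ (q - 3))) u := by
  refine hda (((Real.hasDerivAt_rpow_const (p := p - 2) (Or.inl hu.ne')).const_mul (p - 1)).sub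
    ((Real.hasDerivAt_rpow_const (p := q - 2) (Or.inl hu.ne')).const_mul (q - 1))) (fun y => rfl) ?_
  rw [show p - 2 - 1 = p - 3 by ring, show q - 2 - 1 = q - 3 by ring]

lemma HC_der (hp : 1 < p) (hpq : p < q) {u : ℝ} (hu : 0 < u) :
    HasDerivAt (HC ω p q) (u * hC ω p q u) u := by
  have a1 : p + 1 ≠ 0 := by linarith
  have a2 : q + 1 ≠ 0 := by linarith
  refine hda (((((hasDerivAt_pow 2 u).const_mul (-ω)).div_const 2).add
    ((Real.hasDerivAt_rpow_const (p := p + 1) (Or.inl hu.ne')).div_const (p + 1))).sub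
    ((Real.hasDerivAt_rpow_const (p := q + 1) (Or.inl hu.ne')).div_const (q + 1))) (fun y => rfl) ?_
  rw [← f_eq hu]
  simp only [f]
  rw [show p + 1 - 1 = p by ring, show q + 1 - 1 = q by ring]
  field_simp
  norm_num
  ring

lemma lipC (hω : 0 < ω) (hp : 1 < p) (hpq : p < q) {M : ℝ} (hM : 0 < M) :
    ∃ L, 0 ≤ L ∧ ∀ x y, 0 < x → x ≤ M → 0 < y → y ≤ M →
    |x * hC ω p q x - y * hC ω p q y| ≤ L * |x - y| := by
  have b1 : 0 < p * M ^ (p - 1) := mul_pos (by linarith) (Real.rpow_pos_of_pos hM _)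
  have b2 : 0 < q * M ^ (q - 1) := mul_pos (by linarith) (Real.rpow_pos_of_pos hM _)
  refine ⟨ω + p * M ^ (p - 1) + q * M ^ (q - 1), by linarith, ?_⟩
  intro x y hx hxM hy hyM
  have := Convex.norm_image_sub_le_of_norm_hasDerivWithin_le (𝕜 := ℝ) (s := Set.Ioc 0 M)
    (f := fun x => x * hC ω p q x) (f' := fun x => hC ω p q x + x * dhC p q x) (x := y) (y := x)
    (C := ω + p * M ^ (p - 1) + q * M ^ (q - 1)) ?_ ?_ (convex_Ioc 0 M) ⟨hy, hyM⟩ ⟨hx, hxM⟩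
  · simpa [Real.norm_eq_abs] using this
  · intro z hz
    exact (hda ((hasDerivAt_id z).mul (hC_der hz.1)) (fun y => rfl) (by simp)).hasDerivWithinAt
  · intro z hz
    have e : hC ω p q z + z * dhC p q z = -ω + p * z ^ (p - 1) - q * z ^ (q - 1) := by
      simp only [hC, dhC, rp2 hz.1, rp1 hz.1]; ring
    rw [e, Real.norm_eq_abs]
    have c1 : z ^ (p - 1) ≤ M ^ (p - 1) := Real.rpow_le_rpow hz.1.le hz.2 (by linarith)
    have c2 : z ^ (q - 1) ≤ M ^ (q - 1) := Real.rpow_le_rpow hz.1.le hz.2 (by linarith)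
    have c3 : 0 < z ^ (p - 1) := Real.rpow_pos_of_pos hz.1 _
    have c4 : 0 < z ^ (q - 1) := Real.rpow_pos_of_pos hz.1 _
    have d1 : p * z ^ (p - 1) ≤ p * M ^ (p - 1) := mul_le_mul_of_nonneg_left c1 (by linarith)
    have d2 : q * z ^ (q - 1) ≤ q * M ^ (q - 1) := mul_le_mul_of_nonneg_left c2 (by linarith)
    have d3 : 0 < p * z ^ (p - 1) := mul_pos (by linarith) c3
    have d4 : 0 < q * z ^ (q - 1) := mul_pos (by linarith) c4
    rw [abs_le]; constructor <;> linarith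

lemma rpow_lim0 {a : ℝ} (ha : 0 < a) :
    Tendsto (fun u : ℝ => u ^ a) (nhdsWithin 0 (Set.Ioi 0)) (nhds 0) := by
  have := (Real.continuousAt_rpow_const 0 a (Or.inr ha.le)).tendsto
  rw [Real.zero_rpow ha.ne'] at this
  exact this.mono_left nhdsWithin_le_nhds

lemma hC_lim (hp : 1 < p) (hpq : p < q) :
    Tendsto (hC ω p q) (nhdsWithin 0 (Set.Ioi 0)) (nhds (-ω)) := by
  have := (tendsto_const_nhds (x := -ω)).add (rpow_lim0 (show 0 < p - 1 by linarith)) |>.sub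
    (rpow_lim0 (show 0 < q - 1 by linarith))
  rw [add_zero, sub_zero] at this
  exact this

lemma HC_lim (hp : 1 < p) (hpq : p < q) :
    Tendsto (HC ω p q) (nhdsWithin 0 (Set.Ioi 0)) (nhds 0) := by
  have h2 : Tendsto (fun u : ℝ => u ^ 2) (nhdsWithin 0 (Set.Ioi 0)) (nhds 0) := by
    have : Tendsto (fun r : ℝ => r ^ 2) (nhds 0) (nhds (0 ^ 2)) := (continuous_pow 2).tendsto 0
    simpa using this.mono_left nhdsWithin_le_nhds
  have := (((h2.const_mul (-ω)).div_const 2).add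
    ((rpow_lim0 (show 0 < p + 1 by linarith)).div_const (p + 1))).sub
    ((rpow_lim0 (show 0 < q + 1 by linarith)).div_const (q + 1))
  have e : -ω * 0 / 2 + 0 / (p + 1) - 0 / (q + 1) = 0 := by simp
  rw [e] at this
  exact this

lemma exists_NL (hω : 0 < ω) (hp : 1 < p) (hpq : p < q)
    (htilde : ∀ u : ℝ, 0 < u →
      (f' ω p q u + u * f'' p q u) * f ω p q u - u * (f' ω p q u) ^ 2 < 0)
    (hpos : ∃ x, 0 < x ∧ 0 < hC ω p q x) :
    ∃ b m c, NL (hC ω p q) (dhC p q) (HC ω p q) ω b m c := by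
  have hp1 : 0 < p - 1 := by linarith
  have hq1 : 0 < q - 1 := by linarith
  have hd : 0 < q - p := by linarith
  have hrat : 0 < (p - 1) / (q - 1) := div_pos hp1 hq1
  set m := ((p - 1) / (q - 1)) ^ (1 / (q - p)) with hm
  have hm0 : 0 < m := Real.rpow_pos_of_pos hrat _
  have hmp : m ^ (q - p) = (p - 1) / (q - 1) := by
    rw [hm, ← Real.rpow_mul hrat.le, one_div_mul_cancel hd.ne', Real.rpow_one]
  have hfac : ∀ u, 0 < u → dhC p q u = u ^ (p - 2) * (q - 1) * (m ^ (q - p) - u ^ (q - p)) := by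
    intro u hu
    have : u ^ (q - 2) = u ^ (p - 2) * u ^ (q - p) := by
      rw [← Real.rpow_add hu]; congr 1; ring
    rw [hmp]; simp only [dhC, this]
    field_simp
  have hcoef : ∀ u, 0 < u → 0 < u ^ (p - 2) * (q - 1) := fun u hu =>
    mul_pos (Real.rpow_pos_of_pos hu _) hq1
  have dpos : ∀ u, 0 < u → u < m → 0 < dhC p q u := by
    intro u hu hum
    rw [hfac u hu]
    exact mul_pos (hcoef u hu) (sub_pos.2 (Real.rpow_lt_rpow hu.le hum hd))
  have dneg : ∀ u, m < u → dhC p q u < 0 := by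
    intro u hum
    have hu : 0 < u := by linarith
    rw [hfac u hu]
    exact mul_neg_of_pos_of_neg (hcoef u hu) (sub_neg.2 (Real.rpow_lt_rpow hm0.le hum hd))
  have inc : ∀ x y, 0 < x → x < y → y ≤ m → hC ω p q x < hC ω p q y := by
    intro x y hx hxy hy
    exact smono_of_deriv (g' := dhC p q)
      (fun s hs => (hC_der (by linarith [hs.1])).continuousAt.continuousWithinAt)
      (fun s h1 h2 => hC_der (by linarith)) (fun s h1 h2 => dpos s (by linarith) (by linarith)) hxy
  have dec : ∀ x y, m ≤ x → x < y → hC ω p q y < hC ω p q x := by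
    intro x y hx hxy
    have := smono_of_deriv (g := fun s => - hC ω p q s) (g' := fun s => - dhC p q s) (a := x) (b := y)
      (fun s hs => (hC_der (by linarith [hs.1])).neg.continuousAt.continuousWithinAt)
      (fun s h1 h2 => (hC_der (by linarith)).neg)
      (fun s h1 h2 => by have := dneg s (by linarith); linarith) hxy
    linarith
  have hhm : 0 < hC ω p q m := by
    obtain ⟨x, hx, hxp⟩ := hpos
    rcases lt_trichotomy x m with e | e | e
    · have := inc x m hx e le_rfl; linarith
    · rwa [← e]
    · have := dec m x le_rfl e; linarith
  obtain ⟨b, hb0, hbm, hb⟩ : ∃ b, 0 < b ∧ b < m ∧ hC ω p q b = 0 := by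
    obtain ⟨x, hx1, hx2⟩ := (((hC_lim (ω := ω) hp hpq).eventually
      (gt_mem_nhds (show -ω < 0 by linarith))).and (Ioo_mem_nhdsGT hm0)).exists
    have hc : ContinuousOn (hC ω p q) (Set.Icc x m) := fun s hs =>
      (hC_der (by linarith [hs.1, hx2.1])).continuousAt.continuousWithinAt
    obtain ⟨b, hb, hbe⟩ := intermediate_value_Icc hx2.2.le hc ⟨hx1.le, hhm.le⟩
    refine ⟨b, by linarith [hb.1, hx2.1], lt_of_le_of_ne hb.2 ?_, hbe⟩
    rintro rfl
    linarith
  obtain ⟨c, hmc, hc⟩ : ∃ c, m < c ∧ hC ω p q c = 0 := by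
    set M := max m 1 with hM
    have hM1 : 1 ≤ M := le_max_right _ _
    have hneg : hC ω p q M < 0 := by
      have := Real.rpow_le_rpow_of_exponent_le hM1 (show p - 1 ≤ q - 1 by linarith)
      simp only [hC]; linarith
    have hc : ContinuousOn (hC ω p q) (Set.Icc m M) := fun s hs =>
      (hC_der (by linarith [hs.1])).continuousAt.continuousWithinAt
    obtain ⟨c, hc, hce⟩ := intermediate_value_Icc' (le_max_left _ _) hc ⟨hneg.le, hhm.le⟩
    refine ⟨c, lt_of_le_of_ne hc.1 ?_, hce⟩
    rintro e
    rw [← e] at hce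
    linarith
  have pos : ∀ u, b < u → u < c → 0 < hC ω p q u := by
    intro u h1 h2
    rcases le_or_gt u m with e | e
    · have := inc b u hb0 h1 e; linarith
    · have := dec u c e.le h2; linarith
  refine ⟨b, m, c, hω, hb0, hbm, hmc, fun u hu => hC_der hu, fun M hM => lipC hω hp hpq hM, ?_, hb,
    pos, hc, ?_, dpos, ?_, ?_, fun u hu => HC_der hp hpq hu, HC_lim hp hpq, hC_lim hp hpq, ?_⟩
  · intro u hu hub
    have := inc u b hu hub hbm.le; linarith
  · intro u hu
    have := dec c u hmc.le hu; linarith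
  · intro u hu
    rcases eq_or_lt_of_le hu with e | e
    · rw [← e, hfac m hm0]; simp
    · exact (dneg u e).le
  · intro x hx y hy hxy
    have hder : ∀ u, b < u → u < c → HasDerivAt (fun u => -(u * dhC p q u / hC ω p q u))
        (-((dhC p q u + u * ((p - 1) * ((p - 2) * u ^ (p - 3)) - (q - 1) * ((q - 2) * u ^ (q - 3))))
          * hC ω p q u - u * dhC p q u * dhC p q u) / hC ω p q u ^ 2) u := by
      intro u h1 h2
      have hu : 0 < u := by linarith
      refine hda ((((hasDerivAt_id u).mul (dhC_der hu)).div (hC_der hu) (pos u h1 h2).ne').neg)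
        (fun y => rfl) ?_
      simp only [Pi.mul_apply, id]
      ring
    have := smono_of_deriv (g := fun u => -(u * dhC p q u / hC ω p q u)) (a := x) (b := y)
      (fun s hs => (hder s (by linarith [hs.1, hx.1]) (by linarith [hs.2, hy.2])).continuousAt.continuousWithinAt)
      (fun s h1 h2 => hder s (by linarith [hx.1]) (by linarith [hy.2])) ?_ hxy
    · linarith
    · intro u h1 h2
      have hu : 0 < u := by linarith [hx.1]
      have hh := pos u (by linarith [hx.1]) (by linarith [hy.2])
      refine div_pos ?_ (by positivity)
      have ht := htilde u hu
      have e : (f' ω p q u + u * f'' p q u) * f ω p q u - u * (f' ω p q u) ^ 2 =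
        u ^ 2 * ((dhC p q u + u * ((p - 1) * ((p - 2) * u ^ (p - 3)) - (q - 1) * ((q - 2) * u ^ (q - 3))))
          * hC ω p q u - u * dhC p q u * dhC p q u) := by
        simp only [f', f'', f, hC, dhC, rp3 hu p, rp3 hu q, rp2 hu p, rp2 hu q, rp1 hu p, rp1 hu q]
        ring
      rw [e] at ht
      have := neg_of_mul_neg_right ht (by positivity)
      linarith
  · intro u hu hum
    have e : u ^ 2 * hC ω p q u / 2 - HC ω p q u =
        (p - 1) / (2 * (p + 1)) * u ^ (p + 1) - (q - 1) / (2 * (q + 1)) * u ^ (q + 1) := by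
      have a1 : p + 1 ≠ 0 := by linarith
      have a2 : q + 1 ≠ 0 := by linarith
      simp only [hC, HC, rp2 hu, rp4 hu]
      field_simp
      ring
    have e2 : u ^ (q + 1) = u ^ (p + 1) * u ^ (q - p) := by
      rw [← Real.rpow_add hu]; congr 1; ring
    have e3 : u ^ (q - p) ≤ (p - 1) / (q - 1) := by
      rw [← hmp]; exact Real.rpow_le_rpow hu.le hum hd.le
    have hup : 0 < u ^ (p + 1) := Real.rpow_pos_of_pos hu _
    rw [e, e2]
    have g1 : (q - 1) / (2 * (q + 1)) * (u ^ (p + 1) * u ^ (q - p)) ≤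
        (q - 1) / (2 * (q + 1)) * (u ^ (p + 1) * ((p - 1) / (q - 1))) := by
      refine mul_le_mul_of_nonneg_left (mul_le_mul_of_nonneg_left e3 hup.le) ?_
      exact div_nonneg hq1.le (by linarith)
    have g2 : (q - 1) / (2 * (q + 1)) * (u ^ (p + 1) * ((p - 1) / (q - 1))) =
        (p - 1) / (2 * (q + 1)) * u ^ (p + 1) := by field_simp
    have g3 : (p - 1) / (2 * (q + 1)) ≤ (p - 1) / (2 * (p + 1)) :=
      div_le_div_of_nonneg_left hp1.le (by linarith) (by linarith)
    have := mul_le_mul_of_nonneg_right g3 hup.le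
    linarith

end Concrete

lemma Sol.exists_hpos {k : ℕ} {h u v : ℝ → ℝ} (S : Sol k h u v) : ∃ x, 0 < x ∧ 0 < h x := by
  by_contra hc
  push Not at hc
  have hv : ∀ r, 0 < r → 0 ≤ v r := by
    intro r hr
    have := mono_of_deriv (g := fun r => r ^ k * v r) (a := 0) (b := r)
      (g' := fun r => -(r ^ k * (u r * h (u r)))) ?_ ?_ ?_ hr.le
    · have h0 := S.v0
      simp only [h0, mul_zero] at this
      exact (mul_nonneg_iff_of_pos_left (pow_pos hr k)).1 this
    · exact (continuous_pow k).continuousOn.mul (S.cv.mono (fun x hx => hx.1))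
    · intro x hx _
      refine hda ((hasDerivAt_pow k x).mul (S.dv x hx)) (fun y => rfl) ?_
      rcases Nat.eq_zero_or_pos k with hk | hk
      · subst hk; simp
      · obtain ⟨j, rfl⟩ : ∃ j, k = j + 1 := ⟨k - 1, by omega⟩
        simp only [Nat.add_sub_cancel, pow_succ]
        field_simp
        ring
    · intro x hx _
      have h1 := hc (u x) (S.posI hx)
      have h2 := mul_nonpos_of_nonneg_of_nonpos (S.posI hx).le h1
      have h3 := mul_nonpos_of_nonneg_of_nonpos (pow_pos hx k).le h2
      linarith
  have hle : ∀ r, 0 < r → u 0 ≤ u r := by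
    intro r hr
    exact mono_of_deriv (S.cu.mono (fun x hx => hx.1)) (fun s h1 h2 => S.du s h1)
      (fun s h1 h2 => hv s h1) hr.le
  have : u 0 ≤ 0 := by
    refine ge_of_tendsto S.lim ?_
    filter_upwards [eventually_gt_atTop 0] with r hr using hle r hr
  linarith [S.pos 0 le_rfl]

end PartG

lemma toSol {ω p q : ℝ} {k : ℕ} {u : ℝ → ℝ} (hP : IsPositiveSolution (k + 1) (f ω p q) u) :
    Sol k (hC ω p q) u (derivWithin u (Set.Ici 0)) := by
  obtain ⟨hcd, hpos, heq, hv0, hlim⟩ := hP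
  have hU : UniqueDiffOn ℝ (Set.Ici (0 : ℝ)) := uniqueDiffOn_Ici 0
  have hdu : DifferentiableOn ℝ u (Set.Ici 0) := hcd.differentiableOn (by norm_num)
  have hc1 : ContDiffOn ℝ 1 (derivWithin u (Set.Ici 0)) (Set.Ici 0) :=
    hcd.derivWithin hU (by norm_num)
  set v := derivWithin u (Set.Ici 0) with hv
  have hdv : DifferentiableOn ℝ v (Set.Ici 0) := hc1.differentiableOn (by norm_num)
  have hcw : ContinuousOn (derivWithin v (Set.Ici 0)) (Set.Ici 0) :=
    hc1.continuousOn_derivWithin hU (by norm_num)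
  have hit : iteratedDerivWithin 2 u (Set.Ici 0) = derivWithin v (Set.Ici 0) := by
    rw [iteratedDerivWithin_succ, iteratedDerivWithin_one]
  rw [hit] at heq
  have heq2 : ∀ r, 0 < r → derivWithin v (Set.Ici 0) r =
      -(k / r) * v r - u r * hC ω p q (u r) := by
    intro r hr
    have := heq r hr
    rw [f_eq (hpos r hr.le)] at this
    push_cast at this
    rw [add_sub_cancel_right] at this
    linarith
  refine ⟨hdu.continuousOn, hdv.continuousOn, hpos, ?_, ?_, hv0, hlim, ?_⟩
  · intro r hr
    exact (hdu r hr.le).hasDerivWithinAt.hasDerivAt (Ici_mem_nhds hr)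
  · intro r hr
    rw [← heq2 r hr]
    exact (hdv r hr.le).hasDerivWithinAt.hasDerivAt (Ici_mem_nhds hr)
  · have hs : Tendsto (fun r => v r / r) (nhdsWithin 0 (Set.Ioi 0))
        (nhds (derivWithin v (Set.Ici 0) 0)) := by
      have h1 := hasDerivWithinAt_iff_tendsto_slope.1
        (hdv 0 Set.self_mem_Ici).hasDerivWithinAt
      rw [Set.Ici_sdiff_left] at h1
      refine h1.congr (fun r => ?_)
      rw [slope_def_field, hv0]; simp
    have hw : Tendsto (derivWithin v (Set.Ici 0)) (nhdsWithin 0 (Set.Ioi 0))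
        (nhds (derivWithin v (Set.Ici 0) 0)) :=
      (hcw 0 Set.self_mem_Ici).mono_left (nhdsWithin_mono _ Set.Ioi_subset_Ici_self)
    have hu : Tendsto u (nhdsWithin 0 (Set.Ioi 0)) (nhds (u 0)) :=
      (hdu.continuousOn 0 Set.self_mem_Ici).mono_left
        (nhdsWithin_mono _ Set.Ioi_subset_Ici_self)
    have hh : Tendsto (fun r => u r * hC ω p q (u r)) (nhdsWithin 0 (Set.Ioi 0))
        (nhds (u 0 * hC ω p q (u 0))) :=
      hu.mul ((hC_der (hpos 0 le_rfl)).continuousAt.tendsto.comp hu)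
    have hr : Tendsto (derivWithin v (Set.Ici 0)) (nhdsWithin 0 (Set.Ioi 0))
        (nhds (-(k * derivWithin v (Set.Ici 0) 0) - u 0 * hC ω p q (u 0))) := by
      refine ((hs.const_mul (k : ℝ)).neg.sub hh).congr' ?_
      filter_upwards [self_mem_nhdsWithin] with r hr
      rw [heq2 r hr]; ring
    have e := tendsto_nhds_unique hw hr
    have hk : (0 : ℝ) < (k : ℝ) + 1 := by positivity
    have e2 : derivWithin v (Set.Ici 0) 0 = -(u 0 * hC ω p q (u 0)) / (k + 1) := by
      rw [eq_div_iff hk.ne']; linarith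
    rw [← e2]; exact hs

theorem uniqueness_of_positive_solution (ω p q : ℝ) (hω : 0 < ω) (hp : 1 < p)
    (hpq : p < q) (n : ℕ) (hn : 1 ≤ n)
    (htilde : ∀ u : ℝ, 0 < u →
      (f' ω p q u + u * f'' p q u) * f ω p q u - u * (f' ω p q u) ^ 2 < 0) :
    ∀ u₁ u₂ : ℝ → ℝ, IsPositiveSolution n (f ω p q) u₁ →
      IsPositiveSolution n (f ω p q) u₂ → Set.EqOn u₁ u₂ (Set.Ici 0) := by
  intro u₁ u₂ h1 h2
  obtain ⟨k, rfl⟩ : ∃ k, n = k + 1 := ⟨n - 1, by omega⟩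
  have S1 := toSol h1
  have S2 := toSol h2
  obtain ⟨b, m, c, P⟩ := exists_NL hω hp hpq htilde S1.exists_hpos
  exact fun r hr => uniq S1 S2 P r hr
end
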